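/- arXiv:1807.06465 — 2 statements merged into one kernel-verified Lean document; each statement's English description precedes it below -/
import Mathlib

section
/- Let d ≥ 3 be a fixed integer. There exists 𝔟₀ > 0 such that for every 𝔟 ≥ 𝔟₀ there exist constants C, c, N > 0 with the following property: for all n ≥ N with nd even and all primes p with gcd(p,d) = 1 and p ≤ c·n^{(d−2)/(5d−6)}, let ℳ be the set of p×p symmetric matrices M = [m_{ij}]_{0≤i,j≤p−1} with nonnegative integer entries, every diagonal entry even, total sum Σ_{i,j} m_{ij} = dn, each row sum divisible by d with n_i(M) := (Σ_j m_{ij})/d and n_0(M) < n, and Σ_{j} j·m_{ij} ≡ 0 (mod p) for every i; and let 𝒩_𝔟 = {M ∈ ℳ : Σ_{i,j=0}^{p−1} (m_{ij}/(dn) − 1/p²)² > 𝔟·(ln n)/n}. Then (2^{nd/2}(nd/2)!/(nd)!) · Σ_{M ∈ 𝒩_𝔟} (n!/∏_{i=0}^{p−1} n_i(M)!) · (∏_{0≤i<j≤p−1} m_{ij}!) · (∏_{i=0}^{p−1} m_{ii}!/(2^{m_{ii}/2}(m_{ii}/2)!)) · ∏_{i=0}^{p−1} #{(a¹,…,a^{n_i(M)})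 ∈ (Z_{d,p})^{n_i(M)} : Σ_k Φ(aᵏ) = (m_{i0},…,m_{i,p−1})} ≤ C·p^{2d}/n^{d−2}. -/
open Finset

/-- The counting map `Φ` : the `j`-th coordinate of `Φ(a)` is `#{r : a r = j}`. -/
def Phi {d p : ℕ} (a : Fin d → ZMod p) (j : ZMod p) : ℕ :=
  (Finset.univ.filter (fun r : Fin d => a r = j)).card

/-!
Call the tuples counted by row `i` of `M` the words with label `i`, and let `q` be the law of their
letters. They are counted by the generating function of the zero-sum words, which we evaluate at
`q ^ ((d - 1) / d)`: by AM-GM it is at most `1` there, with a gain, the deficit of `q`, which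
measures how far `√q` is from being invariant under reflections. Together with Stirling's formula,
the normalized weight of `M` is at most `exp (- energy + O (p ^ 2 * log n))`, where the energy is
`n` times an average of the deficits of the row laws and of their Hellinger distances to the law of
the labels.

Two reflections compose to a translation, and a nonzero translation generates `ZMod p`. So, as
`p ∤ d`, a law with small deficit is close either to the uniform law or to the point mass at `0`.

* If a proportion `≫ p⁻²` of the words has a nonzero label, the point mass is excluded, so that a
  matrix far from equidistribution has energy `≫ p ^ 2 * log n`, and these matrices contribute at
  most `n ^ (-(d - 2))`.
* Otherwise the number `s` of words with nonzero label is small compared with `n / p ^ 2`. Summing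
  over the multiplicities of the edges as for independent Poisson variables bounds the contribution
  by `(A * p * (s / n) ^ ((d - 2) / 2)) ^ s`. The congruences exclude `s = 1`, and the terms
  `s ≥ 2` sum to `O (p ^ 2 / n ^ (d - 2))`.
-/

namespace UndirectedLDP

lemma sq_add_add_le (x y z : ℝ) : (x + y + z) ^ 2 ≤ 3 * (x ^ 2 + y ^ 2 + z ^ 2) := by
  linarith [sq_nonneg (x - y), sq_nonneg (x - z), sq_nonneg (y - z)]

section Hellinger

variable {α : Type*} [Fintype α]

lemma mem_stdSimplex_le_one {q : α → ℝ} (hq : q ∈ stdSimplex ℝ α) (a : α) : q a ≤ 1 :=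
  (mem_Icc_of_mem_stdSimplex hq a).2

lemma prod_mem_stdSimplex {q : α → ℝ} (hq : q ∈ stdSimplex ℝ α) (m : ℕ) :
    (fun b : Fin m → α => ∏ s, q (b s)) ∈ stdSimplex ℝ (Fin m → α) :=
  ⟨fun _ => prod_nonneg fun _ _ => hq.1 _, by rw [← Fintype.sum_pow, hq.2, one_pow]⟩

variable (α) in
/-- The uniform probability vector on a finite type. -/
noncomputable def uniform : α → ℝ := fun _ => (Fintype.card α : ℝ)⁻¹

lemma uniform_mem_stdSimplex [Nonempty α] : uniform α ∈ stdSimplex ℝ α :=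
  ⟨fun _ => by unfold uniform; positivity, by simp [uniform]⟩

/-- The squared Hellinger distance `∑ₐ (√qₐ - √rₐ)²`, without the customary factor `1/2`. -/
noncomputable def hellingerSq (q r : α → ℝ) : ℝ := ∑ a, (√(q a) - √(r a)) ^ 2

lemma hellingerSq_nonneg (q r : α → ℝ) : 0 ≤ hellingerSq q r := sum_nonneg fun _ _ => sq_nonneg _

lemma hellingerSq_eq_two_sub {q r : α → ℝ} (hq : q ∈ stdSimplex ℝ α) (hr : r ∈ stdSimplex ℝ α) :
    hellingerSq q r = 2 - 2 * ∑ a, √(q a) * √(r a) := by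
  simp_rw [hellingerSq, sub_sq, Real.sq_sqrt (hq.1 _), Real.sq_sqrt (hr.1 _), sum_add_distrib,
    sum_sub_distrib, hq.2, hr.2, mul_assoc, ← mul_sum]
  ring

lemma sum_sqrt_mul_sqrt_prod {q r : α → ℝ} (hq : ∀ a, 0 ≤ q a) (hr : ∀ a, 0 ≤ r a) (m : ℕ) :
    ∑ b : Fin m → α, √(∏ s, q (b s)) * √(∏ s, r (b s)) = (∑ a, √(q a) * √(r a)) ^ m := by
  rw [Fintype.sum_pow]
  exact sum_congr rfl fun b _ => by
    rw [prod_mul_distrib, Real.sqrt_prod _ fun _ _ => hq _, Real.sqrt_prod _ fun _ _ => hr _]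

-- The affinity `∑ √q √r` is multiplicative over product vectors; then apply Bernoulli's inequality.
lemma hellingerSq_prod_le {q r : α → ℝ} (hq : q ∈ stdSimplex ℝ α) (hr : r ∈ stdSimplex ℝ α)
    (m : ℕ) :
    hellingerSq (fun b : Fin m → α => ∏ s, q (b s)) (fun b => ∏ s, r (b s)) ≤
      m * hellingerSq q r := by
  rw [hellingerSq_eq_two_sub (prod_mem_stdSimplex hq m) (prod_mem_stdSimplex hr m),
    hellingerSq_eq_two_sub hq hr, sum_sqrt_mul_sqrt_prod hq.1 hr.1]
  have affinity_nonneg : 0 ≤ ∑ a, √(q a) * √(r a) := sum_nonneg fun _ _ => by positivity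
  have bernoulli :=
    one_add_mul_le_pow (a := ∑ a, √(q a) * √(r a) - 1) (by linarith) m
  rw [add_sub_cancel] at bernoulli
  linarith

lemma sum_mul_log_sub_log_le_neg_hellingerSq {q r : α → ℝ} (hq : q ∈ stdSimplex ℝ α)
    (hr : r ∈ stdSimplex ℝ α) (hqr : ∀ a, 0 < q a → 0 < r a) :
    ∑ a, q a * (Real.log (r a) - Real.log (q a)) ≤ -hellingerSq q r := by
  have pointwise (a : α) : q a * (Real.log (r a) - Real.log (q a)) ≤
      2 * (√(q a) * √(r a)) - 2 * q a := by
    rcases (hq.1 a).eq_or_lt with h0 | hpos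
    · simp [← h0]
    · have hrpos := hqr a hpos
      have hlog : Real.log (√(r a) / √(q a)) ≤ √(r a) / √(q a) - 1 :=
        Real.log_le_sub_one_of_pos (by positivity)
      rw [Real.log_div (by positivity) (by positivity), Real.log_sqrt hrpos.le,
        Real.log_sqrt hpos.le] at hlog
      have hcancel : q a * (√(r a) / √(q a)) = √(q a) * √(r a) := by
        rw [← mul_div_assoc, mul_div_right_comm, Real.div_sqrt]
      nlinarith
  rw [hellingerSq_eq_two_sub hq hr]
  calc _ ≤ ∑ a, (2 * (√(q a) * √(r a)) - 2 * q a) := sum_le_sum fun a _ => pointwise a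
    _ = _ := by rw [sum_sub_distrib, ← mul_sum, ← mul_sum, hq.2]; ring

lemma hellingerSq_joint_le {q u : α → ℝ} (hq : q ∈ stdSimplex ℝ α) (hu : u ∈ stdSimplex ℝ α)
    (K : α → α → ℝ) :
    hellingerSq (fun x : α × α => q x.1 * K x.1 x.2) (fun x => u x.1 * u x.2) ≤
      3 * ∑ a, q a * hellingerSq (K a) q + 6 * hellingerSq q u := by
  have pointwise (a b : α) : (√(q a * K a b) - √(u a * u b)) ^ 2 ≤
      3 * (q a * (√(K a b) - √(q b)) ^ 2) + 3 * (q a * (√(q b) - √(u b)) ^ 2) +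
        3 * (u b * (√(q a) - √(u a)) ^ 2) := by
    calc (√(q a * K a b) - √(u a * u b)) ^ 2
        = (√(q a) * (√(K a b) - √(q b)) + √(q a) * (√(q b) - √(u b)) +
            √(u b) * (√(q a) - √(u a))) ^ 2 := by
          rw [Real.sqrt_mul (hq.1 a), Real.sqrt_mul (hu.1 a)]; ring
      _ ≤ 3 * ((√(q a) * (√(K a b) - √(q b))) ^ 2 + (√(q a) * (√(q b) - √(u b))) ^ 2 +
            (√(u b) * (√(q a) - √(u a))) ^ 2) := sq_add_add_le _ _ _
      _ = _ := by
          rw [mul_pow, mul_pow, mul_pow, Real.sq_sqrt (hq.1 a), Real.sq_sqrt (hu.1 b)]; ring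
  calc _ ≤ ∑ a, ∑ b, (3 * (q a * (√(K a b) - √(q b)) ^ 2) + 3 * (q a * (√(q b) - √(u b)) ^ 2) +
        3 * (u b * (√(q a) - √(u a)) ^ 2)) := by
        rw [hellingerSq, Fintype.sum_prod_type]
        exact sum_le_sum fun a _ => sum_le_sum fun b _ => pointwise a b
    _ = 3 * ∑ a, q a * hellingerSq (K a) q + 3 * ((∑ a, q a) * hellingerSq q u) +
        3 * ((∑ b, u b) * hellingerSq q u) := by
        simp_rw [hellingerSq, sum_add_distrib, ← mul_sum, ← sum_mul, ← mul_sum]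
    _ = _ := by rw [hq.2, hu.2]; ring

lemma sum_sub_sq_le_of_hellingerSq_lt {r : α → ℝ} (hr : ∀ a, 0 ≤ r a) {u : ℝ}
    (h : hellingerSq r (fun _ => u) < u) :
    ∑ a, (r a - u) ^ 2 ≤ 9 * u * hellingerSq r fun _ => u := by
  have hu : 0 ≤ u := (hellingerSq_nonneg _ _).trans h.le
  rw [hellingerSq, mul_sum]
  refine sum_le_sum fun a _ => ?_
  have hsingle : (√(r a) - √u) ^ 2 < √u ^ 2 := by
    rw [Real.sq_sqrt hu]
    exact (single_le_sum (f := fun a => (√(r a) - √u) ^ 2) (fun _ _ => sq_nonneg _)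
      (mem_univ a)).trans_lt h
  have hlt : √(r a) - √u < √u := (abs_lt.mp (abs_lt_of_sq_lt_sq hsingle (by positivity))).2
  have hsum : (√(r a) + √u) ^ 2 ≤ 9 * u := by
    calc (√(r a) + √u) ^ 2 ≤ (3 * √u) ^ 2 := pow_le_pow_left₀ (by positivity) (by linarith) 2
      _ = 9 * u := by rw [mul_pow, Real.sq_sqrt hu]; norm_num
  calc (r a - u) ^ 2 = (√(r a) + √u) ^ 2 * (√(r a) - √u) ^ 2 := by
        rw [← mul_pow, ← sq_sub_sq, Real.sq_sqrt (hr a), Real.sq_sqrt hu]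
    _ ≤ _ := by gcongr

end Hellinger

lemma half_le_sq_sqrt_sub_sqrt {x y : ℝ} (hx : 24 / 25 ≤ x) (hy : y ≤ 1 / 25) :
    1 / 2 ≤ (√x - √y) ^ 2 := by
  have hx' : (19 / 20 : ℝ) ≤ √x := Real.le_sqrt_of_sq_le (by linarith)
  have hy' : √y ≤ 1 / 5 := Real.sqrt_le_iff.mpr ⟨by norm_num, by linarith⟩
  nlinarith

lemma half_le_sq_sqrt_sub_sqrt_of_ne {α : Type*} [Fintype α] {q : α → ℝ}
    (hq : q ∈ stdSimplex ℝ α) {i j : α} (hij : i ≠ j) (hi : 24 / 25 ≤ q i) :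
    1 / 2 ≤ (√(q i) - √(q j)) ^ 2 := by
  classical
  have : q i + q j ≤ 1 := by
    rw [← hq.2, ← sum_pair hij]
    exact sum_le_sum_of_subset_of_nonneg (subset_univ _) fun _ _ _ => hq.1 _
  exact half_le_sq_sqrt_sub_sqrt hi (by linarith)

section Deficit

variable {G : Type*} [AddCommGroup G] [Fintype G]

/-- The squared `ℓ²` distance between `f` and its reflection `a ↦ f (-σ - a)`. -/
noncomputable def reflectionEnergy (f : G → ℝ) (σ : G) : ℝ := ∑ a, (f a - f (-σ - a)) ^ 2

/-- The squared `ℓ²` distance between `f` and its translate by `τ`. -/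
noncomputable def translationEnergy (f : G → ℝ) (τ : G) : ℝ := ∑ a, (f a - f (a + τ)) ^ 2

/-- The deficit of a probability vector `q`: the amount by which the geometric mean falls short of
the arithmetic mean when Young's inequality is summed over the zero-sum `(m + 2)`-tuples of `G`
(see `zeroSumSum_rpow_le`). -/
noncomputable def deficit (m : ℕ) (q : G → ℝ) : ℝ :=
  ∑ b : Fin m → G, (∏ s, q (b s)) * reflectionEnergy (fun a => √(q a)) (∑ s, b s)

lemma reflectionEnergy_nonneg (f : G → ℝ) (σ : G) : 0 ≤ reflectionEnergy f σ :=
  sum_nonneg fun _ _ => sq_nonneg _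

lemma translationEnergy_nonneg (f : G → ℝ) (τ : G) : 0 ≤ translationEnergy f τ :=
  sum_nonneg fun _ _ => sq_nonneg _

lemma deficit_nonneg (m : ℕ) {q : G → ℝ} (hq : ∀ a, 0 ≤ q a) : 0 ≤ deficit m q :=
  sum_nonneg fun _ _ => mul_nonneg (prod_nonneg fun _ _ => hq _) (reflectionEnergy_nonneg _ _)

-- Two reflections compose to a translation.
lemma translationEnergy_sub_le (f : G → ℝ) (σ σ' : G) :
    translationEnergy f (σ - σ') ≤ 2 * reflectionEnergy f σ + 2 * reflectionEnergy f σ' := by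
  have reindexed : reflectionEnergy f σ' = ∑ a, (f (-σ - a) - f (a + (σ - σ'))) ^ 2 := by
    rw [reflectionEnergy, ← Equiv.sum_comp (Equiv.subLeft (-σ))]
    refine sum_congr rfl fun a _ => ?_
    rw [Equiv.subLeft_apply, show -σ' - (-σ - a) = a + (σ - σ') by abel]
  rw [reindexed, reflectionEnergy, translationEnergy, mul_sum, mul_sum, ← sum_add_distrib]
  refine sum_le_sum fun a _ => ?_
  linarith [sq_nonneg ((f a - f (-σ - a)) - (f (-σ - a) - f (a + (σ - σ'))))]

lemma translationEnergy_nsmul_le (f : G → ℝ) (τ : G) (m : ℕ) :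
    translationEnergy f (m • τ) ≤ m ^ 2 * translationEnergy f τ := by
  have pointwise (a : G) : (f a - f (a + m • τ)) ^ 2 ≤
      m * ∑ l ∈ range m, (f (a + l • τ) - f (a + (l + 1) • τ)) ^ 2 := by
    have cauchy := sq_sum_le_card_mul_sum_sq (s := range m)
      (f := fun l => f (a + l • τ) - f (a + (l + 1) • τ))
    rw [sum_range_sub' fun l => f (a + l • τ)] at cauchy
    simpa using cauchy
  have shifted (l : ℕ) : ∑ a, (f (a + l • τ) - f (a + (l + 1) • τ)) ^ 2 =
      translationEnergy f τ := by
    simp_rw [succ_nsmul, ← add_assoc]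
    exact Equiv.sum_comp (Equiv.addRight (l • τ)) fun a => (f a - f (a + τ)) ^ 2
  calc translationEnergy f (m • τ)
      ≤ ∑ a, m * ∑ l ∈ range m, (f (a + l • τ) - f (a + (l + 1) • τ)) ^ 2 :=
        sum_le_sum fun a _ => pointwise a
    _ = m ^ 2 * translationEnergy f τ := by
        rw [← mul_sum, sum_comm]
        simp only [shifted, sum_const, card_range, nsmul_eq_mul]
        ring

lemma sum_translationEnergy (f : G → ℝ) :
    ∑ τ, translationEnergy f τ = 2 * Fintype.card G * ∑ a, f a ^ 2 - 2 * (∑ a, f a) ^ 2 := by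
  have inner (a : G) : ∑ τ, (f a - f (a + τ)) ^ 2 =
      Fintype.card G * f a ^ 2 + ∑ b, f b ^ 2 - 2 * f a * ∑ b, f b := by
    refine (Equiv.sum_comp (Equiv.addLeft a) fun x => (f a - f x) ^ 2).trans ?_
    simp_rw [sub_sq, sum_add_distrib, sum_sub_distrib, ← mul_sum]
    simp only [sum_const, card_univ, nsmul_eq_mul]
    ring
  simp_rw [translationEnergy]
  rw [sum_comm]
  simp_rw [inner, sum_sub_distrib, sum_add_distrib, ← mul_sum, ← sum_mul, ← mul_sum]
  simp only [sum_const, card_univ, nsmul_eq_mul]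
  ring

lemma card_mul_hellingerSq_uniform_le {q : G → ℝ} (hq : q ∈ stdSimplex ℝ G) :
    Fintype.card G * hellingerSq q (uniform G) ≤ ∑ τ, translationEnergy (fun a => √(q a)) τ := by
  have hcard : (0 : ℝ) < Fintype.card G := by exact_mod_cast Fintype.card_pos
  simp_rw [sum_translationEnergy, Real.sq_sqrt (hq.1 _), hq.2,
    hellingerSq_eq_two_sub hq uniform_mem_stdSimplex, uniform, ← sum_mul, Real.sqrt_inv]
  set S := ∑ a, √(q a)
  set R := √(Fintype.card G : ℝ)
  have hS : S ≤ R := by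
    refine Real.le_sqrt_of_sq_le ?_
    simpa [Real.sq_sqrt (hq.1 _), hq.2] using
      sq_sum_le_card_mul_sum_sq (s := univ) (f := fun a => √(q a))
  have hS0 : 0 ≤ S := sum_nonneg fun _ _ => Real.sqrt_nonneg _
  have hR0 : 0 < R := Real.sqrt_pos.mpr hcard
  rw [← Real.sq_sqrt hcard.le]
  calc R ^ 2 * (2 - 2 * (S * R⁻¹)) = 2 * R ^ 2 * 1 - 2 * (S * R) := by field_simp
    _ ≤ 2 * R ^ 2 * 1 - 2 * S ^ 2 := by nlinarith

lemma deficit_succ (m : ℕ) (q : G → ℝ) :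
    deficit (m + 1) q = ∑ b : Fin m → G, (∏ s, q (b s)) *
      ∑ c, q c * reflectionEnergy (fun a => √(q a)) (c + ∑ s, b s) := by
  rw [deficit, ← (Fin.consEquiv fun _ : Fin (m + 1) => G).sum_comp, Fintype.sum_prod_type, sum_comm]
  refine sum_congr rfl fun b _ => ?_
  rw [mul_sum]
  refine sum_congr rfl fun c _ => ?_
  simp only [Fin.consEquiv, Equiv.coe_fn_mk, Fin.prod_univ_succ, Fin.sum_univ_succ, Fin.cons_zero,
    Fin.cons_succ]
  ring

lemma sum_mul_translationEnergy_le {q : G → ℝ} (hq : q ∈ stdSimplex ℝ G) (f : G → ℝ) (σ : G) :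
    ∑ c, ∑ c', q c * q c' * translationEnergy f (c - c') ≤
      4 * ∑ c, q c * reflectionEnergy f (c + σ) := by
  calc ∑ c, ∑ c', q c * q c' * translationEnergy f (c - c')
      ≤ ∑ c, ∑ c', (2 * (q c * reflectionEnergy f (c + σ)) * q c' +
          q c * (2 * (q c' * reflectionEnergy f (c' + σ)))) := by
        refine sum_le_sum fun c _ => sum_le_sum fun c' _ => ?_
        have reflect := translationEnergy_sub_le f (c + σ) (c' + σ)
        rw [add_sub_add_right_eq_sub] at reflect
        linarith [mul_le_mul_of_nonneg_left reflect (mul_nonneg (hq.1 c) (hq.1 c'))]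
    _ = 4 * ∑ c, q c * reflectionEnergy f (c + σ) := by
        simp_rw [sum_add_distrib, ← mul_sum, ← sum_mul, hq.2, ← mul_sum]
        ring

lemma sum_mul_translationEnergy_sqrt_le_deficit (m : ℕ) {q : G → ℝ} (hq : q ∈ stdSimplex ℝ G) :
    ∑ c, ∑ c', q c * q c' * translationEnergy (fun a => √(q a)) (c - c') ≤
      4 * deficit (m + 1) q := by
  set T := ∑ c, ∑ c', q c * q c' * translationEnergy (fun a => √(q a)) (c - c')
  calc T = ∑ b : Fin m → G, (∏ s, q (b s)) * T := by
        rw [← sum_mul, (prod_mem_stdSimplex hq m).2, one_mul]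
    _ ≤ ∑ b : Fin m → G, (∏ s, q (b s)) *
          (4 * ∑ c, q c * reflectionEnergy (fun a => √(q a)) (c + ∑ s, b s)) :=
        sum_le_sum fun b _ => mul_le_mul_of_nonneg_left (sum_mul_translationEnergy_le hq _ _)
          (prod_nonneg fun _ _ => hq.1 _)
    _ = 4 * deficit (m + 1) q := by
        rw [deficit_succ, mul_sum]
        exact sum_congr rfl fun b _ => by ring

lemma le_mul_sq_sqrt_sub_sqrt_of_lt_half {x u : ℝ} (hx : 0 ≤ x) (h : x < u / 2) :
    u ≤ 16 * (√x - √u) ^ 2 := by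
  have hu : 0 ≤ u := by linarith
  have hroot : √x ≤ 3 / 4 * √u := by
    refine Real.sqrt_le_iff.mpr ⟨by positivity, ?_⟩
    rw [mul_pow, Real.sq_sqrt hu]
    linarith
  nlinarith [Real.sq_sqrt hu, Real.sqrt_nonneg u]

lemma mul_ge_of_sqrt_near {x y u : ℝ} (hx : 0 ≤ x) (hy : 0 ≤ y) (hu : 0 ≤ u) :
    u / 4 * (u - 16 * (√x - √u) ^ 2 - 16 * (√y - √u) ^ 2) ≤ x * y := by
  have hxu := sq_nonneg (√x - √u)
  have hyu := sq_nonneg (√y - √u)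
  rcases lt_or_ge x (u / 2) with hlt | hxge
  · have := le_mul_sq_sqrt_sub_sqrt_of_lt_half hx hlt
    exact (mul_nonpos_of_nonneg_of_nonpos (by positivity) (by linarith)).trans (mul_nonneg hx hy)
  rcases lt_or_ge y (u / 2) with hlt | hyge
  · have := le_mul_sq_sqrt_sub_sqrt_of_lt_half hy hlt
    exact (mul_nonpos_of_nonneg_of_nonpos (by positivity) (by linarith)).trans (mul_nonneg hx hy)
  calc u / 4 * (u - 16 * (√x - √u) ^ 2 - 16 * (√y - √u) ^ 2) ≤ u / 4 * u := by
        gcongr; linarith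
    _ = u / 2 * (u / 2) := by ring
    _ ≤ x * y := mul_le_mul hxge hyge (by positivity) hx

lemma sum_mul_comp_sub (v w g : G → ℝ) :
    ∑ c, ∑ c', (v c + w c') * g (c - c') = (∑ c, (v c + w c)) * ∑ τ, g τ := by
  have left : ∑ c, ∑ c', v c * g (c - c') = (∑ c, v c) * ∑ τ, g τ := by
    rw [sum_mul]
    refine sum_congr rfl fun c _ => ?_
    rw [← mul_sum]
    exact congrArg _ (Equiv.sum_comp (Equiv.subLeft c) g)
  have right : ∑ c, ∑ c', w c' * g (c - c') = (∑ c, w c) * ∑ τ, g τ := by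
    rw [sum_comm, sum_mul]
    refine sum_congr rfl fun c _ => ?_
    rw [← mul_sum]
    exact congrArg _ (Equiv.sum_comp (Equiv.subRight c) g)
  simp_rw [add_mul, sum_add_distrib, left, right, add_mul]

lemma hellingerSq_uniform_le_deficit (m : ℕ) {q : G → ℝ} (hq : q ∈ stdSimplex ℝ G)
    (hnear : hellingerSq q (uniform G) ≤ 1 / 64) :
    hellingerSq q (uniform G) / 32 ≤ deficit (m + 1) q := by
  set H := hellingerSq q (uniform G)
  set N := (Fintype.card G : ℝ) with hN
  have hN0 : 0 < N := by rw [hN]; exact_mod_cast Fintype.card_pos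
  set g := translationEnergy fun a => √(q a)
  set v : G → ℝ := fun c => N⁻¹ / 4 * (N⁻¹ / 2 - 16 * (√(q c) - √N⁻¹) ^ 2) with hv
  have sum_v : ∑ c, (v c + v c) = N⁻¹ / 4 * (1 - 32 * H) := by
    have : ∑ c, (√(q c) - √N⁻¹) ^ 2 = H := rfl
    simp_rw [hv, sum_add_distrib, ← mul_sum, sum_sub_distrib, ← mul_sum, this]
    simp only [sum_const, card_univ, nsmul_eq_mul, ← hN]
    field_simp
    ring
  have weighted : N⁻¹ / 4 * (1 - 32 * H) * ∑ τ, g τ ≤ ∑ c, ∑ c', q c * q c' * g (c - c') := by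
    rw [← sum_v, ← sum_mul_comp_sub]
    refine sum_le_sum fun c _ => sum_le_sum fun c' _ =>
      mul_le_mul_of_nonneg_right ?_ (translationEnergy_nonneg _ _)
    refine le_of_eq_of_le ?_ (mul_ge_of_sqrt_near (hq.1 c) (hq.1 c') (inv_nonneg.mpr hN0.le))
    ring
  have total : N * H ≤ ∑ τ, g τ := card_mul_hellingerSq_uniform_le hq
  have H_nonneg : 0 ≤ H := hellingerSq_nonneg _ _
  have : N⁻¹ / 4 * (1 - 32 * H) * (N * H) ≤ 4 * deficit (m + 1) q :=
    (mul_le_mul_of_nonneg_left total (mul_nonneg (by positivity) (by linarith))).trans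
      (weighted.trans (sum_mul_translationEnergy_sqrt_le_deficit m hq))
  have cancel : N⁻¹ / 4 * (1 - 32 * H) * (N * H) = (1 - 32 * H) * H / 4 := by field_simp
  nlinarith

lemma one_sub_apply_zero_le_deficit (m : ℕ) {q : G → ℝ} (hq : q ∈ stdSimplex ℝ G)
    (hzero : 24 / 25 ≤ q 0) : (1 - q 0) / 10 ≤ deficit (m + 1) q := by
  classical
  set g := translationEnergy fun a => √(q a)
  have g_ge (τ : G) (hτ : τ ≠ 0) : 1 / 2 ≤ g τ := by
    have hsingle := single_le_sum (f := fun a => (√(q a) - √(q (a + τ))) ^ 2)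
      (fun _ _ => sq_nonneg _) (mem_univ 0)
    rw [zero_add] at hsingle
    exact (half_le_sq_sqrt_sub_sqrt_of_ne hq hτ.symm hzero).trans hsingle
  have term_nonneg (c c' : G) : 0 ≤ q c * q c' * g (c - c') :=
    mul_nonneg (mul_nonneg (hq.1 _) (hq.1 _)) (translationEnergy_nonneg _ _)
  have column : ∑ c, q c * q 0 * g (c - 0) ≤ ∑ c, ∑ c', q c * q c' * g (c - c') :=
    sum_le_sum fun c _ => single_le_sum (f := fun c' => q c * q c' * g (c - c'))
      (fun c' _ => term_nonneg c c') (mem_univ 0)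
  have off_zero : ∑ c ∈ univ.erase 0, q c * (12 / 25) ≤ ∑ c, q c * q 0 * g (c - 0) := by
    rw [← add_sum_erase _ _ (mem_univ 0)]
    refine le_add_of_nonneg_of_le (term_nonneg 0 0) (sum_le_sum fun c hc => ?_)
    rw [sub_zero, mul_assoc]
    exact mul_le_mul_of_nonneg_left (by nlinarith [g_ge c (ne_of_mem_erase hc)]) (hq.1 c)
  have mass : q 0 + ∑ c ∈ univ.erase 0, q c = 1 := by rw [add_sum_erase _ _ (mem_univ 0), hq.2]
  rw [← sum_mul] at off_zero
  linarith [mem_stdSimplex_le_one hq 0, sum_mul_translationEnergy_sqrt_le_deficit m hq]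

-- The tuple `b = (j, …, j)` reflects `j` to `-(m + 1) • j ≠ j`, where `q` is small.
lemma pow_le_deficit (m : ℕ) {q : G → ℝ} (hq : q ∈ stdSimplex ℝ G) {j : G}
    (hj : (m + 2) • j ≠ 0) (hlarge : 24 / 25 ≤ q j) : (24 / 25) ^ m / 2 ≤ deficit m q := by
  have constant_tuple := single_le_sum (f := fun b : Fin m → G =>
      (∏ s, q (b s)) * reflectionEnergy (fun a => √(q a)) (∑ s, b s))
    (fun _ _ => mul_nonneg (prod_nonneg fun _ _ => hq.1 _) (reflectionEnergy_nonneg _ _))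
    (mem_univ fun _ => j)
  refine le_trans ?_ constant_tuple
  simp only [prod_const, card_univ, Fintype.card_fin, sum_const]
  have reflected_ne : j ≠ -(m • j) - j := fun h => hj <| by
    calc (m + 2) • j = m • j + j + j := by rw [succ_nsmul, succ_nsmul]
      _ = m • j + j + (-(m • j) - j) := congrArg _ h
      _ = 0 := by abel
  have energy_ge : 1 / 2 ≤ reflectionEnergy (fun a => √(q a)) (m • j) :=
    (half_le_sq_sqrt_sub_sqrt_of_ne hq reflected_ne hlarge).trans <|
      single_le_sum (f := fun a => (√(q a) - √(q (-(m • j) - a))) ^ 2)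
        (fun _ _ => sq_nonneg _) (mem_univ j)
  rw [← mul_one_div]
  exact mul_le_mul (pow_le_pow_left₀ (by norm_num) hlarge _) energy_ge (by norm_num)
    (pow_nonneg (hq.1 _) _)

lemma reflectionEnergy_le (f g : G → ℝ) (σ : G) :
    reflectionEnergy f σ ≤ 3 * reflectionEnergy g σ + 6 * ∑ a, (g a - f a) ^ 2 := by
  have reflected : ∑ a, (g (-σ - a) - f (-σ - a)) ^ 2 = ∑ a, (g a - f a) ^ 2 :=
    Equiv.sum_comp (Equiv.subLeft (-σ)) fun a => (g a - f a) ^ 2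
  calc reflectionEnergy f σ
      ≤ ∑ a, 3 * ((g a - g (-σ - a)) ^ 2 + (f a - g a) ^ 2 +
          (g (-σ - a) - f (-σ - a)) ^ 2) := by
        refine sum_le_sum fun a _ => (le_of_eq ?_).trans (sq_add_add_le _ _ _)
        ring
    _ = _ := by
        simp_rw [← mul_sum, sum_add_distrib, reflected, reflectionEnergy, sub_sq_comm (f _) (g _)]
        ring

lemma reflectionEnergy_sqrt_le_four {q : G → ℝ} (hq : q ∈ stdSimplex ℝ G) (σ : G) :
    reflectionEnergy (fun a => √(q a)) σ ≤ 4 := by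
  have reflected : ∑ a, q (-σ - a) = ∑ a, q a := Equiv.sum_comp (Equiv.subLeft (-σ)) q
  calc reflectionEnergy (fun a => √(q a)) σ ≤ ∑ a, (2 * q a + 2 * q (-σ - a)) := by
        refine sum_le_sum fun a _ => ?_
        nlinarith [Real.sq_sqrt (hq.1 a), Real.sq_sqrt (hq.1 (-σ - a)),
          sq_nonneg (√(q a) + √(q (-σ - a)))]
    _ = 4 := by rw [sum_add_distrib, ← mul_sum, ← mul_sum, reflected, hq.2]; norm_num

lemma le_two_mul_add_two_mul_sq_sqrt_sub {x y : ℝ} (hx : 0 ≤ x) (hy : 0 ≤ y) :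
    y ≤ 2 * x + 2 * (√x - √y) ^ 2 := by
  nlinarith [sq_nonneg (2 * √x - √y), Real.sq_sqrt hx, Real.sq_sqrt hy]

lemma deficit_le_of_hellingerSq (m : ℕ) {q r : G → ℝ} (hq : q ∈ stdSimplex ℝ G)
    (hr : r ∈ stdSimplex ℝ G) :
    deficit m r ≤ 6 * deficit m q + (12 + 8 * m) * hellingerSq q r := by
  have termwise (b : Fin m → G) :
      (∏ s, r (b s)) * reflectionEnergy (fun a => √(r a)) (∑ s, b s) ≤
        6 * ((∏ s, q (b s)) * reflectionEnergy (fun a => √(q a)) (∑ s, b s)) +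
          12 * hellingerSq q r * ∏ s, q (b s) +
          8 * (√(∏ s, q (b s)) - √(∏ s, r (b s))) ^ 2 := by
    have hQ : 0 ≤ ∏ s, q (b s) := prod_nonneg fun _ _ => hq.1 _
    have hR : 0 ≤ ∏ s, r (b s) := prod_nonneg fun _ _ => hr.1 _
    have energy_compare : reflectionEnergy (fun a => √(r a)) (∑ s, b s) ≤
        3 * reflectionEnergy (fun a => √(q a)) (∑ s, b s) + 6 * hellingerSq q r :=
      reflectionEnergy_le _ _ _
    have energy_le_four := reflectionEnergy_sqrt_le_four hr (∑ s, b s)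
    have energy_nonneg := reflectionEnergy_nonneg (fun a => √(r a)) (∑ s, b s)
    have product_compare := le_two_mul_add_two_mul_sq_sqrt_sub hQ hR
    set Q := ∏ s, q (b s)
    set R := ∏ s, r (b s)
    set A := reflectionEnergy (fun a => √(r a)) (∑ s, b s)
    set A' := reflectionEnergy (fun a => √(q a)) (∑ s, b s)
    calc R * A ≤ (2 * Q + 2 * (√Q - √R) ^ 2) * A := by gcongr
      _ = 2 * (Q * A) + 2 * (√Q - √R) ^ 2 * A := by ring
      _ ≤ 2 * (Q * (3 * A' + 6 * hellingerSq q r)) + 2 * (√Q - √R) ^ 2 * 4 := by gcongr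
      _ = _ := by ring
  have summed := sum_le_sum fun b (_ : b ∈ univ) => termwise b
  simp_rw [sum_add_distrib, ← mul_sum, (prod_mem_stdSimplex hq m).2] at summed
  have tensorized := hellingerSq_prod_le hq hr m
  rw [hellingerSq] at tensorized
  rw [← deficit, ← deficit] at summed
  linarith

end Deficit

section PrimeOrder

variable {p : ℕ} [Fact p.Prime]

lemma translationEnergy_le_sq_mul (f : ZMod p → ℝ) {τ : ZMod p} (hτ : τ ≠ 0) (σ : ZMod p) :
    translationEnergy f σ ≤ p ^ 2 * translationEnergy f τ := by
  have generated : (σ / τ).val • τ = σ := by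
    rw [nsmul_eq_mul, ZMod.natCast_zmod_val, div_mul_cancel₀ _ hτ]
  have hle : ((σ / τ).val : ℝ) ≤ p := by exact_mod_cast (ZMod.val_lt _).le
  calc translationEnergy f σ ≤ ((σ / τ).val : ℝ) ^ 2 * translationEnergy f τ := by
        simpa only [generated] using translationEnergy_nsmul_le f τ (σ / τ).val
    _ ≤ p ^ 2 * translationEnergy f τ := by gcongr; exact translationEnergy_nonneg _ _

lemma hellingerSq_uniform_le_sq_mul_deficit (m : ℕ) {q : ZMod p → ℝ}
    (hq : q ∈ stdSimplex ℝ (ZMod p)) (hmax : ∀ a, q a ≤ 24 / 25) :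
    hellingerSq q (uniform (ZMod p)) / 100 ≤ p ^ 2 * deficit (m + 1) q := by
  have hp : (0 : ℝ) < p := by exact_mod_cast (Fact.out : p.Prime).pos
  set H := hellingerSq q (uniform (ZMod p))
  have H_nonneg : 0 ≤ H := hellingerSq_nonneg _ _
  set g := translationEnergy fun a => √(q a)
  have H_le (τ : ZMod p) (hτ : τ ≠ 0) : H ≤ p ^ 2 * g τ := by
    have total := (card_mul_hellingerSq_uniform_le hq).trans <|
      sum_le_sum fun σ (_ : σ ∈ univ) => translationEnergy_le_sq_mul _ hτ σ
    simp only [sum_const, card_univ, ZMod.card, nsmul_eq_mul] at total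
    exact le_of_mul_le_mul_left total hp
  have termwise (c c' : ZMod p) :
      q c * q c' * H - (if c = c' then q c * q c' * H else 0) ≤
        p ^ 2 * (q c * q c' * g (c - c')) := by
    have hqq : 0 ≤ q c * q c' := mul_nonneg (hq.1 _) (hq.1 _)
    split_ifs with h
    · rw [sub_self]
      exact mul_nonneg (by positivity) (mul_nonneg hqq (translationEnergy_nonneg _ _))
    · rw [sub_zero, mul_left_comm]
      exact mul_le_mul_of_nonneg_left (H_le _ (sub_ne_zero.mpr h)) hqq
  have summed := sum_le_sum fun c (_ : c ∈ univ) =>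
    sum_le_sum fun c' (_ : c' ∈ univ) => termwise c c'
  simp_rw [sum_sub_distrib, sum_ite_eq, mem_univ, if_true, ← sum_mul, ← mul_sum, hq.2, mul_one,
    hq.2] at summed
  have diagonal : ∑ c, q c * q c ≤ 24 / 25 := by
    calc ∑ c, q c * q c ≤ ∑ c, q c * (24 / 25) :=
          sum_le_sum fun c _ => mul_le_mul_of_nonneg_left (hmax c) (hq.1 c)
      _ = _ := by rw [← sum_mul, hq.2, one_mul]
  have pair_sum := mul_le_mul_of_nonneg_left (sum_mul_translationEnergy_sqrt_le_deficit m hq)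
    (sq_nonneg (p : ℝ))
  nlinarith [mul_le_mul_of_nonneg_right diagonal H_nonneg]

lemma exists_deficit_trichotomy (m : ℕ) : ∃ c : ℝ, 0 < c ∧ ∀ (p : ℕ) [Fact p.Prime], ¬ p ∣ m + 3 →
    ∀ q ∈ stdSimplex ℝ (ZMod p), c ≤ p ^ 2 * deficit (m + 1) q ∨
      c * (1 - q 0) ≤ deficit (m + 1) q ∨
      c * hellingerSq q (uniform (ZMod p)) ≤ deficit (m + 1) q := by
  refine ⟨min (1 / 6400) ((24 / 25) ^ (m + 1) / 2), by positivity, fun p _ hpm q hq => ?_⟩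
  have c_le : min (1 / 6400 : ℝ) ((24 / 25) ^ (m + 1) / 2) ≤ 1 / 6400 := min_le_left _ _
  have c_le_pow : min (1 / 6400 : ℝ) ((24 / 25) ^ (m + 1) / 2) ≤ _ := min_le_right _ _
  set c := min (1 / 6400 : ℝ) ((24 / 25) ^ (m + 1) / 2)
  have hp : (1 : ℝ) ≤ p := by exact_mod_cast (Fact.out : p.Prime).one_le
  by_cases hmax : ∀ a, q a ≤ 24 / 25
  · rcases le_or_gt (hellingerSq q (uniform (ZMod p))) (1 / 64) with hnear | hfar
    · exact .inr <| .inr <| by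
        nlinarith [hellingerSq_uniform_le_deficit m hq hnear,
          hellingerSq_nonneg q (uniform (ZMod p))]
    · exact .inl <| by linarith [hellingerSq_uniform_le_sq_mul_deficit m hq hmax]
  · push Not at hmax
    obtain ⟨j, hj⟩ := hmax
    rcases eq_or_ne j 0 with rfl | hj0
    · exact .inr <| .inl <| by
        nlinarith [one_sub_apply_zero_le_deficit m hq hj.le, mem_stdSimplex_le_one hq 0]
    · have not_torsion : (m + 1 + 2) • j ≠ 0 := by
        rw [nsmul_eq_mul, mul_ne_zero_iff, Ne, ZMod.natCast_eq_zero_iff]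
        exact ⟨hpm, hj0⟩
      left
      nlinarith [pow_le_deficit (m + 1) hq not_torsion hj.le, deficit_nonneg (m + 1) hq.1,
        one_le_pow₀ hp (n := 2)]

end PrimeOrder

section ZeroSum

variable {G : Type*} [AddCommGroup G] [Fintype G] [DecidableEq G]

/-- The value at `x` of the generating function of the zero-sum `d`-tuples of `G`. -/
def zeroSumSum (d : ℕ) (x : G → ℝ) : ℝ := ∑ a : Fin d → G with ∑ r, a r = 0, ∏ r, x (a r)

lemma zeroSumSum_nonneg (d : ℕ) {x : G → ℝ} (hx : ∀ j, 0 ≤ x j) : 0 ≤ zeroSumSum d x :=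
  sum_nonneg fun _ _ => prod_nonneg fun _ _ => hx _

lemma sum_zeroSum_eq {M : Type*} [AddCommMonoid M] {m : ℕ} (r : Fin (m + 1))
    (F : (Fin (m + 1) → G) → M) :
    ∑ a with ∑ s, a s = 0, F a = ∑ b : Fin m → G, F (r.insertNth (-∑ s, b s) b) := by
  rw [sum_filter, ← (Fin.insertNthEquiv (fun _ => G) r).sum_comp, Fintype.sum_prod_type, sum_comm]
  refine sum_congr rfl fun b _ => ?_
  simp only [Fin.insertNthEquiv, Equiv.coe_fn_mk, Fin.sum_univ_succAbove _ r,
    Fin.insertNth_apply_same, Fin.insertNth_apply_succAbove, add_eq_zero_iff_eq_neg, sum_ite_eq',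
    mem_univ, if_true]

lemma sum_zeroSum_prod_succAbove {m : ℕ} (q : G → ℝ) (r : Fin (m + 1)) :
    ∑ a : Fin (m + 1) → G with ∑ s, a s = 0, ∏ s, q (a (r.succAbove s)) = (∑ c, q c) ^ m := by
  simp_rw [sum_zeroSum_eq r, Fin.insertNth_apply_succAbove, Fintype.sum_pow]

lemma deficit_eq_sum_zeroSum (m : ℕ) {q : G → ℝ} (hq : ∀ a, 0 ≤ q a) :
    deficit m q = ∑ a : Fin (m + 2) → G with ∑ s, a s = 0,
      (√(∏ s, q (a (Fin.succAbove 0 s))) - √(∏ s, q (a (Fin.succAbove 1 s)))) ^ 2 := by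
  rw [sum_zeroSum_eq 0, ← (Fin.consEquiv fun _ => G).sum_comp, Fintype.sum_prod_type, sum_comm,
    deficit]
  refine sum_congr rfl fun b _ => ?_
  rw [reflectionEnergy, mul_sum]
  refine sum_congr rfl fun x _ => ?_
  simp only [Fin.consEquiv, Equiv.coe_fn_mk, Fin.prod_univ_succ (n := m), Fin.sum_univ_succ,
    Fin.insertNth_zero', Fin.succAbove_zero, Fin.cons_succ, Fin.cons_zero, Fin.one_succAbove_succ,
    Fin.one_succAbove_zero]
  have tail_nonneg : 0 ≤ ∏ s, q (b s) := prod_nonneg fun _ _ => hq _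
  rw [Real.sqrt_mul (hq _), Real.sqrt_mul (hq _), ← sub_mul, mul_pow, Real.sq_sqrt tail_nonneg,
    neg_add_rev, ← sub_eq_add_neg, mul_comm]

lemma prod_prod_succAbove {M : Type*} [CommMonoid M] {m : ℕ} (f : Fin (m + 1) → M) :
    ∏ r : Fin (m + 1), ∏ s, f (r.succAbove s) = (∏ r, f r) ^ m := by
  have omit_one (r : Fin (m + 1)) : ∏ s, f (r.succAbove s) = ∏ s ∈ {r}ᶜ, f s := by
    rw [← Fin.image_succAbove_univ, prod_image Fin.succAbove_right_injective.injOn]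
  simp_rw [omit_one]
  rw [prod_comm' (t' := univ) (s' := fun s => {s}ᶜ) (by simp [eq_comm]), ← prod_pow]
  simp [card_compl]

-- Apply AM-GM after replacing each of `w 0` and `w 1` by their geometric mean.
lemma prod_rpow_le_sum_sub_sq_div {m : ℕ} (w : Fin (m + 2) → ℝ) (hw : ∀ i, 0 ≤ w i) :
    (∏ i, w i) ^ (1 / ((m : ℝ) + 2)) ≤ (∑ i, w i - (√(w 0) - √(w 1)) ^ 2) / (m + 2) := by
  set z : Fin (m + 2) → ℝ := Fin.cons (√(w 0) * √(w 1)) (Fin.cons (√(w 0) * √(w 1))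
    fun i => w i.succ.succ) with hz
  have z_nonneg (i : Fin (m + 2)) : 0 ≤ z i := by
    refine Fin.cases (by simp only [hz, Fin.cons_zero]; positivity) (fun i => ?_) i
    refine Fin.cases (by simp only [hz, Fin.cons_succ, Fin.cons_zero]; positivity) (fun i => ?_) i
    exact hw _
  have sqrt0 := Real.sq_sqrt (hw 0)
  have sqrt1 := Real.sq_sqrt (hw 1)
  have prod_z : ∏ i, z i = ∏ i, w i := by
    simp only [Fin.prod_univ_succ, hz, Fin.cons_zero, Fin.cons_succ, Fin.succ_zero_eq_one]
    linear_combination (∏ i : Fin m, w i.succ.succ) * (√(w 1) ^ 2 * sqrt0 + w 0 * sqrt1)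
  have sum_z : ∑ i, z i = ∑ i, w i - (√(w 0) - √(w 1)) ^ 2 := by
    simp only [Fin.sum_univ_succ, hz, Fin.cons_zero, Fin.cons_succ, Fin.succ_zero_eq_one]
    linear_combination sqrt0 + sqrt1
  have amgm := Real.geom_mean_le_arith_mean_weighted univ
    (fun _ : Fin (m + 2) => 1 / ((m : ℝ) + 2)) z (fun _ _ => by positivity)
    (by simp; field_simp) fun i _ => z_nonneg i
  rw [Real.finsetProd_rpow _ _ fun i _ => z_nonneg i, ← mul_sum, prod_z, sum_z] at amgm
  exact amgm.trans_eq (by ring)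

lemma zeroSumSum_rpow_le (m : ℕ) {q : G → ℝ} (hq : q ∈ stdSimplex ℝ G) :
    zeroSumSum (m + 2) (fun a => q a ^ (((m : ℝ) + 1) / (m + 2))) ≤ 1 - deficit m q / (m + 2) := by
  have termwise (a : Fin (m + 2) → G) : ∏ r, q (a r) ^ (((m : ℝ) + 1) / (m + 2)) ≤
      (∑ r : Fin (m + 2), ∏ s, q (a (r.succAbove s)) -
        (√(∏ s, q (a (Fin.succAbove 0 s))) - √(∏ s, q (a (Fin.succAbove 1 s)))) ^ 2) / (m + 2) := by
    have gain := prod_rpow_le_sum_sub_sq_div (fun r => ∏ s, q (a (r.succAbove s)))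
      fun _ => prod_nonneg fun _ _ => hq.1 _
    rw [prod_prod_succAbove fun s => q (a s), ← Real.rpow_natCast,
      ← Real.rpow_mul (prod_nonneg fun _ _ => hq.1 _)] at gain
    rw [Real.finsetProd_rpow _ _ fun _ _ => hq.1 _]
    exact (le_of_eq (by push_cast; ring_nf)).trans gain
  calc zeroSumSum (m + 2) (fun a => q a ^ (((m : ℝ) + 1) / (m + 2)))
      ≤ ∑ a : Fin (m + 2) → G with ∑ s, a s = 0, (∑ r : Fin (m + 2), ∏ s, q (a (r.succAbove s)) -
        (√(∏ s, q (a (Fin.succAbove 0 s))) - √(∏ s, q (a (Fin.succAbove 1 s)))) ^ 2) / (m + 2) :=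
        sum_le_sum fun a _ => termwise a
    _ = (m + 2 - deficit m q) / (m + 2) := by
        rw [← sum_div, sum_sub_distrib, sum_comm, ← deficit_eq_sum_zeroSum m hq.1]
        simp [sum_zeroSum_prod_succAbove, hq.2]
    _ = 1 - deficit m q / (m + 2) := by field_simp

end ZeroSum

section RowCount

variable {p d ν : ℕ} [NeZero p]

/-- The number of `ν`-tuples of zero-sum elements of `(ZMod p) ^ d` that contain the residue `j`
exactly `m j` times in total. -/
def rowCount (d ν : ℕ) (m : ZMod p → ℕ) : ℕ :=
  #{a : Fin ν → Fin d → ZMod p | (∀ k, ∑ r, a k r = 0) ∧ ∀ j, ∑ k, Phi (a k) j = m j}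

lemma prod_comp_eq_prod_pow_Phi (x : ZMod p → ℝ) (a : Fin d → ZMod p) :
    ∏ r, x (a r) = ∏ j, x j ^ Phi a j := by
  simp_rw [Phi, ← prod_const]
  exact (prod_fiberwise' univ a x).symm

lemma rowCount_mul_prod_pow_le (m : ZMod p → ℕ) {x : ZMod p → ℝ} (hx : ∀ j, 0 ≤ x j) :
    rowCount d ν m * ∏ j, x j ^ m j ≤ zeroSumSum d x ^ ν := by
  calc (rowCount d ν m * ∏ j, x j ^ m j : ℝ)
      = ∑ a : Fin ν → Fin d → ZMod p with
          (∀ k, ∑ r, a k r = 0) ∧ ∀ j, ∑ k, Phi (a k) j = m j,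
          ∏ k, if ∑ r, a k r = 0 then ∏ r, x (a k r) else 0 := by
        rw [rowCount, ← nsmul_eq_mul, ← sum_const]
        refine sum_congr rfl fun a ha => ?_
        obtain ⟨zero_sum, counts⟩ := (mem_filter.mp ha).2
        simp_rw [zero_sum, if_true, prod_comp_eq_prod_pow_Phi]
        rw [prod_comm]
        simp_rw [prod_pow_eq_pow_sum, counts]
    _ ≤ ∑ a : Fin ν → Fin d → ZMod p, ∏ k, if ∑ r, a k r = 0 then ∏ r, x (a k r) else 0 := by
        refine sum_le_sum_of_subset_of_nonneg (filter_subset _ _) fun a _ _ =>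
          prod_nonneg fun k _ => ?_
        split_ifs
        · exact prod_nonneg fun _ _ => hx _
        · exact le_rfl
    _ = zeroSumSum d x ^ ν := by rw [zeroSumSum, sum_filter, Fintype.sum_pow]

end RowCount

section Factorial

/-- The main part of Stirling's approximation to `log m!`. -/
noncomputable def stirlingMain (m : ℕ) : ℝ := m * Real.log m - m

/-- The number of perfect matchings of a set of even cardinality `m`. -/
noncomputable def matchingCount (m : ℕ) : ℝ :=
  m.factorial / (2 ^ (m / 2) * (m / 2).factorial)

lemma matchingCount_pos (m : ℕ) : 0 < matchingCount m := by unfold matchingCount; positivity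

lemma exp_stirlingMain_le_factorial (m : ℕ) : Real.exp (stirlingMain m) ≤ m.factorial := by
  rcases m.eq_zero_or_pos with rfl | m_pos
  · simp [stirlingMain]
  have pow_le := Real.pow_div_factorial_le_exp (m : ℝ) m.cast_nonneg m
  rw [div_le_iff₀ (by positivity)] at pow_le
  rw [stirlingMain, Real.exp_sub, ← Real.log_pow, Real.exp_log (by positivity),
    div_le_iff₀ (Real.exp_pos _)]
  linarith

lemma factorial_le_exp_stirlingMain {m B : ℕ} (hm : m ≤ B) :
    m.factorial ≤ Real.exp (stirlingMain m + (1 + Real.log (B + 1))) := by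
  rcases m with _ | m
  · have log_nonneg : 0 ≤ Real.log ((B : ℝ) + 1) := Real.log_nonneg (by simp)
    simpa [stirlingMain] using by linarith
  have antitone := Stirling.log_stirlingSeq'_antitone m.zero_le
  simp only [Function.comp_apply, Nat.succ_eq_add_one, zero_add,
    Stirling.log_stirlingSeq_formula (m + 1), Stirling.stirlingSeq_one] at antitone
  rw [Real.log_div (by positivity) (Real.exp_pos _).ne',
    Real.log_div (Real.exp_pos _).ne' (by positivity), Real.log_exp, Real.log_sqrt (by norm_num),
    Real.log_mul (by norm_num) (by positivity)] at antitone
  have log_mono : Real.log (m + 1 : ℕ) ≤ Real.log (B + 1) :=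
    Real.log_le_log (by positivity) (by norm_cast; omega)
  have log_nonneg : 0 ≤ Real.log (m + 1 : ℕ) := Real.log_natCast_nonneg _
  rw [← Real.log_le_iff_le_exp (by positivity), stirlingMain]
  linarith

lemma stirlingMain_two_mul (h : ℕ) :
    stirlingMain (2 * h) = 2 * (h * Real.log 2 + stirlingMain h) := by
  rcases h.eq_zero_or_pos with rfl | h_pos
  · simp [stirlingMain]
  · rw [stirlingMain, stirlingMain, Nat.cast_mul, Nat.cast_ofNat,
      Real.log_mul (by norm_num) (by positivity)]
    ring

lemma matchingCount_two_mul (h : ℕ) :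
    matchingCount (2 * h) = (2 * h).factorial / (Real.exp (h * Real.log 2) * h.factorial) := by
  rw [matchingCount, Nat.mul_div_cancel_left _ two_pos, ← Real.log_pow,
    Real.exp_log (by positivity)]

lemma matchingCount_le_exp {m B : ℕ} (even : Even m) (hm : m ≤ B) :
    matchingCount m ≤ Real.exp (stirlingMain m / 2 + (1 + Real.log (B + 1))) := by
  obtain ⟨h, rfl⟩ := even.two_dvd
  rw [matchingCount_two_mul, div_le_iff₀ (by positivity)]
  calc ((2 * h).factorial : ℝ)
      ≤ Real.exp (stirlingMain (2 * h) + (1 + Real.log (B + 1))) :=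
        factorial_le_exp_stirlingMain hm
    _ = Real.exp (stirlingMain (2 * h) / 2 + (1 + Real.log (B + 1))) *
        (Real.exp (h * Real.log 2) * Real.exp (stirlingMain h)) := by
        rw [← Real.exp_add, ← Real.exp_add, stirlingMain_two_mul]
        ring_nf
    _ ≤ _ := by gcongr; exact exp_stirlingMain_le_factorial h

lemma inv_matchingCount_le_exp {m B : ℕ} (even : Even m) (hm : m ≤ B) :
    (matchingCount m)⁻¹ ≤ Real.exp (-(stirlingMain m / 2) + (1 + Real.log (B + 1))) := by
  obtain ⟨h, rfl⟩ := even.two_dvd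
  rw [matchingCount_two_mul, inv_div, div_le_iff₀ (by positivity)]
  calc Real.exp (h * Real.log 2) * h.factorial
      ≤ Real.exp (h * Real.log 2) * Real.exp (stirlingMain h + (1 + Real.log (B + 1))) := by
        gcongr; exact factorial_le_exp_stirlingMain (by omega)
    _ = Real.exp (-(stirlingMain (2 * h) / 2) + (1 + Real.log (B + 1))) *
        Real.exp (stirlingMain (2 * h)) := by
        rw [← Real.exp_add, ← Real.exp_add, stirlingMain_two_mul]
        ring_nf
    _ ≤ _ := by gcongr; exact exp_stirlingMain_le_factorial _

lemma factorial_div_prod_factorial_le_exp {ι : Type*} [Fintype ι] (f : ι → ℕ) {n B : ℕ}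
    (hn : n ≤ B) : n.factorial / (∏ i, ((f i).factorial : ℝ)) ≤
      Real.exp (stirlingMain n + (1 + Real.log (B + 1)) - ∑ i, stirlingMain (f i)) := by
  rw [Real.exp_sub, Real.exp_sum]
  gcongr
  · exact factorial_le_exp_stirlingMain hn
  · exact exp_stirlingMain_le_factorial _

lemma prod_factorial_le_exp {ι : Type*} (s : Finset ι) {f : ι → ℕ} {B : ℕ} (hf : ∀ i, f i ≤ B) :
    ∏ i ∈ s, ((f i).factorial : ℝ) ≤
      Real.exp (∑ i ∈ s, (stirlingMain (f i) + (1 + Real.log (B + 1)))) := by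
  rw [Real.exp_sum]
  gcongr
  exact factorial_le_exp_stirlingMain (hf _)

lemma prod_matchingCount_le_exp {ι : Type*} (s : Finset ι) {f : ι → ℕ} {B : ℕ}
    (even : ∀ i, Even (f i)) (hf : ∀ i, f i ≤ B) : ∏ i ∈ s, matchingCount (f i) ≤
      Real.exp (∑ i ∈ s, (stirlingMain (f i) / 2 + (1 + Real.log (B + 1)))) := by
  rw [Real.exp_sum]
  exact prod_le_prod (fun i _ => (matchingCount_pos _).le) fun i _ =>
    matchingCount_le_exp (even i) (hf i)

end Factorial

section RowBound

variable {p ν : ℕ} [NeZero p]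

lemma rowCount_zero_le_one (d : ℕ) (c : ZMod p → ℕ) : rowCount d 0 c ≤ 1 :=
  (card_filter_le _ _).trans (by simp)

lemma rowCount_le_exp (m : ℕ) {c : ZMod p → ℕ} {q : ZMod p → ℝ} (hq : q ∈ stdSimplex ℝ (ZMod p))
    (hcq : ∀ j, 0 < c j → 0 < q j) :
    rowCount (m + 2) ν c ≤ Real.exp (-(((m : ℝ) + 1) / (m + 2)) * ∑ j, c j * Real.log (q j) -
      ν * deficit m q / (m + 2)) := by
  have x_nonneg (j : ZMod p) : 0 ≤ q j ^ (((m : ℝ) + 1) / (m + 2)) := Real.rpow_nonneg (hq.1 j) _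
  have prod_eq : ∏ j, (q j ^ (((m : ℝ) + 1) / (m + 2))) ^ c j =
      Real.exp (((m : ℝ) + 1) / (m + 2) * ∑ j, c j * Real.log (q j)) := by
    rw [mul_sum, Real.exp_sum]
    refine prod_congr rfl fun j _ => ?_
    rcases (c j).eq_zero_or_pos with c_zero | c_pos
    · simp [c_zero]
    · rw [Real.rpow_def_of_pos (hcq j c_pos), ← Real.exp_nat_mul]
      ring_nf
  have zeroSumSum_le : zeroSumSum (m + 2) (fun a => q a ^ (((m : ℝ) + 1) / (m + 2))) ≤
      Real.exp (-(deficit m q / (m + 2))) :=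
    (zeroSumSum_rpow_le m hq).trans (Real.one_sub_le_exp_neg _)
  have row_le := (rowCount_mul_prod_pow_le (d := m + 2) (ν := ν) c x_nonneg).trans
    (pow_le_pow_left₀ (zeroSumSum_nonneg _ x_nonneg) zeroSumSum_le ν)
  rw [prod_eq, ← Real.exp_nat_mul, ← le_div_iff₀ (Real.exp_pos _), ← Real.exp_sub] at row_le
  exact row_le.trans_eq (by ring_nf)

end RowBound

section UpperPairs

variable {p : ℕ} {S : Finset (ZMod p)}

/-- The pairs `i < j` in `S`, compared through their representatives in `0, …, p - 1`. -/
def upperPairs (S : Finset (ZMod p)) : Finset (ZMod p × ZMod p) :=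
  {q ∈ S ×ˢ S | q.1.val < q.2.val}

@[to_additive]
lemma prod_prod_eq_prod_upperPairs_mul [NeZero p] {α : Type*} [CommMonoid α]
    (g : ZMod p → ZMod p → α) :
    ∏ i ∈ S, ∏ j ∈ S, g i j = (∏ q ∈ upperPairs S, g q.1 q.2 * g q.2 q.1) * ∏ i ∈ S, g i i := by
  have lower : ∏ q ∈ S ×ˢ S with q.2.val < q.1.val, g q.1 q.2 =
      ∏ q ∈ upperPairs S, g q.2 q.1 :=
    prod_equiv (Equiv.prodComm _ _) (by simp [upperPairs, and_comm]) (by simp)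
  have diagonal : ∏ q ∈ S ×ˢ S with q.1.val = q.2.val, g q.1 q.2 = ∏ i ∈ S, g i i := by
    simp_rw [prod_filter, prod_product, (ZMod.val_injective p).eq_iff]
    exact prod_congr rfl fun i hi => by simp [hi]
  rw [← prod_product' (f := g), prod_mul_distrib, ← lower, ← diagonal, upperPairs,
    ← prod_filter_mul_prod_filter_not (S ×ˢ S) (fun q : ZMod p × ZMod p => q.1.val < q.2.val),
    ← prod_filter_mul_prod_filter_not ((S ×ˢ S).filter fun q : ZMod p × ZMod p =>
      ¬q.1.val < q.2.val) (fun q => q.2.val < q.1.val), filter_filter, filter_filter, mul_assoc]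
  congr 3 <;> refine filter_congr fun q _ => ?_ <;> omega

lemma card_upperPairs_le : #(upperPairs S) ≤ #S ^ 2 :=
  (card_filter_le _ _).trans (by simp [sq])

end UpperPairs

section Matrices

variable {p d n : ℕ} [NeZero p] {M : ZMod p → ZMod p → ℕ}

/-- The number `n_i(M)` of words whose entries are counted by the `i`-th row of `M`. -/
def labelCount (d : ℕ) (M : ZMod p → ZMod p → ℕ) (i : ZMod p) : ℕ := (∑ j, M i j) / d

/-- The conditions defining `ℳ`, except for `n_0(M) < n` and the congruences modulo `p`. -/
structure IsAdmissible (d n : ℕ) (M : ZMod p → ZMod p → ℕ) : Prop where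
  symm : ∀ i j, M i j = M j i
  even_diag : ∀ i, Even (M i i)
  total : ∑ i, ∑ j, M i j = d * n
  dvd_row : ∀ i, d ∣ ∑ j, M i j

/-- The summand of the estimate, before normalization by the number `matchingCount (n * d)` of all
pairings. -/
noncomputable def weight (d n : ℕ) (M : ZMod p → ZMod p → ℕ) : ℝ :=
  n.factorial / (∏ i, ((labelCount d M i).factorial : ℝ)) *
    (∏ q ∈ upperPairs univ, ((M q.1 q.2).factorial : ℝ)) * (∏ i, matchingCount (M i i)) *
    ∏ i, (rowCount d (labelCount d M i) (M i) : ℝ)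

/-- The `i`-th row of `M`, normalized to a probability vector (or zero if the row vanishes). -/
noncomputable def rowLaw (d : ℕ) (M : ZMod p → ZMod p → ℕ) (i j : ZMod p) : ℝ :=
  M i j / (d * labelCount d M i)

/-- The row sums of `M`, normalized to a probability vector. -/
noncomputable def labelLaw (d n : ℕ) (M : ZMod p → ZMod p → ℕ) (i : ZMod p) : ℝ :=
  labelCount d M i / n

lemma rowLaw_nonneg (i j : ZMod p) : 0 ≤ rowLaw d M i j := by unfold rowLaw; positivity

namespace IsAdmissible

lemma row_sum (h : IsAdmissible d n M) (i : ZMod p) : ∑ j, M i j = d * labelCount d M i :=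
  (Nat.mul_div_cancel' (h.dvd_row i)).symm

lemma col_sum (h : IsAdmissible d n M) (j : ZMod p) : ∑ i, M i j = d * labelCount d M j := by
  rw [← h.row_sum]
  exact sum_congr rfl fun i _ => h.symm i j

lemma row_sum_cast (h : IsAdmissible d n M) (i : ZMod p) :
    ∑ j, (M i j : ℝ) = d * labelCount d M i := mod_cast h.row_sum i

lemma sum_labelCount (hd : 0 < d) (h : IsAdmissible d n M) : ∑ i, labelCount d M i = n := by
  refine Nat.eq_of_mul_eq_mul_left hd ?_
  rw [mul_sum, ← h.total]
  exact sum_congr rfl fun i _ => (h.row_sum i).symm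

lemma sum_labelCount_cast (hd : 0 < d) (h : IsAdmissible d n M) :
    ∑ i, (labelCount d M i : ℝ) = n := mod_cast h.sum_labelCount hd

lemma entry_le (h : IsAdmissible d n M) (i j : ZMod p) : M i j ≤ d * n :=
  calc M i j ≤ ∑ j, M i j := single_le_sum (fun _ _ => Nat.zero_le _) (mem_univ j)
    _ ≤ ∑ i, ∑ j, M i j :=
        single_le_sum (f := fun i => ∑ j, M i j) (fun _ _ => Nat.zero_le _) (mem_univ i)
    _ = d * n := h.total

lemma even_total (h : IsAdmissible d n M) : Even (n * d) := by
  have off_diagonal : ∑ q ∈ upperPairs univ, (M q.1 q.2 + M q.2 q.1) =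
      ∑ q ∈ upperPairs univ, (M q.1 q.2 + M q.1 q.2) :=
    sum_congr rfl fun q _ => by rw [h.symm q.2 q.1]
  rw [mul_comm, ← h.total, sum_sum_eq_sum_upperPairs_add, off_diagonal]
  exact (even_sum _ fun _ _ => Even.add_self _).add (even_sum _ fun i _ => h.even_diag i)

lemma labelCount_pos (h : IsAdmissible d n M) {i j : ZMod p} (hij : 0 < M i j) :
    0 < labelCount d M i := by
  have row_pos : 0 < ∑ j, M i j := hij.trans_le (single_le_sum (by simp) (mem_univ j))
  rw [h.row_sum] at row_pos
  exact pos_of_mul_pos_right row_pos (Nat.zero_le d)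

lemma labelCount_pos_right (h : IsAdmissible d n M) {i j : ZMod p} (hij : 0 < M i j) :
    0 < labelCount d M j := h.labelCount_pos (h.symm i j ▸ hij)

lemma entry_eq_zero (h : IsAdmissible d n M) {i : ZMod p} (hi : labelCount d M i = 0)
    (j : ZMod p) : M i j = 0 :=
  Nat.eq_zero_of_not_pos fun entry_pos => (h.labelCount_pos entry_pos).ne' hi

lemma rowLaw_mem_stdSimplex (hd : 0 < d) (h : IsAdmissible d n M) {i : ZMod p}
    (hi : 0 < labelCount d M i) : rowLaw d M i ∈ stdSimplex ℝ (ZMod p) := by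
  refine ⟨rowLaw_nonneg i, ?_⟩
  simp only [rowLaw]
  rw [← sum_div, h.row_sum_cast, div_self (by positivity)]

lemma labelLaw_mem_stdSimplex (hd : 0 < d) (hn : 0 < n) (h : IsAdmissible d n M) :
    labelLaw d n M ∈ stdSimplex ℝ (ZMod p) := by
  refine ⟨fun i => by unfold labelLaw; positivity, ?_⟩
  simp only [labelLaw]
  rw [← sum_div, h.sum_labelCount_cast hd, div_self (by positivity)]

lemma rowLaw_pos (hd : 0 < d) (h : IsAdmissible d n M) {i j : ZMod p} (hij : 0 < M i j) :
    0 < rowLaw d M i j := by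
  have := h.labelCount_pos hij
  unfold rowLaw
  positivity

lemma row_mul_log_le (hd : 0 < d) (hn : 0 < n) (h : IsAdmissible d n M) (i : ZMod p) :
    ∑ j, M i j * (Real.log (labelLaw d n M j) - Real.log (rowLaw d M i j)) ≤
      -(d * labelCount d M i * hellingerSq (rowLaw d M i) (labelLaw d n M)) := by
  rcases (labelCount d M i).eq_zero_or_pos with count_zero | count_pos
  · simp [count_zero, h.entry_eq_zero count_zero]
  have entry_eq (j : ZMod p) : (M i j : ℝ) = d * labelCount d M i * rowLaw d M i j := by
    unfold rowLaw
    field_simp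
  have dominated (j : ZMod p) (hj : 0 < rowLaw d M i j) : 0 < labelLaw d n M j := by
    have entry_pos : 0 < M i j := by
      rw [← Nat.cast_pos (α := ℝ), entry_eq]
      positivity
    have := h.labelCount_pos_right entry_pos
    unfold labelLaw
    positivity
  simp_rw [entry_eq, mul_assoc _ (rowLaw d M i _), ← mul_sum, ← mul_neg]
  gcongr
  exact sum_mul_log_sub_log_le_neg_hellingerSq (h.rowLaw_mem_stdSimplex hd count_pos)
    (h.labelLaw_mem_stdSimplex hd hn) dominated

lemma sum_mul_log_rowLaw (hd : 0 < d) (h : IsAdmissible d n M) :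
    ∑ i, ∑ j, M i j * Real.log (rowLaw d M i j) = ∑ i, ∑ j, M i j * Real.log (M i j) -
      d * ∑ i, labelCount d M i * Real.log (labelCount d M i) - d * n * Real.log d := by
  have entry (i j : ZMod p) : M i j * Real.log (rowLaw d M i j) =
      M i j * Real.log (M i j) - M i j * (Real.log d + Real.log (labelCount d M i)) := by
    rcases (M i j).eq_zero_or_pos with entry_zero | entry_pos
    · simp [entry_zero]
    · have := h.labelCount_pos entry_pos
      rw [rowLaw, Real.log_div (by positivity) (by positivity),
        Real.log_mul (by positivity) (by positivity), mul_sub]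
  simp_rw [entry, sum_sub_distrib, ← sum_mul, h.row_sum_cast, mul_add, sum_add_distrib, ← sum_mul,
    ← mul_sum, h.sum_labelCount_cast hd, mul_sum, mul_assoc]
  ring

lemma sum_mul_log_labelLaw (hd : 0 < d) (hn : 0 < n) (h : IsAdmissible d n M) :
    ∑ i, ∑ j, M i j * Real.log (labelLaw d n M j) =
      d * ∑ i, labelCount d M i * Real.log (labelCount d M i) - d * n * Real.log n := by
  have column (j : ZMod p) : ∑ i, M i j * Real.log (labelLaw d n M j) =
      d * (labelCount d M j * Real.log (labelCount d M j)) -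
        d * (labelCount d M j * Real.log n) := by
    rw [← sum_mul, ← Nat.cast_sum, h.col_sum]
    rcases (labelCount d M j).eq_zero_or_pos with count_zero | count_pos
    · simp [count_zero]
    · rw [labelLaw, Real.log_div (by positivity) (by positivity)]
      push_cast
      ring
  rw [sum_comm]
  simp_rw [column, sum_sub_distrib, ← mul_sum, ← sum_mul, h.sum_labelCount_cast hd, mul_assoc]

lemma stirlingMain_weight_eq (hd : 0 < d) (hn : 0 < n) (h : IsAdmissible d n M) :
    stirlingMain n - ∑ i, stirlingMain (labelCount d M i) +
      (∑ i, ∑ j, stirlingMain (M i j)) / 2 - stirlingMain (n * d) / 2 -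
      ((d : ℝ) - 1) / d * ∑ i, ∑ j, M i j * Real.log (rowLaw d M i j) =
    ((d : ℝ) - 2) / (2 * d) *
      ∑ i, ∑ j, M i j * (Real.log (labelLaw d n M j) - Real.log (rowLaw d M i j)) := by
  have total_cast : ∑ i, ∑ j, (M i j : ℝ) = d * n := mod_cast h.total
  simp_rw [mul_sub, sum_sub_distrib, h.sum_mul_log_labelLaw hd hn, h.sum_mul_log_rowLaw hd,
    stirlingMain, sum_sub_distrib, h.sum_labelCount_cast hd, total_cast]
  push_cast
  rw [Real.log_mul (by positivity) (by positivity)]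
  field_simp
  ring

end IsAdmissible

end Matrices

section Energy

variable {p m n : ℕ} [NeZero p] {M : ZMod p → ZMod p → ℕ}

/-- The exponential rate at which the weight of `M` decays: it is positive unless all row laws
agree with the label law and the latter has no deficit. The degree is `m + 2`. -/
noncomputable def energy (m n : ℕ) (M : ZMod p → ZMod p → ℕ) : ℝ :=
  ∑ i, labelCount (m + 2) M i * (m / 2 * hellingerSq (rowLaw (m + 2) M i) (labelLaw (m + 2) n M) +
    deficit m (rowLaw (m + 2) M i) / (m + 2))

namespace IsAdmissible

lemma rowCount_le_exp_rowLaw (h : IsAdmissible (m + 2) n M) (i : ZMod p) :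
    rowCount (m + 2) (labelCount (m + 2) M i) (M i) ≤ Real.exp (-(((m : ℝ) + 1) / (m + 2)) *
      ∑ j, M i j * Real.log (rowLaw (m + 2) M i j) -
      labelCount (m + 2) M i * deficit m (rowLaw (m + 2) M i) / (m + 2)) := by
  rcases (labelCount (m + 2) M i).eq_zero_or_pos with count_zero | count_pos
  · simpa [count_zero, h.entry_eq_zero count_zero] using rowCount_zero_le_one (m + 2) (M i)
  · exact rowCount_le_exp m (h.rowLaw_mem_stdSimplex (by omega) count_pos) fun j =>
      h.rowLaw_pos (by omega)

lemma stirlingMain_weight_le_neg_energy (hn : 0 < n) (h : IsAdmissible (m + 2) n M) :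
    stirlingMain n - ∑ i, stirlingMain (labelCount (m + 2) M i) +
      (∑ i, ∑ j, stirlingMain (M i j)) / 2 - stirlingMain (n * (m + 2)) / 2 +
      ∑ i, (-(((m : ℝ) + 1) / (m + 2)) * ∑ j, M i j * Real.log (rowLaw (m + 2) M i j) -
        labelCount (m + 2) M i * deficit m (rowLaw (m + 2) M i) / (m + 2)) ≤
      -energy m n M := by
  have identity := h.stirlingMain_weight_eq (by omega) hn
  have relative_entropy := mul_le_mul_of_nonneg_left
    (sum_le_sum fun i (_ : i ∈ univ) => h.row_mul_log_le (by omega) hn i)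
    (show (0 : ℝ) ≤ m / (2 * (m + 2)) by positivity)
  have energy_eq : energy m n M = -((m : ℝ) / (2 * (m + 2)) * ∑ i, -((m + 2 : ℕ) *
      labelCount (m + 2) M i * hellingerSq (rowLaw (m + 2) M i) (labelLaw (m + 2) n M))) +
      ∑ i, labelCount (m + 2) M i * deficit m (rowLaw (m + 2) M i) / (m + 2) := by
    rw [energy, mul_sum, ← sum_neg_distrib, ← sum_add_distrib]
    refine sum_congr rfl fun i _ => ?_
    push_cast
    field_simp
  push_cast at identity
  rw [add_sub_cancel_right, show (m : ℝ) + 2 - 1 = m + 1 by ring] at identity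
  rw [energy_eq, sum_sub_distrib, ← mul_sum]
  linarith

lemma sum_stirlingMain_eq {d : ℕ} (h : IsAdmissible d n M) :
    (∑ i, ∑ j, stirlingMain (M i j)) / 2 =
      ∑ q ∈ upperPairs univ, stirlingMain (M q.1 q.2) + ∑ i, stirlingMain (M i i) / 2 := by
  have off_diagonal : ∑ q ∈ upperPairs univ, (stirlingMain (M q.1 q.2) + stirlingMain (M q.2 q.1)) =
      2 * ∑ q ∈ upperPairs univ, stirlingMain (M q.1 q.2) := by
    rw [mul_sum]
    exact sum_congr rfl fun q _ => by rw [h.symm q.2 q.1, two_mul]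
  rw [sum_sum_eq_sum_upperPairs_add, off_diagonal, ← sum_div]
  ring

lemma weight_le_exp (hn : 0 < n) (h : IsAdmissible (m + 2) n M) :
    (matchingCount (n * (m + 2)))⁻¹ * weight (m + 2) n M ≤
      Real.exp (4 * p ^ 2 * (1 + Real.log (((m + 2) * n : ℕ) + 1)) - energy m n M) := by
  set err := 1 + Real.log (((m + 2) * n : ℕ) + 1)
  have err_nonneg : 0 ≤ err :=
    add_nonneg zero_le_one (Real.log_nonneg (le_add_of_nonneg_left (Nat.cast_nonneg _)))
  have normalization : (matchingCount (n * (m + 2)))⁻¹ ≤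
      Real.exp (-(stirlingMain (n * (m + 2)) / 2) + err) :=
    inv_matchingCount_le_exp h.even_total (mul_comm _ _).le
  have multinomial : n.factorial / (∏ i, ((labelCount (m + 2) M i).factorial : ℝ)) ≤
      Real.exp (stirlingMain n + err - ∑ i, stirlingMain (labelCount (m + 2) M i)) :=
    factorial_div_prod_factorial_le_exp _ (Nat.le_mul_of_pos_left n (by omega))
  have off_diagonal : ∏ q ∈ upperPairs univ, ((M q.1 q.2).factorial : ℝ) ≤
      Real.exp (∑ q ∈ upperPairs univ, (stirlingMain (M q.1 q.2) + err)) :=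
    prod_factorial_le_exp _ fun q => h.entry_le q.1 q.2
  have diagonal : ∏ i, matchingCount (M i i) ≤
      Real.exp (∑ i, (stirlingMain (M i i) / 2 + err)) :=
    prod_matchingCount_le_exp _ h.even_diag fun i => h.entry_le i i
  have rows := prod_le_prod (s := univ) (fun _ _ => Nat.cast_nonneg _) fun i _ =>
    h.rowCount_le_exp_rowLaw i
  rw [← Real.exp_sum] at rows
  have card_le : (#(upperPairs (univ : Finset (ZMod p))) : ℝ) + p + 2 ≤ 4 * p ^ 2 := by
    have := card_upperPairs_le (S := (univ : Finset (ZMod p)))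
    rw [card_univ, ZMod.card] at this
    have := NeZero.one_le (n := p)
    norm_cast
    nlinarith
  calc (matchingCount (n * (m + 2)))⁻¹ * weight (m + 2) n M
      ≤ Real.exp _ * (Real.exp _ * Real.exp _ * Real.exp _ * Real.exp _) := by
        have := matchingCount_pos (n * (m + 2))
        have := prod_nonneg fun i (_ : i ∈ univ) => (matchingCount_pos (M i i)).le
        unfold weight
        gcongr
    _ ≤ _ := by
        simp_rw [← Real.exp_add, sum_add_distrib, sum_const, nsmul_eq_mul, card_univ, ZMod.card]
        refine Real.exp_le_exp.mpr ?_
        linarith [h.stirlingMain_weight_le_neg_energy hn, h.sum_stirlingMain_eq,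
          mul_le_mul_of_nonneg_right card_le err_nonneg]

end IsAdmissible

end Energy

section Dense

/-- The law of the pair of labels at the two ends of a random edge. -/
noncomputable def edgeLaw {p : ℕ} (d n : ℕ) (M : ZMod p → ZMod p → ℕ) (x : ZMod p × ZMod p) : ℝ :=
  M x.1 x.2 / (d * n)

/-- The squared `ℓ²` distance from the edge law to the uniform law on `ZMod p × ZMod p`. -/
noncomputable def discrepancy {p : ℕ} [NeZero p] (d n : ℕ) (M : ZMod p → ZMod p → ℕ) : ℝ :=
  ∑ i, ∑ j, ((M i j : ℝ) / (d * n) - 1 / p ^ 2) ^ 2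

section Averages

variable {p m d n : ℕ} [NeZero p] {M : ZMod p → ZMod p → ℕ}

lemma energy_div_eq : energy m n M / n =
    m / 2 * ∑ i, labelLaw (m + 2) n M i *
      hellingerSq (rowLaw (m + 2) M i) (labelLaw (m + 2) n M) +
    (∑ i, labelLaw (m + 2) n M i * deficit m (rowLaw (m + 2) M i)) / (m + 2) := by
  rw [energy, mul_sum, sum_div, sum_div, ← sum_add_distrib]
  exact sum_congr rfl fun i _ => by unfold labelLaw; ring

lemma labelLaw_nonneg (i : ZMod p) : 0 ≤ labelLaw d n M i := by unfold labelLaw; positivity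

lemma sum_hellingerSq_le_energy :
    (m : ℝ) * ∑ i, labelLaw (m + 2) n M i *
      hellingerSq (rowLaw (m + 2) M i) (labelLaw (m + 2) n M) ≤ 2 * (energy m n M / n) := by
  have : 0 ≤ (∑ i, labelLaw (m + 2) n M i * deficit m (rowLaw (m + 2) M i)) / (m + 2) :=
    div_nonneg (sum_nonneg fun i _ => mul_nonneg (labelLaw_nonneg i)
      (deficit_nonneg m fun j => rowLaw_nonneg i j)) (by positivity)
  rw [energy_div_eq]
  linarith

lemma sum_deficit_le_energy :
    ∑ i, labelLaw (m + 2) n M i * deficit m (rowLaw (m + 2) M i) ≤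
      (m + 2) * (energy m n M / n) := by
  have : 0 ≤ ∑ i, labelLaw (m + 2) n M i *
      hellingerSq (rowLaw (m + 2) M i) (labelLaw (m + 2) n M) :=
    sum_nonneg fun i _ => mul_nonneg (labelLaw_nonneg i) (hellingerSq_nonneg _ _)
  rw [energy_div_eq, mul_add, mul_div_cancel₀ _ (by positivity)]
  exact le_add_of_nonneg_left (by positivity)

namespace IsAdmissible

lemma deficit_labelLaw_le_sum (hn : 0 < n) (h : IsAdmissible (m + 2) n M) :
    deficit m (labelLaw (m + 2) n M) ≤
      6 * ∑ i, labelLaw (m + 2) n M i * deficit m (rowLaw (m + 2) M i) +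
      (12 + 8 * m) * ∑ i, labelLaw (m + 2) n M i *
        hellingerSq (rowLaw (m + 2) M i) (labelLaw (m + 2) n M) := by
  have labelLaw_mem := h.labelLaw_mem_stdSimplex (by omega) hn
  rw [mul_sum, mul_sum, ← sum_add_distrib, ← one_mul (deficit m _), ← labelLaw_mem.2, sum_mul]
  refine sum_le_sum fun i _ => ?_
  rcases (labelCount (m + 2) M i).eq_zero_or_pos with count_zero | count_pos
  · simp [labelLaw, count_zero]
  · have row_le := mul_le_mul_of_nonneg_left (deficit_le_of_hellingerSq m
      (h.rowLaw_mem_stdSimplex (by omega) count_pos) labelLaw_mem) (labelLaw_mem.1 i)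
    linarith

lemma deficit_labelLaw_le_energy (hn : 0 < n) (h : IsAdmissible (m + 3) n M) :
    deficit (m + 1) (labelLaw (m + 3) n M) ≤ (6 * m + 58) * (energy (m + 1) n M / n) := by
  have distances := sum_hellingerSq_le_energy (m := m + 1) (n := n) (M := M)
  have deficits := sum_deficit_le_energy (m := m + 1) (n := n) (M := M)
  have average := h.deficit_labelLaw_le_sum hn
  have distances_nonneg : 0 ≤ ∑ i, labelLaw (m + 3) n M i *
      hellingerSq (rowLaw (m + 3) M i) (labelLaw (m + 3) n M) :=
    sum_nonneg fun i _ => mul_nonneg (labelLaw_nonneg i) (hellingerSq_nonneg _ _)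
  push_cast [add_assoc] at *
  norm_num at *
  nlinarith [mul_nonneg (Nat.cast_nonneg (α := ℝ) m) distances_nonneg]

lemma edgeLaw_eq (hd : 0 < d) (h : IsAdmissible d n M) :
    edgeLaw d n M = fun x => labelLaw d n M x.1 * rowLaw d M x.1 x.2 := by
  funext x
  rcases (labelCount d M x.1).eq_zero_or_pos with count_zero | count_pos
  · simp [edgeLaw, labelLaw, count_zero, h.entry_eq_zero count_zero]
  · unfold edgeLaw labelLaw rowLaw
    field_simp

lemma hellingerSq_edgeLaw_le (hd : 0 < d) (hn : 0 < n) (h : IsAdmissible d n M) :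
    hellingerSq (edgeLaw d n M) (fun _ => 1 / p ^ 2) ≤
      3 * ∑ i, labelLaw d n M i * hellingerSq (rowLaw d M i) (labelLaw d n M) +
      6 * hellingerSq (labelLaw d n M) (uniform (ZMod p)) := by
  have joint := hellingerSq_joint_le (h.labelLaw_mem_stdSimplex hd hn)
    (uniform_mem_stdSimplex (α := ZMod p)) (rowLaw d M)
  rw [← h.edgeLaw_eq hd] at joint
  convert joint using 3
  simp [uniform, sq]

lemma hellingerSq_edgeLaw_le_energy (hn : 0 < n) (h : IsAdmissible (m + 3) n M) :
    hellingerSq (edgeLaw (m + 3) n M) (fun _ => 1 / p ^ 2) ≤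
      6 * (energy (m + 1) n M / n) + 6 * hellingerSq (labelLaw (m + 3) n M) (uniform (ZMod p)) := by
  have distances := sum_hellingerSq_le_energy (m := m + 1) (n := n) (M := M)
  have distances_nonneg : 0 ≤ ∑ i, labelLaw (m + 3) n M i *
      hellingerSq (rowLaw (m + 3) M i) (labelLaw (m + 3) n M) :=
    sum_nonneg fun i _ => mul_nonneg (labelLaw_nonneg i) (hellingerSq_nonneg _ _)
  push_cast at distances
  linarith [h.hellingerSq_edgeLaw_le (by omega) hn, mul_nonneg m.cast_nonneg distances_nonneg]

end IsAdmissible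

lemma discrepancy_le_of_hellingerSq_lt
    (hM : hellingerSq (edgeLaw d n M) (fun _ => 1 / p ^ 2) < 1 / p ^ 2) :
    discrepancy d n M ≤ 9 / p ^ 2 * hellingerSq (edgeLaw d n M) (fun _ => 1 / p ^ 2) := by
  have pointwise := sum_sub_sq_le_of_hellingerSq_lt (fun x => by unfold edgeLaw; positivity) hM
  rw [Fintype.sum_prod_type, mul_one_div] at pointwise
  exact pointwise

lemma discrepancy_nonneg : 0 ≤ discrepancy d n M :=
  sum_nonneg fun _ _ => sum_nonneg fun _ _ => sq_nonneg _

lemma le_or_discrepancy_le {L e : ℝ} (hL : 0 < L)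
    (hM : hellingerSq (edgeLaw d n M) (fun _ => 1 / p ^ 2) ≤ L * e) :
    1 / (9 * L) ≤ p ^ 2 * e ∨ 1 / (9 * L) * (p ^ 2 * discrepancy d n M) ≤ e := by
  have p_pos : (0 : ℝ) < p := mod_cast NeZero.pos p
  rcases le_or_gt (1 / (p : ℝ) ^ 2) (hellingerSq (edgeLaw d n M) fun _ => 1 / p ^ 2) with
    edge_far | edge_near
  · left
    have density := edge_far.trans hM
    rw [div_le_iff₀ (by positivity)] at density ⊢
    linarith
  · right
    calc 1 / (9 * L) * (p ^ 2 * discrepancy d n M)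
        ≤ 1 / (9 * L) * (p ^ 2 * (9 / p ^ 2 * (L * e))) := by
          gcongr
          exact (discrepancy_le_of_hellingerSq_lt edge_near).trans (by gcongr)
      _ = e := by field_simp

end Averages

/-- `M` is dense if a proportion at least `c₀ / p ^ 2` of the words is not counted by the `0`-th
row; otherwise almost all of its mass sits at the entry `(0, 0)`. -/
def IsDense {p : ℕ} [NeZero p] (c₀ : ℝ) (d n : ℕ) (M : ZMod p → ZMod p → ℕ) : Prop :=
  c₀ * n ≤ p ^ 2 * (n - labelCount d M 0)

lemma exists_energy_lower_bound (m : ℕ) {c₀ : ℝ} (hc₀ : 0 < c₀) : ∃ c : ℝ, 0 < c ∧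
    ∀ (p : ℕ) [Fact p.Prime], ¬p ∣ m + 3 → ∀ n : ℕ, 0 < n → ∀ M : ZMod p → ZMod p → ℕ,
      IsAdmissible (m + 3) n M → IsDense c₀ (m + 3) n M →
      c ≤ p ^ 2 * (energy (m + 1) n M / n) ∨
        c * (p ^ 2 * discrepancy (m + 3) n M) ≤ energy (m + 1) n M / n := by
  obtain ⟨c, c_pos, trichotomy⟩ := exists_deficit_trichotomy m
  set K : ℝ := 6 * m + 58
  set L : ℝ := 6 + 6 * (K / c)
  have K_pos : 0 < K := by positivity
  refine ⟨min (min (c / K) (c * c₀ / K)) (1 / (9 * L)), by positivity, ?_⟩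
  intro p _ hpm n hn M h far
  have deficit_le := h.deficit_labelLaw_le_energy hn
  set e := energy (m + 1) n M / n
  rcases trichotomy p hpm _ (h.labelLaw_mem_stdSimplex (by omega) hn) with
    spread | concentrated | near_uniform
  · refine .inl (((min_le_left _ _).trans (min_le_left _ _)).trans ?_)
    rw [div_le_iff₀ K_pos]
    linarith [mul_le_mul_of_nonneg_left deficit_le (sq_nonneg (p : ℝ))]
  · refine .inl (((min_le_left _ _).trans (min_le_right _ _)).trans ?_)
    have far_law : c₀ ≤ p ^ 2 * (1 - labelLaw (m + 3) n M 0) := by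
      rw [← mul_le_mul_iff_left₀ (Nat.cast_pos (α := ℝ).mpr hn)]
      exact far.trans_eq (by unfold labelLaw; field_simp)
    rw [div_le_iff₀ K_pos]
    calc c * c₀ ≤ c * (p ^ 2 * (1 - labelLaw (m + 3) n M 0)) := by gcongr
      _ = p ^ 2 * (c * (1 - labelLaw (m + 3) n M 0)) := by ring
      _ ≤ p ^ 2 * (K * e) :=
        mul_le_mul_of_nonneg_left (concentrated.trans deficit_le) (sq_nonneg _)
      _ = p ^ 2 * e * K := by ring
  · have label_le : hellingerSq (labelLaw (m + 3) n M) (uniform (ZMod p)) ≤ K / c * e := by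
      rw [div_mul_eq_mul_div, le_div_iff₀ c_pos, mul_comm]
      exact near_uniform.trans deficit_le
    have edge_le : hellingerSq (edgeLaw (m + 3) n M) (fun _ => 1 / p ^ 2) ≤ L * e :=
      (h.hellingerSq_edgeLaw_le_energy hn).trans (by linarith)
    have c_le := min_le_right (min (c / K) (c * c₀ / K)) (1 / (9 * L))
    refine (le_or_discrepancy_le (by positivity) edge_le).imp c_le.trans fun bound => ?_
    exact (mul_le_mul_of_nonneg_right c_le
      (mul_nonneg (sq_nonneg _) discrepancy_nonneg)).trans bound

lemma card_le_exp_of_entry_le {p : ℕ} [NeZero p] {B : ℕ} {T : Finset (ZMod p → ZMod p → ℕ)}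
    (hT : ∀ M ∈ T, ∀ i j, M i j ≤ B) : (#T : ℝ) ≤ Real.exp (p ^ 2 * Real.log (B + 1)) := by
  have subset : T ⊆ Fintype.piFinset fun _ => Fintype.piFinset fun _ => range (B + 1) := by
    intro M hM
    simpa [Fintype.mem_piFinset, Nat.lt_succ_iff] using hT M hM
  have card_le : #T ≤ (B + 1) ^ p ^ 2 := (card_le_card subset).trans (by simp [← pow_mul, sq])
  calc (#T : ℝ) ≤ (B + 1) ^ p ^ 2 := mod_cast card_le
    _ = Real.exp (p ^ 2 * Real.log (B + 1)) := by
        rw [← Nat.cast_pow p, Real.exp_nat_mul, Real.exp_log (by positivity)]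

lemma one_add_log_mul_add_one_le {d n : ℕ} (hd : 0 < d) (hn : 6 * d ≤ n) :
    1 + Real.log ((d * n : ℕ) + 1) ≤ 3 * Real.log n := by
  have n_pos : (0 : ℝ) < n := mod_cast (show 0 < n by omega)
  have hn' : 6 * (d : ℝ) ≤ n := mod_cast hn
  have d_ge : (1 : ℝ) ≤ d := mod_cast hd
  rw [← Real.exp_le_exp, Real.exp_add, Real.exp_log (by positivity), mul_comm 3,
    Real.exp_mul, Real.exp_log n_pos, show (3 : ℝ) = (3 : ℕ) by rfl, Real.rpow_natCast]
  push_cast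
  calc Real.exp 1 * (d * n + 1) ≤ 3 * (d * n + d * n) := by
        gcongr
        · exact Real.exp_one_lt_three.le
        · nlinarith
    _ ≤ n ^ 2 := by nlinarith
    _ ≤ n ^ 3 := pow_le_pow_right₀ (by linarith) (by norm_num)

lemma sum_weight_le_of_le_energy {p m n : ℕ} [NeZero p] (k : ℕ) (hn : 6 * (m + 2) ≤ n)
    {T : Finset (ZMod p → ZMod p → ℕ)}
    (hT : ∀ M ∈ T, IsAdmissible (m + 2) n M ∧ (k + 15) * (p ^ 2 * Real.log n) ≤ energy m n M) :
    ∑ M ∈ T, (matchingCount (n * (m + 2)))⁻¹ * weight (m + 2) n M ≤ 1 / n ^ k := by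
  have n_pos : (0 : ℝ) < n := mod_cast (show 0 < n by omega)
  set ℓ := Real.log n with hℓ
  have err_le : 1 + Real.log (((m + 2) * n : ℕ) + 1) ≤ 3 * ℓ :=
    one_add_log_mul_add_one_le (by omega) hn
  have p_sq_ge : (1 : ℝ) ≤ p ^ 2 := one_le_pow₀ (mod_cast NeZero.one_le)
  have ℓ_nonneg : 0 ≤ ℓ := Real.log_natCast_nonneg n
  have card_le : (#T : ℝ) ≤ Real.exp (3 * (p ^ 2 * ℓ)) := by
    refine (card_le_exp_of_entry_le fun M hM => (hT M hM).1.entry_le).trans ?_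
    rw [mul_left_comm]
    gcongr
    linarith
  have term_le (M) (hM : M ∈ T) : (matchingCount (n * (m + 2)))⁻¹ * weight (m + 2) n M ≤
      Real.exp (-((k + 3) * (p ^ 2 * ℓ))) := by
    refine ((hT M hM).1.weight_le_exp (by omega)).trans (Real.exp_le_exp.mpr ?_)
    have := mul_le_mul_of_nonneg_left err_le (show (0 : ℝ) ≤ 4 * p ^ 2 by positivity)
    linarith [(hT M hM).2]
  calc ∑ M ∈ T, (matchingCount (n * (m + 2)))⁻¹ * weight (m + 2) n M
      ≤ #T * Real.exp (-((k + 3) * (p ^ 2 * ℓ))) := by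
        rw [← nsmul_eq_mul]
        exact sum_le_card_nsmul _ _ _ term_le
    _ ≤ Real.exp (3 * (p ^ 2 * ℓ)) * Real.exp (-((k + 3) * (p ^ 2 * ℓ))) := by gcongr
    _ ≤ Real.exp (-(k * ℓ)) := by
        rw [← Real.exp_add]
        gcongr
        nlinarith [mul_nonneg k.cast_nonneg ℓ_nonneg]
    _ = 1 / n ^ k := by
        rw [Real.exp_neg, one_div, hℓ, Real.exp_nat_mul, Real.exp_log n_pos]

lemma exists_sum_weight_le_of_isDense (m : ℕ) {c₀ : ℝ} (hc₀ : 0 < c₀) :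
    ∃ b : ℝ, 0 < b ∧ ∃ c : ℝ, 0 < c ∧
      ∀ (p : ℕ) [Fact p.Prime], ¬p ∣ m + 3 → ∀ n : ℕ, 6 * (m + 3) ≤ n →
        p ^ 4 * Real.log n ≤ c * n → ∀ T : Finset (ZMod p → ZMod p → ℕ),
          (∀ M ∈ T, IsAdmissible (m + 3) n M ∧ IsDense c₀ (m + 3) n M ∧
            b * Real.log n / n ≤ discrepancy (m + 3) n M) →
          ∑ M ∈ T, (matchingCount (n * (m + 3)))⁻¹ * weight (m + 3) n M ≤ 1 / n ^ (m + 1) := by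
  obtain ⟨c, c_pos, energy_bound⟩ := exists_energy_lower_bound m hc₀
  refine ⟨(m + 16) / c, by positivity, c / (m + 16), by positivity, ?_⟩
  intro p _ hpm n hn hpn T hT
  have n_pos : (0 : ℝ) < n := mod_cast (show 0 < n by omega)
  refine sum_weight_le_of_le_energy (m + 1) hn fun M hM => ?_
  obtain ⟨admissible, dense, far⟩ := hT M hM
  refine ⟨admissible, ?_⟩
  push_cast
  rcases energy_bound p hpm n (by omega) M admissible dense with large | large
  · have p_pos : (0 : ℝ) < p := mod_cast NeZero.pos p
    rw [mul_div_assoc', le_div_iff₀ n_pos] at large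
    rw [div_mul_eq_mul_div, le_div_iff₀ (by positivity)] at hpn
    refine le_of_mul_le_mul_left (a := (p : ℝ) ^ 2) ?_ (by positivity)
    linarith
  · rw [le_div_iff₀ n_pos] at large
    calc ((m : ℝ) + 1 + 15) * (p ^ 2 * Real.log n)
        = c * (p ^ 2 * ((m + 16) / c * Real.log n / n)) * n := by field_simp; ring
      _ ≤ c * (p ^ 2 * discrepancy (m + 3) n M) * n := by gcongr
      _ ≤ energy (m + 1) n M := large

end Dense

section PoissonSum

lemma sum_prod_pow_div_factorial_le_exp {ι α : Type*} {Q : Finset ι} {T : Finset α}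
    {κ : α → ι → ℕ} {y : ι → ℝ} (hκ : ∀ a ∈ T, ∀ b ∈ T, (∀ q ∈ Q, κ a q = κ b q) → a = b)
    (hy : ∀ q ∈ Q, 0 ≤ y q) :
    ∑ a ∈ T, ∏ q ∈ Q, y q ^ κ a q / (κ a q).factorial ≤ Real.exp (∑ q ∈ Q, y q) := by
  classical
  set B := T.sup fun a => ∑ q ∈ Q, κ a q
  set f : α → (q : ι) → q ∈ Q → ℕ := fun a q _ => κ a q
  have injective : Set.InjOn f T := fun a ha b hb hab =>
    hκ a ha b hb fun q hq => congrFun₂ hab q hq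
  have subset : T.image f ⊆ Q.pi fun _ => range (B + 1) := by
    simp only [image_subset_iff, mem_pi, mem_range, Nat.lt_succ_iff]
    intro a ha q hq
    exact (single_le_sum (f := κ a) (fun _ _ => Nat.zero_le _) hq).trans
      (le_sup (f := fun a => ∑ q ∈ Q, κ a q) ha)
  calc ∑ a ∈ T, ∏ q ∈ Q, y q ^ κ a q / (κ a q).factorial
      = ∑ k ∈ T.image f, ∏ q ∈ Q.attach, y q ^ k q q.2 / (k q q.2).factorial := by
        rw [sum_image injective]
        exact sum_congr rfl fun a _ => (prod_attach Q _).symm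
    _ ≤ ∑ k ∈ Q.pi fun _ => range (B + 1), ∏ q ∈ Q.attach, y q ^ k q q.2 / (k q q.2).factorial :=
        sum_le_sum_of_subset_of_nonneg subset fun k _ _ => prod_nonneg fun q _ =>
          div_nonneg (pow_nonneg (hy q q.2) _) (by positivity)
    _ = ∏ q ∈ Q, ∑ k ∈ range (B + 1), y q ^ k / k.factorial := by rw [prod_sum]
    _ ≤ ∏ q ∈ Q, Real.exp (y q) :=
        prod_le_prod (fun q hq => sum_nonneg fun k _ => div_nonneg (pow_nonneg (hy q hq) _)
          (by positivity)) fun q hq => Real.sum_le_exp_of_nonneg (hy q hq) _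
    _ = Real.exp (∑ q ∈ Q, y q) := (Real.exp_sum Q y).symm

end PoissonSum

lemma matchingCount_two_mul_succ (h : ℕ) :
    matchingCount (2 * (h + 1)) = (2 * h + 1) * matchingCount (2 * h) := by
  rw [matchingCount, matchingCount, Nat.mul_div_cancel_left _ two_pos,
    Nat.mul_div_cancel_left _ two_pos, mul_add_one, Nat.factorial_succ, Nat.factorial_succ (2 * h),
    Nat.factorial_succ h, pow_succ]
  push_cast
  field_simp
  ring

lemma pow_mul_matchingCount_le {x : ℝ} {h : ℕ} (hx : 0 ≤ x) (hxh : x ≤ 2 * h) (t : ℕ) :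
    x ^ t * matchingCount (2 * h) ≤ matchingCount (2 * (h + t)) := by
  induction t with
  | zero => simp
  | succ t ih =>
    calc x ^ (t + 1) * matchingCount (2 * h) = x * (x ^ t * matchingCount (2 * h)) := by ring
      _ ≤ (2 * (h + t : ℕ) + 1) * matchingCount (2 * (h + t)) := by
          gcongr
          · exact mul_nonneg (pow_nonneg hx t) (matchingCount_pos _).le
          · push_cast
            linarith
      _ = matchingCount (2 * (h + (t + 1))) := (matchingCount_two_mul_succ _).symm

section ZeroSum

variable {G : Type*} [AddCommGroup G] [Fintype G] [DecidableEq G]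

lemma zeroSumSum_le_pow (d : ℕ) {x : G → ℝ} (hx : ∀ j, 0 ≤ x j) :
    zeroSumSum d x ≤ (∑ j, x j) ^ d := by
  rw [Fintype.sum_pow]
  exact sum_le_sum_of_subset_of_nonneg (filter_subset _ _) fun _ _ _ => prod_nonneg fun _ _ => hx _

-- The words with a single nonzero letter do not have sum zero.
lemma zeroSumSum_add_le_pow (d : ℕ) {x : G → ℝ} (hx : ∀ j, 0 ≤ x j) (hx₀ : x 0 = 1) :
    zeroSumSum d x + d * ∑ j ∈ {0}ᶜ, x j ≤ (∑ j, x j) ^ d := by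
  set singleLetter : Fin d × G → Fin d → G := fun w => Pi.single w.1 w.2
  have injective : Set.InjOn singleLetter
      ((univ ×ˢ {0}ᶜ : Finset (Fin d × G)) : Set (Fin d × G)) := by
    rintro ⟨r, j⟩ hj ⟨s, k⟩ _ h
    have j_ne : j ≠ 0 := by simpa using hj
    obtain rfl : r = s := by
      by_contra hrs
      exact j_ne (by simpa [singleLetter, hrs] using congrFun h r)
    exact congrArg (Prod.mk r) (Pi.single_injective r h)
  have letter (w : Fin d × G) : ∏ t, x (singleLetter w t) = x w.2 := by
    rw [Fintype.prod_eq_single w.1 (fun t ht => by simp [singleLetter, ht, hx₀])]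
    simp [singleLetter]
  have mass : (d : ℝ) * ∑ j ∈ {0}ᶜ, x j =
      ∑ a ∈ (univ ×ˢ {0}ᶜ).image singleLetter, ∏ r, x (a r) := by
    rw [sum_image injective, sum_product]
    simp_rw [letter]
    simp
  rw [Fintype.sum_pow, mass, zeroSumSum,
    ← sum_filter_add_sum_filter_not univ fun a : Fin d → G => ∑ r, a r = 0]
  gcongr
  · exact fun _ _ _ => prod_nonneg fun _ _ => hx _
  · simp [image_subset_iff, singleLetter]

lemma one_add_pow_le {x : ℝ} (hx₀ : 0 ≤ x) (hx₁ : x ≤ 1) (d : ℕ) :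
    (1 + x) ^ d ≤ 1 + d * x + 3 ^ d * x ^ 2 := by
  induction d with
  | zero => simp [sq_nonneg]
  | succ d ih =>
    have d_le : (d : ℝ) ≤ 3 ^ d := mod_cast (Nat.lt_pow_self (by norm_num)).le
    calc (1 + x) ^ (d + 1) ≤ (1 + d * x + 3 ^ d * x ^ 2) * (1 + x) := by
          rw [pow_succ]
          gcongr
      _ = 1 + (d + 1) * x + (d + 3 ^ d + 3 ^ d * x) * x ^ 2 := by ring
      _ ≤ 1 + (d + 1) * x + (3 ^ d + 3 ^ d + 3 ^ d * 1) * x ^ 2 := by gcongr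
      _ = 1 + ((d + 1 : ℕ) : ℝ) * x + 3 ^ (d + 1) * x ^ 2 := by
          push_cast
          ring

lemma zeroSumSum_le_one_add_sq (d : ℕ) {x : G → ℝ} (hx : ∀ j, 0 ≤ x j) (hx₀ : x 0 = 1)
    (hx₁ : ∑ j ∈ {0}ᶜ, x j ≤ 1) :
    zeroSumSum d x ≤ 1 + 3 ^ d * (∑ j ∈ {0}ᶜ, x j) ^ 2 := by
  have total := zeroSumSum_add_le_pow d hx hx₀
  rw [Fintype.sum_eq_add_sum_compl 0, hx₀] at total
  linarith [one_add_pow_le (sum_nonneg fun j _ => hx j) hx₁ d]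

end ZeroSum

lemma rowCount_mul_prod_factorial_le {p d ν : ℕ} [NeZero p] {m : ZMod p → ℕ}
    (hm : ∑ j, m j = d * ν) :
    (rowCount d ν m * ∏ j, (m j).factorial : ℝ) ≤ (d * ν : ℝ) ^ ∑ j, m j := by
  have m_nonneg (j : ZMod p) : (0 : ℝ) ≤ m j := Nat.cast_nonneg _
  calc (rowCount d ν m * ∏ j, (m j).factorial : ℝ)
      ≤ rowCount d ν m * ∏ j, (m j : ℝ) ^ m j := by
        gcongr
        exact mod_cast prod_le_prod' fun j _ => Nat.factorial_le_pow (m j)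
    _ ≤ zeroSumSum d (fun j => (m j : ℝ)) ^ ν := rowCount_mul_prod_pow_le m m_nonneg
    _ ≤ ((∑ j, (m j : ℝ)) ^ d) ^ ν := by
        gcongr
        · exact zeroSumSum_nonneg d m_nonneg
        · exact zeroSumSum_le_pow d m_nonneg
    _ = (d * ν : ℝ) ^ ∑ j, m j := by
        rw [← pow_mul, hm]
        congr 1
        exact mod_cast hm

section Edges

variable {p : ℕ} {S : Finset (ZMod p)} {M : ZMod p → ZMod p → ℕ}

/-- The unordered pairs `{i, j}` in `S`: pairs `i < j` on the left, loops `i = j` on the right. -/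
def edgeClasses (S : Finset (ZMod p)) : Finset ((ZMod p × ZMod p) ⊕ ZMod p) :=
  (upperPairs S).disjSum S

/-- The multiplicity of each unordered pair in the multigraph with adjacency matrix `M`, in which a
loop contributes `2` to the diagonal. -/
def edgeCount (M : ZMod p → ZMod p → ℕ) : (ZMod p × ZMod p) ⊕ ZMod p → ℕ :=
  Sum.elim (fun q => M q.1 q.2) fun i => M i i / 2

/-- The expected multiplicity of each unordered pair in a Poisson multigraph with vertex weights
`ν`. -/
noncomputable def edgeIntensity (μ : ℝ) (ν : ZMod p → ℕ) : (ZMod p × ZMod p) ⊕ ZMod p → ℝ :=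
  Sum.elim (fun q => μ * (ν q.1 * ν q.2)) fun i => μ * ν i ^ 2 / 2

lemma edgeIntensity_nonneg {μ : ℝ} (hμ : 0 ≤ μ) (ν : ZMod p → ℕ) (q : (ZMod p × ZMod p) ⊕ ZMod p) :
    0 ≤ edgeIntensity μ ν q := by
  rcases q with q | i <;> simp only [edgeIntensity, Sum.elim_inl, Sum.elim_inr] <;> positivity

lemma prod_edgeIntensity_pow_div_factorial_nonneg {μ : ℝ} (hμ : 0 ≤ μ) (ν : ZMod p → ℕ)
    (κ : (ZMod p × ZMod p) ⊕ ZMod p → ℕ) :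
    0 ≤ ∏ q ∈ edgeClasses S, edgeIntensity μ ν q ^ κ q / (κ q).factorial :=
  prod_nonneg fun q _ =>
    div_nonneg (pow_nonneg (edgeIntensity_nonneg hμ ν q) _) (Nat.cast_nonneg _)

lemma prod_upperPairs_univ [NeZero p] {R : Type*} [CommMonoid R] (g : ZMod p × ZMod p → R) :
    ∏ q ∈ upperPairs univ, g q =
      (∏ j ∈ {0}ᶜ, g (0, j)) * ∏ q ∈ upperPairs ({0}ᶜ : Finset (ZMod p)), g q := by
  have disjoint : Disjoint (({0} : Finset (ZMod p)) ×ˢ {0}ᶜ) (upperPairs {0}ᶜ) := by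
    simp +contextual [disjoint_left, upperPairs]
  have decomposition : upperPairs (univ : Finset (ZMod p)) =
      ({0} : Finset (ZMod p)) ×ˢ {0}ᶜ ∪ upperPairs {0}ᶜ := by
    ext ⟨i, j⟩
    by_cases hi : i = 0 <;> by_cases hj : j = 0 <;>
      simp [upperPairs, hi, hj, Nat.pos_iff_ne_zero, eq_comm (a := (0 : ZMod p))]
  rw [decomposition, prod_union disjoint, prod_product, prod_singleton]

lemma sum_edgeIntensity [NeZero p] (μ : ℝ) (ν : ZMod p → ℕ) :
    ∑ q ∈ edgeClasses S, edgeIntensity μ ν q = μ * (∑ i ∈ S, (ν i : ℝ)) ^ 2 / 2 := by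
  rw [edgeClasses, sum_disjSum, sq, sum_mul_sum, sum_sum_eq_sum_upperPairs_add, mul_add, add_div,
    mul_sum, mul_sum, sum_div, sum_div]
  simp only [edgeIntensity, Sum.elim_inl, Sum.elim_inr]
  congr 1 <;> exact sum_congr rfl fun _ _ => by ring

lemma two_mul_sum_edgeCount [NeZero p] (symm : ∀ i j, M i j = M j i) (even : ∀ i, Even (M i i)) :
    2 * ∑ q ∈ edgeClasses S, edgeCount M q = ∑ i ∈ S, ∑ j ∈ S, M i j := by
  rw [edgeClasses, sum_disjSum, sum_sum_eq_sum_upperPairs_add, mul_add, mul_sum, mul_sum]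
  simp only [edgeCount, Sum.elim_inl, Sum.elim_inr]
  congr 1
  · exact sum_congr rfl fun q _ => by rw [symm q.2 q.1, two_mul]
  · exact sum_congr rfl fun i _ => Nat.two_mul_div_two_of_even (even i)

lemma prod_edgeIntensity_pow_mul_prod_factorial [NeZero p] (symm : ∀ i j, M i j = M j i)
    (even : ∀ i, Even (M i i)) (μ : ℝ) (ν : ZMod p → ℕ) :
    (∏ q ∈ edgeClasses S, edgeIntensity μ ν q ^ edgeCount M q / (edgeCount M q).factorial) *
        ∏ i ∈ S, ∏ j ∈ S, ((M i j).factorial : ℝ) =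
      μ ^ (∑ q ∈ edgeClasses S, edgeCount M q) * (∏ i ∈ S, ∏ j ∈ S, (ν i : ℝ) ^ M i j) *
        ((∏ q ∈ upperPairs S, ((M q.1 q.2).factorial : ℝ)) * ∏ i ∈ S, matchingCount (M i i)) := by
  have pair (q : ZMod p × ZMod p) : (μ * (ν q.1 * ν q.2)) ^ M q.1 q.2 / (M q.1 q.2).factorial *
      ((M q.1 q.2).factorial * (M q.2 q.1).factorial) =
      μ ^ M q.1 q.2 * (ν q.1 ^ M q.1 q.2 * ν q.2 ^ M q.2 q.1) * (M q.1 q.2).factorial := by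
    rw [symm q.2 q.1, mul_pow, mul_pow]
    field_simp
  have loop (i : ZMod p) : (μ * (ν i : ℝ) ^ 2 / 2) ^ (M i i / 2) / (M i i / 2).factorial *
      (M i i).factorial = μ ^ (M i i / 2) * ν i ^ M i i * matchingCount (M i i) := by
    obtain ⟨h, hM⟩ := (even i).two_dvd
    rw [hM, matchingCount, Nat.mul_div_cancel_left _ two_pos, pow_mul, div_pow, mul_pow]
    field_simp
  rw [← prod_pow_eq_pow_sum, edgeClasses, prod_disjSum, prod_disjSum,
    prod_prod_eq_prod_upperPairs_mul, prod_prod_eq_prod_upperPairs_mul, mul_mul_mul_comm]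
  simp only [edgeIntensity, edgeCount, Sum.elim_inl, Sum.elim_inr]
  rw [mul_mul_mul_comm (∏ q ∈ upperPairs S, μ ^ M q.1 q.2),
    mul_mul_mul_comm _ _ (∏ q ∈ upperPairs S, ((M q.1 q.2).factorial : ℝ))]
  simp only [← prod_mul_distrib, pair, loop]

end Edges

namespace IsAdmissible

variable {p d n : ℕ} [NeZero p] {M : ZMod p → ZMod p → ℕ}

lemma entry_zero_add_sum_compl (h : IsAdmissible d n M) (i : ZMod p) :
    M i 0 + ∑ j ∈ {0}ᶜ, M i j = d * labelCount d M i := by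
  rw [← h.row_sum, Fintype.sum_eq_add_sum_compl 0]

lemma labelCount_zero_add_sum_compl (hd : 0 < d) (h : IsAdmissible d n M) :
    labelCount d M 0 + ∑ i ∈ {0}ᶜ, labelCount d M i = n := by
  rw [← h.sum_labelCount hd, Fintype.sum_eq_add_sum_compl 0]

lemma sum_row_zero_add_two_mul_sum_edgeCount (h : IsAdmissible d n M) :
    ∑ j ∈ {0}ᶜ, M 0 j + 2 * ∑ q ∈ edgeClasses {0}ᶜ, edgeCount M q =
      d * ∑ i ∈ {0}ᶜ, labelCount d M i := by
  rw [two_mul_sum_edgeCount h.symm h.even_diag, mul_sum, ← sum_add_distrib]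
  exact sum_congr rfl fun i _ => by rw [h.symm 0 i, h.entry_zero_add_sum_compl]

lemma edge_total (hd : 0 < d) (h : IsAdmissible d n M) :
    n * d = M 0 0 + 2 * (∑ j ∈ {0}ᶜ, M 0 j + ∑ q ∈ edgeClasses {0}ᶜ, edgeCount M q) := by
  have row_zero := h.entry_zero_add_sum_compl 0
  have off_zero := h.sum_row_zero_add_two_mul_sum_edgeCount
  rw [← h.labelCount_zero_add_sum_compl hd, mul_comm, mul_add]
  omega

-- Reading the entries off zero from their multiplicities, the row sums give the remaining entries.
lemma eq_of_edgeCount_eq {M' : ZMod p → ZMod p → ℕ} (h : IsAdmissible d n M)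
    (h' : IsAdmissible d n M') (row_eq : labelCount d M = labelCount d M')
    (edge_eq : ∀ q ∈ edgeClasses {0}ᶜ, edgeCount M q = edgeCount M' q) : M = M' := by
  have upper {i j : ZMod p} (hi : i ≠ 0) (hj : j ≠ 0) (hij : i.val < j.val) : M i j = M' i j :=
    edge_eq (.inl (i, j)) (by simp [edgeClasses, upperPairs, hi, hj, hij])
  have off_zero {i j : ZMod p} (hi : i ≠ 0) (hj : j ≠ 0) : M i j = M' i j := by
    rcases lt_trichotomy i.val j.val with hij | hij | hij
    · exact upper hi hj hij
    · obtain rfl : i = j := ZMod.val_injective p hij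
      have loop_eq : M i i / 2 = M' i i / 2 := edge_eq (.inr i) (by simp [edgeClasses, hi])
      rw [← Nat.two_mul_div_two_of_even (h.even_diag i), loop_eq,
        Nat.two_mul_div_two_of_even (h'.even_diag i)]
    · rw [h.symm, h'.symm, upper hj hi hij]
  have entry_zero {i : ZMod p} (tail_eq : ∀ j ≠ 0, M i j = M' i j) : M i 0 = M' i 0 := by
    have row := h.entry_zero_add_sum_compl i
    rw [row_eq, ← h'.entry_zero_add_sum_compl i,
      sum_congr rfl fun j hj => tail_eq j (by simpa using hj)] at row
    exact Nat.add_right_cancel row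
  have column_zero (i : ZMod p) (hi : i ≠ 0) : M i 0 = M' i 0 :=
    entry_zero fun j hj => off_zero hi hj
  have row_zero (j : ZMod p) (hj : j ≠ 0) : M 0 j = M' 0 j := by
    rw [h.symm, h'.symm, column_zero j hj]
  funext i j
  by_cases hi : i = 0 <;> by_cases hj : j = 0
  · rw [hi, hj, entry_zero row_zero]
  · rw [hi, row_zero j hj]
  · rw [hj, column_zero i hi]
  · exact off_zero hi hj

end IsAdmissible

lemma inv_matchingCount_mul_le {m h k : ℕ} (hm : 0 < m) (hmk : m = 2 * (h + k))
    (hmh : m ≤ 2 * (2 * h)) :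
    (matchingCount m)⁻¹ * matchingCount (2 * h) ≤ (2 / (m : ℝ)) ^ k := by
  have half_le : (m : ℝ) / 2 ≤ 2 * h := by
    rw [div_le_iff₀ two_pos, mul_comm]
    exact mod_cast hmh
  rw [inv_mul_le_iff₀ (matchingCount_pos m), ← inv_div, inv_pow, ← div_eq_mul_inv,
    le_div_iff₀ (by positivity), mul_comm, hmk]
  rw [hmk] at half_le
  exact pow_mul_matchingCount_le (by positivity) half_le k

/-- The number of words carrying a nonzero label. -/
def offCount {p : ℕ} [NeZero p] (d : ℕ) (M : ZMod p → ZMod p → ℕ) : ℕ :=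
  ∑ i ∈ {0}ᶜ, labelCount d M i

namespace IsAdmissible

variable {p d n : ℕ} [NeZero p] {M : ZMod p → ZMod p → ℕ}

lemma weight_eq (h : IsAdmissible d n M) : weight d n M =
    n.factorial / (∏ i, ((labelCount d M i).factorial : ℝ)) *
      matchingCount (M 0 0) * rowCount d (labelCount d M 0) (M 0) *
      (∏ i ∈ {0}ᶜ, (rowCount d (labelCount d M i) (M i) : ℝ) * (M i 0).factorial) *
      ((∏ q ∈ upperPairs {0}ᶜ, ((M q.1 q.2).factorial : ℝ)) *
        ∏ i ∈ {0}ᶜ, matchingCount (M i i)) := by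
  rw [weight, prod_upperPairs_univ, Fintype.prod_eq_mul_prod_compl 0 fun i => matchingCount (M i i),
    Fintype.prod_eq_mul_prod_compl 0 fun i => (rowCount d (labelCount d M i) (M i) : ℝ),
    prod_mul_distrib]
  simp_rw [h.symm 0]
  ring

lemma prod_rowCount_mul_factorial_le (h : IsAdmissible d n M) :
    (∏ i ∈ {0}ᶜ, (rowCount d (labelCount d M i) (M i) : ℝ) * (M i 0).factorial) *
        ∏ i ∈ {0}ᶜ, ∏ j ∈ {0}ᶜ, ((M i j).factorial : ℝ) ≤
      d ^ (d * offCount d M) * (∏ j ∈ {0}ᶜ, (labelCount d M j : ℝ) ^ M 0 j) *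
        ∏ i ∈ {0}ᶜ, ∏ j ∈ {0}ᶜ, (labelCount d M i : ℝ) ^ M i j := by
  rw [offCount, mul_sum, ← prod_pow_eq_pow_sum, ← prod_mul_distrib, ← prod_mul_distrib,
    ← prod_mul_distrib]
  refine prod_le_prod (fun i _ => by positivity) fun i _ => ?_
  have row := rowCount_mul_prod_factorial_le (h.row_sum i)
  rw [h.row_sum, mul_pow, ← h.entry_zero_add_sum_compl i, pow_add (labelCount d M i : ℝ),
    Fintype.prod_eq_mul_prod_compl 0, ← prod_pow_eq_pow_sum, h.symm i 0] at row
  rw [h.symm i 0, ← h.entry_zero_add_sum_compl i, h.symm i 0, mul_assoc, mul_assoc]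
  exact mod_cast row

lemma rowCount_zero_mul_prod_pow_le (hd : 0 < d) (h : IsAdmissible d n M)
    (hs : 0 < offCount d M) {ζ : ℝ} (hζ₀ : 0 < ζ) (hζ₁ : ζ ≤ 1) (hζn : ζ ^ 2 * n = offCount d M) :
    rowCount d (labelCount d M 0) (M 0) * ∏ j ∈ {0}ᶜ, (labelCount d M j : ℝ) ^ M 0 j ≤
      Real.exp (3 ^ d * offCount d M) * (offCount d M / ζ) ^ ∑ j ∈ {0}ᶜ, M 0 j := by
  set x : ZMod p → ℝ := Function.update (fun j => ζ / offCount d M * labelCount d M j) 0 1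
  have x_zero : x 0 = 1 := Function.update_self ..
  have x_apply {j : ZMod p} (hj : j ∈ ({0}ᶜ : Finset (ZMod p))) :
      x j = ζ / offCount d M * labelCount d M j := Function.update_of_ne (by simpa using hj) ..
  have x_nonneg (j : ZMod p) : 0 ≤ x j := by
    by_cases hj : j = 0
    · simp [hj, x_zero]
    · rw [x_apply (by simpa using hj)]
      positivity
  have x_sum : ∑ j ∈ {0}ᶜ, x j = ζ := by
    rw [sum_congr rfl fun j => x_apply, ← mul_sum, ← Nat.cast_sum, ← offCount]
    field_simp
  have zeroSumSum_le : zeroSumSum d x ≤ Real.exp (3 ^ d * ζ ^ 2) := by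
    have := zeroSumSum_le_one_add_sq d x_nonneg x_zero (x_sum.trans_le hζ₁)
    rw [x_sum] at this
    linarith [Real.add_one_le_exp (3 ^ d * ζ ^ 2)]
  have labelCount_le : (labelCount d M 0 : ℝ) ≤ n :=
    mod_cast (Nat.le_add_right _ _).trans_eq (h.labelCount_zero_add_sum_compl hd)
  have product_eq : ∏ j, x j ^ M 0 j = (∏ j ∈ {0}ᶜ, (labelCount d M j : ℝ) ^ M 0 j) /
      (offCount d M / ζ) ^ ∑ j ∈ {0}ᶜ, M 0 j := by
    rw [Fintype.prod_eq_mul_prod_compl 0, x_zero, one_pow, one_mul, ← prod_pow_eq_pow_sum,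
      ← prod_div_distrib]
    refine prod_congr rfl fun j hj => ?_
    rw [x_apply hj, ← div_pow]
    field_simp
  rw [← div_le_iff₀ (by positivity), mul_div_assoc, ← product_eq]
  calc rowCount d (labelCount d M 0) (M 0) * ∏ j, x j ^ M 0 j
      ≤ zeroSumSum d x ^ labelCount d M 0 := rowCount_mul_prod_pow_le _ x_nonneg
    _ ≤ Real.exp (3 ^ d * ζ ^ 2) ^ labelCount d M 0 := by
        gcongr
        exact zeroSumSum_nonneg d x_nonneg
    _ = Real.exp (labelCount d M 0 * (3 ^ d * ζ ^ 2)) := (Real.exp_nat_mul _ _).symm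
    _ ≤ Real.exp (n * (3 ^ d * ζ ^ 2)) := by gcongr
    _ = Real.exp (3 ^ d * offCount d M) := by rw [← hζn]; ring_nf

lemma prod_prod_labelCount_pow_pos (h : IsAdmissible d n M) (S : Finset (ZMod p)) :
    0 < ∏ i ∈ S, ∏ j ∈ S, (labelCount d M i : ℝ) ^ M i j := by
  refine prod_pos fun i _ => prod_pos fun j _ => ?_
  rcases (M i j).eq_zero_or_pos with entry_zero | entry_pos
  · simp [entry_zero]
  · have := h.labelCount_pos entry_pos
    positivity

end IsAdmissible

lemma sparse_scaling_identity {n d s ζ : ℝ} (hd : 0 < d) (hn : 0 < n) (hζ : 0 < ζ)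
    (hs : ζ ^ 2 * n = s) (e f : ℕ) :
    (2 / (n * d)) ^ (e + f) * (s / ζ) ^ e * d ^ (e + 2 * f) =
      (2 * ζ) ^ (e + 2 * f) * (d / (2 * s)) ^ f := by
  have boundary : 2 / (n * d) * (s / ζ) * d = 2 * ζ := by
    rw [← hs]
    field_simp
  have interior : 2 / (n * d) * d ^ 2 = (2 * ζ) ^ 2 * (d / (2 * s)) := by
    rw [← hs]
    field_simp
  calc (2 / (n * d)) ^ (e + f) * (s / ζ) ^ e * d ^ (e + 2 * f)
      = (2 / (n * d) * (s / ζ) * d) ^ e * (2 / (n * d) * d ^ 2) ^ f := by ring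
    _ = (2 * ζ) ^ (e + 2 * f) * (d / (2 * s)) ^ f := by
        rw [boundary, interior, mul_pow ((2 * ζ) ^ 2), ← pow_mul]
        ring

namespace IsAdmissible

variable {p d n : ℕ} [NeZero p] {M : ZMod p → ZMod p → ℕ}

lemma inv_matchingCount_mul_matchingCount_zero_le (hd : 0 < d) (h : IsAdmissible d n M)
    (hs : 0 < offCount d M) (hsn : 4 * offCount d M ≤ n) :
    (matchingCount (n * d))⁻¹ * matchingCount (M 0 0) ≤ (2 / ((n : ℝ) * d)) ^
      (∑ j ∈ {0}ᶜ, M 0 j + ∑ q ∈ edgeClasses {0}ᶜ, edgeCount M q) := by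
  have total := h.edge_total hd
  have off_zero := h.sum_row_zero_add_two_mul_sum_edgeCount
  obtain ⟨k, hk⟩ := (h.even_diag 0).two_dvd
  have half : n * d ≤ 2 * (2 * k) := by
    have scaled : 4 * (d * offCount d M) ≤ n * d := by nlinarith
    rw [← offCount] at off_zero
    omega
  rw [hk] at total ⊢
  exact mod_cast inv_matchingCount_mul_le (Nat.mul_pos (by omega) hd) (total.trans (by ring)) half

lemma weight_mul_pow_le (h : IsAdmissible d n M) {μ : ℝ} (hμ : 0 ≤ μ) :
    weight d n M * μ ^ ∑ q ∈ edgeClasses {0}ᶜ, edgeCount M q ≤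
      n.factorial / (∏ i, ((labelCount d M i).factorial : ℝ)) *
        matchingCount (M 0 0) *
        (rowCount d (labelCount d M 0) (M 0) * ∏ j ∈ {0}ᶜ, (labelCount d M j : ℝ) ^ M 0 j) *
        d ^ (d * offCount d M) *
        ∏ q ∈ edgeClasses {0}ᶜ, edgeIntensity μ (labelCount d M) q ^ edgeCount M q /
          (edgeCount M q).factorial := by
  have rows := h.prod_rowCount_mul_factorial_le
  have poisson := prod_edgeIntensity_pow_mul_prod_factorial (S := {0}ᶜ) h.symm h.even_diag μ
    (labelCount d M)
  have labels_pos := h.prod_prod_labelCount_pow_pos {0}ᶜ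
  have edges_nonneg := prod_edgeIntensity_pow_div_factorial_nonneg (S := {0}ᶜ) hμ (labelCount d M)
    (edgeCount M)
  rw [h.weight_eq]
  set multinomial := (n.factorial : ℝ) / ∏ i, ((labelCount d M i).factorial : ℝ)
  set rowWeight := ∏ i ∈ {0}ᶜ, (rowCount d (labelCount d M i) (M i) : ℝ) * (M i 0).factorial
  set matchings := (∏ q ∈ upperPairs {0}ᶜ, ((M q.1 q.2).factorial : ℝ)) *
    ∏ i ∈ {0}ᶜ, matchingCount (M i i)
  set edges := ∏ q ∈ edgeClasses {0}ᶜ, edgeIntensity μ (labelCount d M) q ^ edgeCount M q /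
    (edgeCount M q).factorial
  set labels := ∏ i ∈ {0}ᶜ, ∏ j ∈ {0}ᶜ, (labelCount d M i : ℝ) ^ M i j
  set boundary := ∏ j ∈ {0}ᶜ, (labelCount d M j : ℝ) ^ M 0 j
  have nonzero_rows : rowWeight * (μ ^ (∑ q ∈ edgeClasses {0}ᶜ, edgeCount M q) * matchings) ≤
      d ^ (d * offCount d M) * boundary * edges := by
    refine le_of_mul_le_mul_right ?_ labels_pos
    linear_combination edges * rows - rowWeight * poisson
  have row_zero_nonneg : 0 ≤ multinomial * matchingCount (M 0 0) *
      rowCount d (labelCount d M 0) (M 0) :=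
    mul_nonneg (mul_nonneg (by positivity) (matchingCount_pos _).le) (by positivity)
  linear_combination multinomial * matchingCount (M 0 0) * rowCount d (labelCount d M 0) (M 0) *
    nonzero_rows

lemma inv_matchingCount_mul_weight_le (hd : 0 < d) (h : IsAdmissible d n M)
    (hs : 0 < offCount d M) (hsn : 4 * offCount d M ≤ n) {ζ : ℝ} (hζ₀ : 0 < ζ) (hζ₁ : ζ ≤ 1)
    (hζn : ζ ^ 2 * n = offCount d M) :
    (matchingCount (n * d))⁻¹ * weight d n M ≤
      n.factorial / (∏ i, ((labelCount d M i).factorial : ℝ)) *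
        (Real.exp (3 ^ d * offCount d M) * (2 * ζ) ^ (d * offCount d M)) *
        ∏ q ∈ edgeClasses {0}ᶜ, edgeIntensity (d / (2 * offCount d M)) (labelCount d M) q ^
          edgeCount M q / (edgeCount M q).factorial := by
  have n_pos : 0 < n := by omega
  have normalization := h.inv_matchingCount_mul_matchingCount_zero_le hd hs hsn
  have row_zero := h.rowCount_zero_mul_prod_pow_le hd hs hζ₀ hζ₁ hζn
  have μ_pos : 0 < (d : ℝ) / (2 * offCount d M) := by positivity
  have weight_le := h.weight_mul_pow_le μ_pos.le
  have scaling := sparse_scaling_identity (Nat.cast_pos.2 hd) (Nat.cast_pos.2 n_pos) hζ₀ hζn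
    (∑ j ∈ {0}ᶜ, M 0 j) (∑ q ∈ edgeClasses {0}ᶜ, edgeCount M q)
  rw [h.sum_row_zero_add_two_mul_sum_edgeCount, ← offCount] at scaling
  have edges_nonneg := prod_edgeIntensity_pow_div_factorial_nonneg (S := {0}ᶜ) μ_pos.le
    (labelCount d M) (edgeCount M)
  set multinomial := (n.factorial : ℝ) / ∏ i, ((labelCount d M i).factorial : ℝ)
  set edges := ∏ q ∈ edgeClasses {0}ᶜ,
      edgeIntensity (d / (2 * offCount d M)) (labelCount d M) q ^ edgeCount M q /
        (edgeCount M q).factorial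
  refine le_of_mul_le_mul_right ?_
    (pow_pos μ_pos (∑ q ∈ edgeClasses {0}ᶜ, edgeCount M q))
  calc (matchingCount (n * d))⁻¹ * weight d n M * (d / (2 * offCount d M)) ^
        ∑ q ∈ edgeClasses {0}ᶜ, edgeCount M q
      ≤ (matchingCount (n * d))⁻¹ * (multinomial * matchingCount (M 0 0) *
        (rowCount d (labelCount d M 0) (M 0) * ∏ j ∈ {0}ᶜ, (labelCount d M j : ℝ) ^ M 0 j) *
        d ^ (d * offCount d M) * edges) := by
        rw [mul_assoc]
        exact mul_le_mul_of_nonneg_left weight_le (inv_nonneg.2 (matchingCount_pos _).le)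
    _ = ((matchingCount (n * d))⁻¹ * matchingCount (M 0 0)) *
        (rowCount d (labelCount d M 0) (M 0) * ∏ j ∈ {0}ᶜ, (labelCount d M j : ℝ) ^ M 0 j) *
        (multinomial * d ^ (d * offCount d M) * edges) := by ring
    _ ≤ (2 / ((n : ℝ) * d)) ^ (∑ j ∈ {0}ᶜ, M 0 j + ∑ q ∈ edgeClasses {0}ᶜ, edgeCount M q) *
        (Real.exp (3 ^ d * offCount d M) * (offCount d M / ζ) ^ ∑ j ∈ {0}ᶜ, M 0 j) *
        (multinomial * d ^ (d * offCount d M) * edges) := by gcongr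
    _ = _ := by
        linear_combination multinomial * Real.exp (3 ^ d * offCount d M) * edges * scaling

end IsAdmissible

lemma factorial_div_prod_factorial_le {ι : Type*} [Fintype ι] [DecidableEq ι] (i₀ : ι) (ν : ι → ℕ) :
    ((∑ i, ν i).factorial : ℝ) / ∏ i, ((ν i).factorial : ℝ) ≤
      (∑ i, ν i : ℕ) ^ (∑ i ∈ {i₀}ᶜ, ν i) * ∏ i ∈ {i₀}ᶜ, (1 / (ν i).factorial : ℝ) := by
  have sum_eq : ∑ i, ν i = ν i₀ + ∑ i ∈ {i₀}ᶜ, ν i := Fintype.sum_eq_add_sum_compl i₀ ν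
  have factorial_le : (∑ i, ν i).factorial ≤
      (ν i₀).factorial * (∑ i, ν i) ^ ∑ i ∈ {i₀}ᶜ, ν i := by
    rw [← Nat.factorial_mul_descFactorial (sum_eq ▸ Nat.le_add_left ..),
      show ∑ i, ν i - ∑ i ∈ {i₀}ᶜ, ν i = ν i₀ by omega]
    gcongr
    exact Nat.descFactorial_le_pow ..
  rw [Fintype.prod_eq_mul_prod_compl i₀, prod_div_distrib, prod_const_one, mul_one_div,
    div_mul_eq_div_div]
  gcongr
  rw [div_le_iff₀' (by positivity)]
  exact mod_cast factorial_le

lemma sum_factorial_div_prod_factorial_le {ι : Type*} [Fintype ι] [DecidableEq ι] (i₀ : ι)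
    {n s : ℕ} (hs : 0 < s) {T : Finset (ι → ℕ)}
    (hT : ∀ ν ∈ T, ∑ i ∈ {i₀}ᶜ, ν i = s ∧ ∑ i, ν i = n) :
    ∑ ν ∈ T, (n.factorial : ℝ) / ∏ i, ((ν i).factorial : ℝ) ≤
      (Real.exp 1 * n * Fintype.card ι / s) ^ s := by
  have card_pos : 0 < Fintype.card ι := Fintype.card_pos_iff.2 ⟨i₀⟩
  set y : ℝ := s / Fintype.card ι
  have y_pos : 0 < y := by positivity
  have determined (ν) (hν : ν ∈ T) (ν') (hν' : ν' ∈ T)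
      (agree : ∀ i ∈ ({i₀}ᶜ : Finset ι), ν i = ν' i) : ν = ν' := by
    obtain ⟨off, total⟩ := hT ν hν
    obtain ⟨off', total'⟩ := hT ν' hν'
    rw [Fintype.sum_eq_add_sum_compl i₀] at total total'
    funext i
    by_cases hi : i = i₀
    · subst hi
      omega
    · exact agree i (by simpa using hi)
  have sum_y_le : ∑ _i ∈ ({i₀}ᶜ : Finset ι), y ≤ s := by
    calc ∑ _i ∈ ({i₀}ᶜ : Finset ι), y ≤ ∑ _i : ι, y :=
        sum_le_univ_sum_of_nonneg fun _ => y_pos.le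
      _ = s := by
        simp only [sum_const, card_univ, nsmul_eq_mul, y]
        field_simp
  calc ∑ ν ∈ T, (n.factorial : ℝ) / ∏ i, ((ν i).factorial : ℝ)
      ≤ ∑ ν ∈ T, (n / y) ^ s * ∏ i ∈ {i₀}ᶜ, y ^ ν i / (ν i).factorial := by
        refine sum_le_sum fun ν hν => ?_
        obtain ⟨off, total⟩ := hT ν hν
        refine (total ▸ factorial_div_prod_factorial_le i₀ ν).trans_eq ?_
        simp_rw [div_eq_mul_one_div (y ^ _)]
        rw [prod_mul_distrib, prod_pow_eq_pow_sum, off, ← mul_assoc, ← mul_pow,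
          div_mul_cancel₀ _ y_pos.ne']
    _ = (n / y) ^ s * ∑ ν ∈ T, ∏ i ∈ {i₀}ᶜ, y ^ ν i / (ν i).factorial := (mul_sum ..).symm
    _ ≤ (n / y) ^ s * Real.exp s := by
        gcongr
        exact (sum_prod_pow_div_factorial_le_exp determined fun _ _ => y_pos.le).trans
          (Real.exp_le_exp.2 sum_y_le)
    _ = (Real.exp 1 * n * Fintype.card ι / s) ^ s := by
        rw [← Real.exp_one_pow, ← mul_pow]
        congr 1
        simp only [y]
        field_simp

/-- The geometric growth rate of the sparse regime: the admissible `M` with `offCount d M = s`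
contribute at most `(sparseConstant d * p * (s / n) ^ ((d - 2) / 2)) ^ s`. -/
noncomputable def sparseConstant (d : ℕ) : ℝ :=
  Real.exp (1 + 3 ^ d + d / 4) * 2 ^ d

lemma one_le_sparseConstant (d : ℕ) : 1 ≤ sparseConstant d :=
  one_le_mul_of_one_le_of_one_le (Real.one_le_exp (by positivity)) (one_le_pow₀ one_le_two)

lemma sparseConstant_mul_pow {d : ℕ} (hd : 2 ≤ d) {n s ζ : ℝ} (hn : 0 < n) (hζ : 0 < ζ)
    (hs : ζ ^ 2 * n = s) (p : ℝ) :
    Real.exp 1 * n * p / s * (Real.exp (3 ^ d) * (2 * ζ) ^ d) * Real.exp (d / 4) =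
      sparseConstant d * p * ζ ^ (d - 2) := by
  rw [sparseConstant, Real.exp_add, Real.exp_add, ← hs, mul_pow, ← pow_sub_mul_pow ζ hd]
  field_simp

section SparseSums

variable {p d n s : ℕ} [NeZero p] {T : Finset (ZMod p → ZMod p → ℕ)}

lemma sum_weight_le_of_labelCount_eq (hd : 0 < d) (hs : 0 < s) (hsn : 4 * s ≤ n)
    {ν : ZMod p → ℕ} (hν : ∑ i ∈ {0}ᶜ, ν i = s)
    (hT : ∀ M ∈ T, IsAdmissible d n M ∧ labelCount d M = ν)
    {ζ : ℝ} (hζ₀ : 0 < ζ) (hζ₁ : ζ ≤ 1) (hζn : ζ ^ 2 * n = s) :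
    ∑ M ∈ T, (matchingCount (n * d))⁻¹ * weight d n M ≤
      n.factorial / (∏ i, ((ν i).factorial : ℝ)) *
        (Real.exp (3 ^ d * s) * (2 * ζ) ^ (d * s)) * Real.exp (d / 4 * s) := by
  have μ_nonneg : 0 ≤ (d : ℝ) / (2 * s) := by positivity
  have intensity : ∑ q ∈ edgeClasses {0}ᶜ, edgeIntensity (d / (2 * s)) ν q = d / 4 * s := by
    rw [sum_edgeIntensity, ← Nat.cast_sum, hν]
    field_simp
    norm_num
  have determined (M) (hM : M ∈ T) (M') (hM' : M' ∈ T)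
      (agree : ∀ q ∈ edgeClasses {0}ᶜ, edgeCount M q = edgeCount M' q) : M = M' :=
    (hT M hM).1.eq_of_edgeCount_eq (hT M' hM').1 ((hT M hM).2.trans (hT M' hM').2.symm) agree
  rw [← intensity]
  refine le_trans (sum_le_sum fun M hM => ?_) ((mul_sum ..).symm.trans_le <|
    mul_le_mul_of_nonneg_left (sum_prod_pow_div_factorial_le_exp determined
      fun q _ => edgeIntensity_nonneg μ_nonneg ν q) (by positivity))
  obtain ⟨admissible, rfl⟩ := hT M hM
  have offCount_eq : offCount d M = s := hν
  subst offCount_eq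
  exact admissible.inv_matchingCount_mul_weight_le hd hs hsn hζ₀ hζ₁ hζn

lemma sum_weight_le_of_offCount_eq (hd : 2 ≤ d) (hs : 0 < s) (hsn : 4 * s ≤ n)
    (hT : ∀ M ∈ T, IsAdmissible d n M ∧ offCount d M = s)
    {ζ : ℝ} (hζ₀ : 0 < ζ) (hζ₁ : ζ ≤ 1) (hζn : ζ ^ 2 * n = s) :
    ∑ M ∈ T, (matchingCount (n * d))⁻¹ * weight d n M ≤
      (sparseConstant d * p * ζ ^ (d - 2)) ^ s := by
  have d_pos : 0 < d := by omega
  have n_pos : (0 : ℝ) < n := mod_cast (by omega : 0 < n)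
  have labels (ν) (hν : ν ∈ T.image (labelCount d)) :
      ∑ i ∈ {0}ᶜ, ν i = s ∧ ∑ i, ν i = n := by
    obtain ⟨M, hM, rfl⟩ := mem_image.1 hν
    exact ⟨(hT M hM).2, (hT M hM).1.sum_labelCount d_pos⟩
  calc ∑ M ∈ T, (matchingCount (n * d))⁻¹ * weight d n M
      = ∑ ν ∈ T.image (labelCount d), ∑ M ∈ T with labelCount d M = ν,
          (matchingCount (n * d))⁻¹ * weight d n M :=
        (sum_fiberwise_of_maps_to (fun _ => mem_image_of_mem _) _).symm
    _ ≤ ∑ ν ∈ T.image (labelCount d), n.factorial / (∏ i, ((ν i).factorial : ℝ)) *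
          (Real.exp (3 ^ d * s) * (2 * ζ) ^ (d * s)) * Real.exp (d / 4 * s) := by
        refine sum_le_sum fun ν hν => sum_weight_le_of_labelCount_eq d_pos hs hsn (labels ν hν).1
          (fun M hM => ?_) hζ₀ hζ₁ hζn
        obtain ⟨hMT, hMν⟩ := mem_filter.1 hM
        exact ⟨(hT M hMT).1, hMν⟩
    _ = (∑ ν ∈ T.image (labelCount d), n.factorial / (∏ i, ((ν i).factorial : ℝ))) *
          (Real.exp (3 ^ d * s) * (2 * ζ) ^ (d * s)) * Real.exp (d / 4 * s) := by
        rw [← sum_mul, ← sum_mul]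
    _ ≤ (Real.exp 1 * n * p / s) ^ s *
          (Real.exp (3 ^ d * s) * (2 * ζ) ^ (d * s)) * Real.exp (d / 4 * s) := by
        gcongr
        simpa only [ZMod.card] using sum_factorial_div_prod_factorial_le 0 hs labels
    _ = (sparseConstant d * p * ζ ^ (d - 2)) ^ s := by
        rw [← sparseConstant_mul_pow hd n_pos hζ₀ hζn, pow_mul, mul_comm _ (s : ℝ),
          mul_comm _ (s : ℝ), Real.exp_nat_mul, Real.exp_nat_mul, ← mul_pow, ← mul_pow, ← mul_pow]

end SparseSums

lemma IsAdmissible.offCount_ne_one {p d n : ℕ} [Fact p.Prime] {M : ZMod p → ZMod p → ℕ}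
    (h : IsAdmissible d n M) (hpd : ¬p ∣ d)
    (hrow : ∀ i, ∑ j : ZMod p, j * (M i j : ZMod p) = 0) : offCount d M ≠ 1 := by
  intro off_one
  obtain ⟨i, hi, count_ne⟩ := exists_ne_zero_of_sum_ne_zero (off_one.trans_ne one_ne_zero)
  have count_split := sum_erase_add _ (labelCount d M) hi
  rw [← offCount, off_one] at count_split
  have other_count (j) (hj₀ : j ≠ 0) (hji : j ≠ i) : labelCount d M j = 0 :=
    sum_eq_zero_iff.1 (show ∑ j ∈ ({0}ᶜ : Finset (ZMod p)).erase i, labelCount d M j = 0 by omega) j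
      (by simp [hj₀, hji])
  have column_zero (a) : (M a i : ZMod p) = 0 := by
    have row := hrow a
    rw [sum_eq_single i (fun j _ hji => ?_) (by simp)] at row
    · exact (mul_eq_zero.1 row).resolve_left (by simpa using hi)
    · by_cases hj₀ : j = 0
      · rw [hj₀, zero_mul]
      · rw [h.symm, h.entry_eq_zero (other_count j hj₀ hji), Nat.cast_zero, mul_zero]
  have count_one : labelCount d M i = 1 := by omega
  refine hpd ((ZMod.natCast_eq_zero_iff d p).1 ?_)
  rw [← mul_one d, ← count_one, ← h.col_sum, Nat.cast_sum]
  exact sum_eq_zero fun a _ => column_zero a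

lemma pow_le_mul_geometric {A ζ : ℝ} (hA : 0 ≤ A) (hζ₀ : 0 ≤ ζ) (hζ₁ : ζ ≤ 1) {k s : ℕ}
    (hk : 1 ≤ k) (hs : 2 ≤ s) (h : A * ζ ≤ 1 / 2) :
    (A * ζ ^ k) ^ s ≤ 4 * A ^ 2 * (ζ ^ 2) ^ k * (1 / 2) ^ s := by
  have base_le : A * ζ ^ k ≤ 1 / 2 :=
    (mul_le_mul_of_nonneg_left (pow_le_of_le_one hζ₀ hζ₁ (by omega)) hA).trans h
  calc (A * ζ ^ k) ^ s = (A * ζ ^ k) ^ 2 * (A * ζ ^ k) ^ (s - 2) := (pow_mul_pow_sub _ hs).symm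
    _ ≤ (A * ζ ^ k) ^ 2 * (1 / 2) ^ (s - 2) := by gcongr
    _ = 4 * A ^ 2 * (ζ ^ 2) ^ k * (1 / 2) ^ s := by
        rw [← pow_mul_pow_sub (1 / 2 : ℝ) hs]
        ring

lemma sum_weight_le_mul_geometric {p d n s : ℕ} [NeZero p] (hd : 3 ≤ d) (hs : 2 ≤ s)
    (hsn : 4 * sparseConstant d ^ 2 * p ^ 2 * s ≤ n) {T : Finset (ZMod p → ZMod p → ℕ)}
    (hT : ∀ M ∈ T, IsAdmissible d n M ∧ offCount d M = s) :
    ∑ M ∈ T, (matchingCount (n * d))⁻¹ * weight d n M ≤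
      4 * sparseConstant d ^ 2 * p ^ 2 / n ^ (d - 2) * (s ^ (d - 2) * (1 / 2) ^ s) := by
  set A := sparseConstant d
  have s_pos : (0 : ℝ) < s := mod_cast (by omega : 0 < s)
  have A_mul_p_ge : 1 ≤ A * p :=
    one_le_mul_of_one_le_of_one_le (one_le_sparseConstant d) (mod_cast NeZero.one_le)
  have four_mul_s_le : 4 * (s : ℝ) ≤ n := by nlinarith [one_le_pow₀ A_mul_p_ge (n := 2)]
  have n_pos : (0 : ℝ) < n := by linarith
  set ζ := √((s : ℝ) / n)
  have ζ_sq : ζ ^ 2 = s / n := Real.sq_sqrt (by positivity)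
  have ζ_pos : 0 < ζ := Real.sqrt_pos.2 (by positivity)
  have A_mul_ζ_le : A * p * ζ ≤ 1 / 2 := by
    refine le_of_sq_le_sq ?_ (by norm_num)
    rw [mul_pow, ζ_sq, mul_div_assoc', div_le_iff₀ n_pos]
    linarith
  have ζ_le : ζ ≤ 1 := by nlinarith
  refine (sum_weight_le_of_offCount_eq (by omega) (by omega) (mod_cast four_mul_s_le) hT ζ_pos ζ_le
    (by rw [ζ_sq, div_mul_cancel₀ _ n_pos.ne'])).trans ?_
  refine (pow_le_mul_geometric (by linarith) ζ_pos.le ζ_le (by omega) hs A_mul_ζ_le).trans_eq ?_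
  rw [ζ_sq, div_pow]
  ring

lemma exists_sum_weight_le_of_not_isDense {d : ℕ} (hd : 3 ≤ d) :
    ∃ c₀ : ℝ, 0 < c₀ ∧ ∃ C : ℝ, 0 ≤ C ∧
      ∀ (p : ℕ) [Fact p.Prime], ¬p ∣ d → ∀ (n : ℕ) (T : Finset (ZMod p → ZMod p → ℕ)),
        (∀ M ∈ T, IsAdmissible d n M ∧ labelCount d M 0 < n ∧
          (∀ i, ∑ j : ZMod p, j * (M i j : ZMod p) = 0) ∧ ¬IsDense c₀ d n M) →
        ∑ M ∈ T, (matchingCount (n * d))⁻¹ * weight d n M ≤ C * p ^ 2 / n ^ (d - 2) := by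
  set A := sparseConstant d
  have A_pos : 0 < A := one_pos.trans_le (one_le_sparseConstant d)
  have summable : Summable fun s : ℕ => (s : ℝ) ^ (d - 2) * (1 / 2 : ℝ) ^ s :=
    summable_pow_mul_geometric_of_norm_lt_one (d - 2) (by norm_num)
  refine ⟨1 / (4 * A ^ 2), by positivity,
    4 * A ^ 2 * ∑' s : ℕ, (s : ℝ) ^ (d - 2) * (1 / 2 : ℝ) ^ s, by positivity, ?_⟩
  intro p _ hpd n T hT
  have off_mem (s) (hs : s ∈ T.image (offCount d)) : 2 ≤ s ∧ 4 * A ^ 2 * p ^ 2 * s ≤ n := by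
    obtain ⟨M, hM, rfl⟩ := mem_image.1 hs
    obtain ⟨admissible, count_zero_lt, hrow, sparse⟩ := hT M hM
    have off_ne_one := admissible.offCount_ne_one hpd hrow
    have count_split := admissible.labelCount_zero_add_sum_compl (by omega)
    rw [← offCount] at count_split
    refine ⟨by omega, ?_⟩
    have off_eq : (n : ℝ) - labelCount d M 0 = offCount d M := by
      rw [← count_split]
      push_cast
      ring
    rw [IsDense, not_le, off_eq, div_mul_eq_mul_div, one_mul, lt_div_iff₀ (by positivity)] at sparse
    linarith
  calc ∑ M ∈ T, (matchingCount (n * d))⁻¹ * weight d n M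
      = ∑ s ∈ T.image (offCount d), ∑ M ∈ T with offCount d M = s,
          (matchingCount (n * d))⁻¹ * weight d n M :=
        (sum_fiberwise_of_maps_to (fun _ => mem_image_of_mem _) _).symm
    _ ≤ ∑ s ∈ T.image (offCount d),
          4 * A ^ 2 * p ^ 2 / n ^ (d - 2) * (s ^ (d - 2) * (1 / 2) ^ s) := by
        refine sum_le_sum fun s hs => sum_weight_le_mul_geometric hd (off_mem s hs).1
          (off_mem s hs).2 fun M hM => ?_
        obtain ⟨hMT, hMs⟩ := mem_filter.1 hM
        exact ⟨(hT M hMT).1, hMs⟩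
    _ ≤ 4 * A ^ 2 * p ^ 2 / n ^ (d - 2) * ∑' s : ℕ, (s : ℝ) ^ (d - 2) * (1 / 2 : ℝ) ^ s := by
        rw [← mul_sum]
        gcongr
        exact summable.sum_le_tsum _ fun s _ => by positivity
    _ = _ := by ring

/-- The set `𝒩_b` of the paper: the matrices of `ℳ` whose discrepancy exceeds `b * log n / n`. -/
def exceptional (b : ℝ) (d n p : ℕ) [NeZero p] : Set (ZMod p → ZMod p → ℕ) :=
  {M | IsAdmissible d n M ∧ labelCount d M 0 < n ∧
    (∀ i, ∑ j : ZMod p, j * (M i j : ZMod p) = 0) ∧ b * Real.log n / n < discrepancy d n M}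

lemma exceptional_finite (b : ℝ) (d n p : ℕ) [NeZero p] : (exceptional b d n p).Finite := by
  refine (finite_toSet <| Fintype.piFinset fun _ => Fintype.piFinset fun _ =>
    range (d * n + 1)).subset fun M hM => ?_
  simpa only [coe_sort_coe, mem_coe, Fintype.mem_piFinset, mem_range_succ_iff] using hM.1.entry_le

lemma exists_pow_four_mul_log_le {c : ℝ} (hc : 0 < c) :
    ∃ N : ℕ, ∀ n ≥ N, ∀ x : ℝ, 0 ≤ x → x ≤ (n : ℝ) ^ (1 / 5 : ℝ) → x ^ 4 * Real.log n ≤ c * n := by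
  obtain ⟨N, hN⟩ := Filter.eventually_atTop.1 <| tendsto_natCast_atTop_atTop.eventually <|
    (isLittleO_log_rpow_atTop (show (0 : ℝ) < 1 / 5 by norm_num)).bound hc
  refine ⟨N, fun n hn x hx₀ hx => ?_⟩
  have log_le : Real.log n ≤ c * (n : ℝ) ^ (1 / 5 : ℝ) := by
    simpa only [Real.norm_of_nonneg (Real.rpow_nonneg n.cast_nonneg _)] using
      (Real.le_norm_self _).trans (hN n hn)
  calc x ^ 4 * Real.log n
      ≤ ((n : ℝ) ^ (1 / 5 : ℝ)) ^ 4 * (c * (n : ℝ) ^ (1 / 5 : ℝ)) := by gcongr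
    _ = c * ((n : ℝ) ^ (1 / 5 : ℝ)) ^ 5 := by ring
    _ = c * n := by
        rw [← Real.rpow_mul_natCast n.cast_nonneg]
        norm_num

lemma rpow_le_rpow_one_fifth {d n : ℕ} (hd : 2 ≤ d) (hn : 0 < n) :
    (n : ℝ) ^ (((d : ℝ) - 2) / (5 * d - 6)) ≤ (n : ℝ) ^ (1 / 5 : ℝ) := by
  have two_le : (2 : ℝ) ≤ d := mod_cast hd
  refine Real.rpow_le_rpow_of_exponent_le (mod_cast hn) ?_
  rw [div_le_div_iff₀ (by linarith) (by norm_num)]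
  linarith

lemma upperPairs_univ {p : ℕ} [NeZero p] : upperPairs (univ : Finset (ZMod p)) =
    univ.filter fun q : ZMod p × ZMod p => q.1.val < q.2.val := by
  rw [upperPairs, univ_product_univ]

lemma inv_matchingCount (m : ℕ) :
    (matchingCount m)⁻¹ = 2 ^ (m / 2) * (m / 2).factorial / m.factorial :=
  inv_div _ _

end UndirectedLDP

open UndirectedLDP in
theorem undirected_ldp_estimate_general {d : ℕ} (hd : 3 ≤ d) :
    ∃ b₀ : ℝ, 0 < b₀ ∧ ∃ C : ℝ, 0 < C ∧ ∃ c : ℝ, 0 < c ∧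
      ∀ b ≥ b₀, ∀ n ≥ 6 * d, ∀ (p : ℕ) [Fact p.Prime], ¬p ∣ d → p ^ 4 * Real.log n ≤ c * n →
        (matchingCount (n * d))⁻¹ * ∑ᶠ M ∈ exceptional b d n p, weight d n M ≤
          C * p ^ 2 / n ^ (d - 2) := by
  classical
  obtain ⟨m, rfl⟩ := Nat.exists_eq_add_of_le' hd
  obtain ⟨c₀, hc₀, C, hC, sparse_bound⟩ := exists_sum_weight_le_of_not_isDense hd
  obtain ⟨b₀, hb₀, c, hc, dense_bound⟩ := exists_sum_weight_le_of_isDense m hc₀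
  refine ⟨b₀, hb₀, C + 1, by positivity, c, hc, fun b hb n hn p _ hpd hpn => ?_⟩
  have finite := exceptional_finite b (m + 3) n p
  have dense := dense_bound p hpd n hn hpn {M ∈ finite.toFinset | IsDense c₀ (m + 3) n M}
    fun M hM => by
      obtain ⟨⟨admissible, -, -, far⟩, dense⟩ := (mem_filter.1 hM).imp_left finite.mem_toFinset.1
      refine ⟨admissible, dense, le_trans ?_ far.le⟩
      gcongr
  have sparse := sparse_bound p hpd n {M ∈ finite.toFinset | ¬IsDense c₀ (m + 3) n M}
    fun M hM => by
      obtain ⟨⟨admissible, count_lt, congruences, -⟩, sparse⟩ :=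
        (mem_filter.1 hM).imp_left finite.mem_toFinset.1
      exact ⟨admissible, count_lt, congruences, sparse⟩
  rw [finsum_mem_eq_finite_toFinset_sum _ finite, mul_sum,
    ← sum_filter_add_sum_filter_not _ (IsDense c₀ (m + 3) n)]
  refine (add_le_add dense sparse).trans ?_
  rw [show m + 3 - 2 = m + 1 by omega, ← add_div]
  have one_le : (1 : ℝ) ≤ p ^ 2 := one_le_pow₀ (mod_cast NeZero.one_le)
  gcongr
  linarith

/-- Large deviation estimate (undirected case): for `d ≥ 3` there is `𝔟₀ > 0` so that for
every `𝔟 ≥ 𝔟₀` there are `C, c, N > 0` such that for all `n ≥ N` with `nd` even and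
primes `p` with `gcd(p,d) = 1` and `p ≤ c n^{(d-2)/(5d-6)}`, the normalized sum over
non-equidistributed symmetric matrices `M ∈ 𝒩_𝔟` of the matching/walk weights is at
most `C p^{2d}/n^{d-2}`. -/
theorem undirected_ldp_estimate (d : ℕ) (hd : 3 ≤ d) :
    ∃ b₀ : ℝ, 0 < b₀ ∧ ∀ b : ℝ, b₀ ≤ b →
      ∃ C c : ℝ, ∃ N : ℕ, 0 < C ∧ 0 < c ∧ 0 < N ∧
        ∀ n : ℕ, N ≤ n → Even (n * d) → ∀ (p : ℕ) [Fact p.Prime], Nat.gcd p d = 1 →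
          (p : ℝ) ≤ c * (n : ℝ) ^ (((d : ℝ) - 2) / (5 * (d : ℝ) - 6)) →
          ((2 : ℝ) ^ (n * d / 2) * ((n * d / 2).factorial : ℝ) / ((n * d).factorial : ℝ)) *
            (∑ᶠ M ∈ {M : ZMod p → ZMod p → ℕ |
                (∀ i j, M i j = M j i) ∧ (∀ i, Even (M i i)) ∧
                (∑ i : ZMod p, ∑ j : ZMod p, M i j) = d * n ∧
                (∀ i, d ∣ ∑ j, M i j) ∧
                (∑ j : ZMod p, M 0 j) / d < n ∧
                (∀ i, (∑ j : ZMod p, j * (M i j : ZMod p)) = 0) ∧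
                b * Real.log n / n < (∑ i : ZMod p, ∑ j : ZMod p,
                  ((M i j : ℝ) / (d * n) - 1 / (p : ℝ) ^ 2) ^ 2)},
              ((n.factorial : ℝ) / ∏ i : ZMod p, (((∑ j, M i j) / d).factorial : ℝ)) *
              (∏ q ∈ Finset.univ.filter (fun q : ZMod p × ZMod p => q.1.val < q.2.val),
                  ((M q.1 q.2).factorial : ℝ)) *
              (∏ i : ZMod p,
                  ((M i i).factorial : ℝ) /
                    (2 ^ (M i i / 2) * ((M i i / 2).factorial : ℝ))) *
              (∏ i : ZMod p,
                ((Finset.univ.filter (fun a : Fin ((∑ j, M i j) / d) → Fin d → ZMod p =>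
                  (∀ k, ∑ r, a k r = 0) ∧
                  (∀ j : ZMod p, (∑ k, Phi (a k) j) = M i j))).card : ℝ)))
          ≤ C * (p : ℝ) ^ (2 * d) / (n : ℝ) ^ (d - 2) := by
  obtain ⟨b₀, hb₀, C, hC, c, hc, estimate⟩ := undirected_ldp_estimate_general hd
  obtain ⟨N, range⟩ := UndirectedLDP.exists_pow_four_mul_log_le hc
  refine ⟨b₀, hb₀, fun b hb => ⟨C, 1, 6 * d + N, hC, one_pos, by omega, ?_⟩⟩
  intro n hn _ p _ coprime p_le
  have p_le_rpow : (p : ℝ) ≤ (n : ℝ) ^ (1 / 5 : ℝ) := (p_le.trans_eq (one_mul _)).trans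
    (UndirectedLDP.rpow_le_rpow_one_fifth (by omega) (by omega))
  calc _ = (UndirectedLDP.matchingCount (n * d))⁻¹ *
        ∑ᶠ M ∈ UndirectedLDP.exceptional b d n p, UndirectedLDP.weight d n M := by
        simp only [UndirectedLDP.inv_matchingCount, UndirectedLDP.weight,
          UndirectedLDP.upperPairs_univ]
        exact congrArg _ (finsum_mem_congr (Set.ext fun M =>
          ⟨fun ⟨symm, even, total, dvd, rest⟩ => ⟨⟨symm, even, total, dvd⟩, rest⟩,
            fun ⟨⟨symm, even, total, dvd⟩, rest⟩ => ⟨symm, even, total, dvd, rest⟩⟩) fun _ _ => rfl)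
    _ ≤ C * p ^ 2 / n ^ (d - 2) := estimate b hb n (by omega) p
        ((Nat.Prime.coprime_iff_not_dvd Fact.out).1 coprime)
        (range n (by omega) p p.cast_nonneg p_le_rpow)
    _ ≤ C * p ^ (2 * d) / n ^ (d - 2) := by
        gcongr
        · exact mod_cast (Fact.out : p.Prime).one_le
        · omega
end

section
/- Let d ≥ 3 be a fixed integer. There exists δ₀ > 0 such that for every δ ∈ (0, δ₀) there exists a constant c(δ) > 0 with the following property: for every prime p with gcd(p,d) = 1 and every p×p symmetric real matrix [𝔪_{ij}]_{0≤i,j≤p−1} with nonnegative entries and Σ_{i,j} 𝔪_{ij} = 1, setting 𝔫_i = Σ_{j=0}^{p−1} 𝔪_{ij} and 𝔪_i = (𝔪_{i0},…,𝔪_{i,p−1}), if max_{0≤i,j≤p−1} |𝔪_{ij} − 1/p²| > δ/p² and 𝔪_{00} < 1 − δ/p, then I(𝔪) ≤ −c(δ)/p², where I(𝔪) = (d−1)·ln p + (d/2)·Σ_{i,j=0}^{p−1} 𝔪_{ij}·ln 𝔪_{ij} − Σ_{j=0}^{p−1} 𝔫_j·ln 𝔫_j + Σ_{j=0}^{p−1}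 inf_{t ∈ ℝ^p} ( 𝔫_j·ln( p^{−(d−1)} Σ_{a ∈ Z_{d,p}} exp(⟨t, Φ(a)⟩) ) − d·⟨t, 𝔪_j⟩ ), with the convention 0·ln 0 = 0. -/
open Finset

/-!
Write `q` for a row of `𝔪` normalised to sum `1`. Testing the infimum for this row at
`t = (d - 1) / d * log q` turns `∑_{a ∈ Z_{d,p}} exp ⟨t, Φ(a)⟩` into a sum of geometric means, and
AM-GM bounds it by `1` minus a deficit depending on `q`. The remaining entropy terms form a negative
multiple of the relative entropy of `𝔪` with respect to the product of its marginals, and this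
relative entropy dominates a squared Hellinger distance. Hence `I(𝔪)` is at most minus a positive
combination of this distance and of the average deficit of the rows.

If both are small, some row `q` has a small deficit and is close to the marginal `𝔫`. The small
deficit says that, for some `b` and for most `x` in the sense of `q`, `√q` is nearly invariant
under the reflection `u ↦ b - x - u`; composing two reflections, `√q` is nearly invariant under
translation by `x - y` for most `x` and a fixed `y`. By Cauchy-Davenport the set of approximate
periods of `√q` is then either trivial or all of `ZMod p`, so `q` is close to a point mass or to
the uniform distribution. As `p` does not divide `d`, a point mass away from `0` would have a large
deficit, so the point mass sits at `0`. Either conclusion passes from `q` to `𝔫` and then to `𝔪`.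
-/

section ZeroSumTuples

variable {G : Type*} [AddCommGroup G] [Fintype G] [DecidableEq G]

variable (G) in
/-- The `d`-tuples in `G` with sum zero; for `G = ZMod p` this is the set `Z_{d,p}`. -/
def zeroSumTuples (d : ℕ) : Finset (Fin d → G) :=
  univ.filter fun a => ∑ r, a r = 0

theorem sum_zeroSumTuples_succ {M : Type*} [AddCommMonoid M] {n : ℕ} (r : Fin (n + 1))
    (F : (Fin (n + 1) → G) → M) :
    ∑ a ∈ zeroSumTuples G (n + 1), F a = ∑ b : Fin n → G, F (r.insertNth (-∑ i, b i) b) := by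
  have insertNth_removeNth : ∀ a ∈ zeroSumTuples G (n + 1),
      r.insertNth (-∑ i, r.removeNth a i) (r.removeNth a) = a := by
    intro a ha
    have hsum : a r + ∑ i, r.removeNth a i = 0 := by
      rw [zeroSumTuples, mem_filter, Fin.sum_univ_succAbove _ r] at ha
      exact ha.2
    rw [← eq_neg_of_add_eq_zero_left hsum, Fin.insertNth_self_removeNth]
  refine sum_nbij' (fun a => r.removeNth a) (fun b => r.insertNth (-∑ i, b i) b)
    (fun _ _ => mem_univ _) (fun b _ => ?_) insertNth_removeNth (fun b _ => by simp)
    (fun a ha => by rw [insertNth_removeNth a ha])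
  simp [zeroSumTuples, Fin.sum_univ_succAbove _ r]

theorem sum_zeroSumTuples_prod_succAbove {R : Type*} [CommSemiring R] {n : ℕ} (r : Fin (n + 1))
    (q : G → R) :
    ∑ a ∈ zeroSumTuples G (n + 1), ∏ s, q (a (r.succAbove s)) = (∑ k, q k) ^ n := by
  rw [sum_zeroSumTuples_succ r, Fintype.sum_pow]
  simp only [Fin.insertNth_apply_succAbove]

end ZeroSumTuples

theorem prod_prod_succAbove {M : Type*} [CommMonoid M] {n : ℕ} (f : Fin (n + 1) → M) :
    ∏ r : Fin (n + 1), ∏ s, f (r.succAbove s) = (∏ r, f r) ^ n := by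
  have hrow (r : Fin (n + 1)) : ∏ s, f (r.succAbove s) = ∏ j ∈ univ.filter (r ≠ ·), f j := by
    rw [show univ.filter (r ≠ ·) = univ.image r.succAbove by
        rw [Fin.image_succAbove_univ]; ext j; simp [eq_comm],
      prod_image fun _ _ _ _ h => Fin.succAbove_right_injective h]
  simp only [hrow]
  rw [prod_comm' (t' := univ) (s' := fun j => univ.filter (· ≠ j)) (by simp), ← prod_pow]
  refine prod_congr rfl fun j _ => ?_
  rw [prod_const, filter_ne', card_erase_of_mem (mem_univ j), card_univ, Fintype.card_fin,
    Nat.add_sub_cancel]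

theorem card_mul_geomMean_le_sum_sub_sq {ι : Type*} [Fintype ι] {z : ι → ℝ} (hz : ∀ k, 0 ≤ z k)
    {w : ℝ} (hw : 0 ≤ w) (hprod : w ^ Fintype.card ι = ∏ k, z k) {i j : ι} (hij : i ≠ j) :
    Fintype.card ι * w ≤ ∑ k, z k - (√(z i) - √(z j)) ^ 2 := by
  classical
  -- Apply AM-GM after replacing both `z i` and `z j` by their geometric mean `s`.
  set s : ℝ := √(z i) * √(z j)
  set z' : ι → ℝ := Function.update (Function.update z i s) j s
  have hi := Real.sq_sqrt (hz i)
  have hj := Real.sq_sqrt (hz j)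
  have hz' (k : ι) : 0 ≤ z' k := by
    have hs : 0 ≤ s := by positivity
    simp only [z', Function.update_apply]
    split_ifs
    exacts [hs, hs, hz k]
  have hi' : z' i = s := by simp [z', hij]
  have hj' : z' j = s := by simp [z']
  have hrest : ∀ k ∈ (univ.erase i).erase j, z' k = z k := by
    intro k hk
    simp only [mem_erase] at hk
    simp [z', hk.1, hk.2.1]
  have hj_mem : j ∈ univ.erase i := mem_erase.2 ⟨hij.symm, mem_univ j⟩
  have hprod' : ∏ k, z' k = ∏ k, z k := by
    rw [← mul_prod_erase univ z' (mem_univ i), ← mul_prod_erase univ z (mem_univ i),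
      ← mul_prod_erase _ z' hj_mem, ← mul_prod_erase _ z hj_mem, prod_congr rfl hrest, hi', hj']
    linear_combination (∏ k ∈ (univ.erase i).erase j, z k) * (√(z j) ^ 2 * hi + z i * hj)
  have hsum' : ∑ k, z' k = ∑ k, z k - (√(z i) - √(z j)) ^ 2 := by
    rw [← add_sum_erase univ z' (mem_univ i), ← add_sum_erase univ z (mem_univ i),
      ← add_sum_erase _ z' hj_mem, ← add_sum_erase _ z hj_mem, sum_congr rfl hrest, hi', hj']
    linear_combination hi + hj
  have hcard : 0 < Fintype.card ι := Fintype.card_pos_iff.2 ⟨i⟩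
  have amgm := Real.geom_mean_le_arith_mean univ (fun _ => 1) z' (fun _ _ => zero_le_one)
    (by simpa using hcard) (fun k _ => hz' k)
  simp only [Real.rpow_one, sum_const, card_univ, nsmul_one, one_mul, hprod', hsum', ← hprod,
    Real.pow_rpow_inv_natCast hw hcard.ne'] at amgm
  rwa [le_div_iff₀' (by exact_mod_cast hcard)] at amgm

section AmgmDeficit

variable {G : Type*} [AddCommGroup G] [Fintype G] [DecidableEq G] {n : ℕ} {q : G → ℝ}

/-- A lower bound for the total loss when AM-GM is applied, for each zero-sum `(n + 2)`-tuple `a`,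
to the `n + 2` products `∏_{s ≠ r} q (a s)`. Only the products omitting the coordinates `0` and `1`
are compared. -/
noncomputable def amgmDeficit (n : ℕ) (q : G → ℝ) : ℝ :=
  ∑ a ∈ zeroSumTuples G (n + 2), (√(∏ s, q (a (Fin.succAbove 0 s))) -
    √(∏ s, q (a (Fin.succAbove 1 s)))) ^ 2

theorem amgmDeficit_nonneg : 0 ≤ amgmDeficit n q :=
  sum_nonneg fun _ _ => sq_nonneg _

theorem sum_zeroSumTuples_prod_rpow_le (hq : ∀ k, 0 ≤ q k) (hsum : ∑ k, q k = 1) :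
    ∑ a ∈ zeroSumTuples G (n + 2), ∏ s, q (a s) ^ ((n + 1) / (n + 2) : ℝ) ≤
      1 - amgmDeficit n q / (n + 2) := by
  have hprod_nonneg (a : Fin (n + 2) → G) (r : Fin (n + 2)) : 0 ≤ ∏ s, q (a (r.succAbove s)) :=
    prod_nonneg fun s _ => hq _
  have hpow (a : Fin (n + 2) → G) : (∏ s, q (a s) ^ ((n + 1) / (n + 2) : ℝ)) ^ (n + 2) =
      ∏ r : Fin (n + 2), ∏ s, q (a (r.succAbove s)) := by
    rw [prod_prod_succAbove fun s => q (a s), ← prod_pow, ← prod_pow]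
    refine prod_congr rfl fun s _ => ?_
    rw [← Real.rpow_mul_natCast (hq _), ← Real.rpow_natCast (q (a s))]
    congr 1
    push_cast
    field_simp
  have amgm (a : Fin (n + 2) → G) : (n + 2) * ∏ s, q (a s) ^ ((n + 1) / (n + 2) : ℝ) ≤
      ∑ r : Fin (n + 2), ∏ s, q (a (r.succAbove s)) -
        (√(∏ s, q (a (Fin.succAbove 0 s))) - √(∏ s, q (a (Fin.succAbove 1 s)))) ^ 2 := by
    have := card_mul_geomMean_le_sum_sub_sq (hprod_nonneg a)
      (prod_nonneg fun s _ => Real.rpow_nonneg (hq (a s)) _)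
      (by rw [Fintype.card_fin, hpow]) (Fin.zero_ne_one (n := n))
    simpa using this
  have hmarginals :
      ∑ a ∈ zeroSumTuples G (n + 2), ∑ r : Fin (n + 2), ∏ s, q (a (r.succAbove s)) = n + 2 := by
    rw [sum_comm]
    simp [sum_zeroSumTuples_prod_succAbove, hsum]
  have htotal := sum_le_sum fun a (_ : a ∈ zeroSumTuples G (n + 2)) => amgm a
  rw [sum_sub_distrib, hmarginals, ← mul_sum, ← amgmDeficit] at htotal
  rw [one_sub_div (by positivity), le_div_iff₀' (by positivity)]
  exact htotal

theorem amgmDeficit_eq_sum_prod_mul (hq : ∀ k, 0 ≤ q k) :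
    amgmDeficit n q = ∑ a ∈ zeroSumTuples G (n + 2),
      (∏ s : Fin n, q (a s.succ.succ)) * (√(q (a 0)) - √(q (a 1))) ^ 2 := by
  refine sum_congr rfl fun a _ => ?_
  have hrest : 0 ≤ ∏ s : Fin n, q (a s.succ.succ) := prod_nonneg fun s _ => hq _
  rw [Fin.prod_univ_succ, Fin.prod_univ_succ]
  simp only [Fin.zero_succAbove, Fin.succ_zero_eq_one, Fin.one_succAbove_zero,
    Fin.one_succAbove_succ, Real.sqrt_mul (hq _)]
  rw [← sub_mul, mul_pow, Real.sq_sqrt hrest]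
  ring

end AmgmDeficit

section RowRate

variable {p : ℕ} [NeZero p]

theorem exp_sum_mul_Phi {d : ℕ} (t : ZMod p → ℝ) (a : Fin d → ZMod p) :
    Real.exp (∑ k, t k * (Phi a k : ℝ)) = ∏ s, Real.exp (t (a s)) := by
  rw [← Real.exp_sum, ← sum_fiberwise univ a fun s => t (a s)]
  congr 1
  refine sum_congr rfl fun k _ => ?_
  rw [sum_congr rfl (g := fun _ => t k) fun s hs => by rw [(mem_filter.1 hs).2]]
  simp [Phi, mul_comm]

/-- The contribution of one row `m` of the matrix to the rate function: the infimum over `t` of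
`𝔫 ln (p^{-(d-1)} ∑_{a ∈ Z_{d,p}} e^{⟨t,Φ(a)⟩}) - d ⟨t,m⟩`, where `𝔫` is the sum of `m`. It lives
in `EReal` because the infimum may be `-∞`. -/
noncomputable def rowRate (d : ℕ) (m : ZMod p → ℝ) : EReal :=
  ⨅ t : ZMod p → ℝ,
    (((∑ k, m k) * Real.log ((p : ℝ) ^ (-((d : ℤ) - 1)) *
        ∑ a ∈ zeroSumTuples (ZMod p) d, Real.exp (∑ k, t k * (Phi a k : ℝ)))
      - (d : ℝ) * ∑ k, t k * m k : ℝ) : EReal)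

variable {m : ZMod p → ℝ} {φ : ZMod p → ℝ}

theorem rowRate_le_of_pos (d : ℕ) (hm : ∀ k, 0 ≤ m k) (hφ : ∀ k, 0 < φ k) :
    rowRate d m ≤ (((∑ k, m k) *
        (-(d - 1) * Real.log p + (∑ a ∈ zeroSumTuples (ZMod p) d, ∏ s, φ (a s) - 1))
      - d * ∑ k, m k * Real.log (φ k) : ℝ) : EReal) := by
  refine iInf_le_of_le (fun k => Real.log (φ k)) (EReal.coe_le_coe_iff.2 ?_)
  simp only [exp_sum_mul_Phi, Real.exp_log (hφ _)]
  simp only [mul_comm (Real.log (φ _))]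
  have hp : (0 : ℝ) < p := Nat.cast_pos.2 (NeZero.pos p)
  have hY : 0 < ∑ a ∈ zeroSumTuples (ZMod p) d, ∏ s, φ (a s) :=
    sum_pos (fun a _ => prod_pos fun s _ => hφ _) ⟨0, by simp [zeroSumTuples]⟩
  rw [Real.log_mul (by positivity) hY.ne', Real.log_zpow]
  push_cast
  gcongr
  · exact sum_nonneg fun k _ => hm k
  · exact Real.log_le_sub_one_of_pos hY

-- The weights `φ + ε` are admissible in `rowRate_le_of_pos`; let `ε` tend to `0`.
theorem rowRate_le_of_nonneg (d : ℕ) (hm : ∀ k, 0 ≤ m k) (hφ : ∀ k, 0 ≤ φ k)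
    (hmφ : ∀ k, φ k = 0 → m k = 0) :
    rowRate d m ≤ (((∑ k, m k) *
        (-(d - 1) * Real.log p + (∑ a ∈ zeroSumTuples (ZMod p) d, ∏ s, φ (a s) - 1))
      - d * ∑ k, m k * Real.log (φ k) : ℝ) : EReal) := by
  set B : ℝ → ℝ := fun ε => (∑ k, m k) *
      (-(d - 1) * Real.log p + (∑ a ∈ zeroSumTuples (ZMod p) d, ∏ s, (φ (a s) + ε) - 1))
    - d * ∑ k, m k * Real.log (φ k)
  have hB : Filter.Tendsto (fun ε => (B ε : EReal)) (nhdsWithin 0 (Set.Ioi 0)) (nhds (B 0)) := by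
    have : Continuous fun ε => (B ε : EReal) := continuous_coe_real_ereal.comp (by fun_prop)
    exact (this.tendsto 0).mono_left nhdsWithin_le_nhds
  simp only [B, add_zero] at hB
  refine ge_of_tendsto hB ?_
  filter_upwards [self_mem_nhdsWithin] with ε (hε : 0 < ε)
  refine (rowRate_le_of_pos d hm fun k => add_pos_of_nonneg_of_pos (hφ k) hε).trans ?_
  refine EReal.coe_le_coe_iff.2 (sub_le_sub_left ?_ _)
  refine mul_le_mul_of_nonneg_left (sum_le_sum fun k _ => ?_) (Nat.cast_nonneg d)
  rcases (hφ k).eq_or_lt with hk | hk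
  · simp [hmφ k hk.symm]
  · exact mul_le_mul_of_nonneg_left (Real.log_le_log hk (by linarith)) (hm k)

-- The infimum is tested at `t k = (d - 1) / d * log (m k / 𝔫)` with `d = n + 2`.
theorem rowRate_le (n : ℕ) (hm : ∀ k, 0 ≤ m k) :
    rowRate (n + 2) m ≤ ((-(n + 1) * ((∑ k, m k) * Real.log p +
        ∑ k, m k * Real.log (m k / ∑ l, m l)) -
      (∑ k, m k) * (amgmDeficit n (fun k => m k / ∑ l, m l) / (n + 2)) : ℝ) : EReal) := by
  set N := ∑ k, m k with hN
  have hN0 : 0 ≤ N := sum_nonneg fun k _ => hm k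
  set q : ZMod p → ℝ := fun k => m k / N with hq
  have hq0 (k : ZMod p) : 0 ≤ q k := div_nonneg (hm k) hN0
  set α : ℝ := (n + 1) / (n + 2)
  have hα : α ≠ 0 := by positivity
  have hmN (k : ZMod p) : m k ≤ N := single_le_sum (fun k _ => hm k) (mem_univ k)
  have hsupp (k : ZMod p) (hk : q k ^ α = 0) : m k = 0 := by
    rcases div_eq_zero_iff.1 ((Real.rpow_eq_zero (hq0 k) hα).1 hk) with h | h
    exacts [h, le_antisymm (h ▸ hmN k) (hm k)]
  have hlog (k : ZMod p) : Real.log (q k ^ α) = α * Real.log (q k) := by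
    rcases (hq0 k).eq_or_lt with hk | hk
    · simp [← hk, Real.zero_rpow hα]
    · exact Real.log_rpow hk α
  refine (rowRate_le_of_nonneg (n + 2) hm (fun k => Real.rpow_nonneg (hq0 k) α) hsupp).trans
    (EReal.coe_le_coe_iff.2 ?_)
  have hpartition : N * (∑ a ∈ zeroSumTuples (ZMod p) (n + 2), ∏ s, q (a s) ^ α - 1) ≤
      N * -(amgmDeficit n q / (n + 2)) := by
    rcases hN0.eq_or_lt with h | hpos
    · simp [← h]
    · refine mul_le_mul_of_nonneg_left ?_ hN0
      have hsum : ∑ k, q k = 1 := by rw [hq, ← sum_div, ← hN, div_self hpos.ne']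
      linarith [sum_zeroSumTuples_prod_rpow_le (n := n) hq0 hsum]
  have hentropy : ((n + 2 : ℕ) : ℝ) * ∑ k, m k * Real.log (q k ^ α) =
      (n + 1) * ∑ k, m k * Real.log (q k) := by
    have hα_mul : (n + 2) * α = n + 1 := by simp only [α]; field_simp
    simp only [hlog, mul_left_comm (m _) α, ← mul_sum]
    push_cast
    rw [← mul_assoc, hα_mul]
  rw [hentropy]
  push_cast
  linarith

end RowRate

theorem sq_sqrt_sub_sqrt_le {x y : ℝ} (hx : 0 ≤ x) (hy : 0 ≤ y) (hxy : y = 0 → x = 0) :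
    (√x - √y) ^ 2 ≤ x * (Real.log x - Real.log y) + (y - x) := by
  rcases hx.eq_or_lt with rfl | hx'
  · simp [Real.sq_sqrt hy]
  have hy' : 0 < y := hy.lt_of_ne fun h => hx'.ne' (hxy h.symm)
  have hlog := Real.log_le_sub_one_of_pos (show 0 < √y / √x by positivity)
  rw [Real.log_div (by positivity) (by positivity), Real.log_sqrt hy, Real.log_sqrt hx] at hlog
  have hscaled := mul_le_mul_of_nonneg_left hlog hx
  have hcross : x * (√y / √x - 1) = √x * √y - x := by
    have hsx : √x ≠ 0 := by positivity
    field_simp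
    linear_combination -√y * Real.sq_sqrt hx
  rw [sub_sq, Real.sq_sqrt hx, Real.sq_sqrt hy]
  linarith

section MarginalEntropy

variable {ι : Type*} [Fintype ι] {m : ι → ι → ℝ}

/-- The row sums of a matrix, `𝔫` in the paper. -/
def rowSum (m : ι → ι → ℝ) (i : ι) : ℝ := ∑ j, m i j

/-- The rows of a matrix normalised to sum `1`; the junk value is `0` for a zero row. -/
noncomputable def condRow (m : ι → ι → ℝ) (i j : ι) : ℝ := m i j / rowSum m i

/-- The squared Hellinger distance, without the customary factor `1 / 2`, between a symmetric
distribution and the product of its marginals. -/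
noncomputable def marginalHellinger (m : ι → ι → ℝ) : ℝ :=
  ∑ i, ∑ j, (√(m i j) - √(rowSum m i * rowSum m j)) ^ 2

theorem marginalHellinger_nonneg : 0 ≤ marginalHellinger m :=
  sum_nonneg fun _ _ => sum_nonneg fun _ _ => sq_nonneg _

theorem rowSum_nonneg (hm : ∀ i j, 0 ≤ m i j) (i : ι) : 0 ≤ rowSum m i :=
  sum_nonneg fun j _ => hm i j

theorem le_rowSum (hm : ∀ i j, 0 ≤ m i j) (i j : ι) : m i j ≤ rowSum m i :=
  single_le_sum (fun j _ => hm i j) (mem_univ j)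

theorem condRow_nonneg (hm : ∀ i j, 0 ≤ m i j) (i j : ι) : 0 ≤ condRow m i j :=
  div_nonneg (hm i j) (rowSum_nonneg hm i)

theorem sum_condRow {i : ι} (hi : rowSum m i ≠ 0) : ∑ j, condRow m i j = 1 := by
  simp only [condRow]
  rw [← sum_div, ← rowSum, div_self hi]

theorem sum_mul_log_rowSum (m : ι → ι → ℝ) :
    ∑ i, ∑ j, m i j * Real.log (rowSum m i) = ∑ i, rowSum m i * Real.log (rowSum m i) := by
  simp only [rowSum, sum_mul]

theorem sum_mul_log_condRow (hm : ∀ i j, 0 ≤ m i j) :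
    ∑ i, ∑ j, m i j * Real.log (condRow m i j) =
      ∑ i, ∑ j, m i j * Real.log (m i j) - ∑ i, rowSum m i * Real.log (rowSum m i) := by
  simp only [← sum_mul_log_rowSum, ← sum_sub_distrib]
  refine sum_congr rfl fun i _ => sum_congr rfl fun j _ => ?_
  rcases (hm i j).eq_or_lt with h | h
  · simp [← h]
  · rw [condRow, Real.log_div h.ne' (h.trans_le (le_rowSum hm i j)).ne', mul_sub]

theorem marginalHellinger_le (hsymm : ∀ i j, m i j = m j i) (hm : ∀ i j, 0 ≤ m i j)
    (hsum : ∑ i, rowSum m i = 1) :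
    marginalHellinger m ≤
      ∑ i, ∑ j, m i j * Real.log (m i j) - 2 * ∑ i, rowSum m i * Real.log (rowSum m i) := by
  have hm_col (i j : ι) : m i j ≤ rowSum m j := hsymm i j ▸ le_rowSum hm j i
  have hentry (i j : ι) : (√(m i j) - √(rowSum m i * rowSum m j)) ^ 2 ≤
      m i j * Real.log (m i j) - m i j * Real.log (rowSum m i) - m i j * Real.log (rowSum m j) +
        (rowSum m i * rowSum m j - m i j) := by
    rcases (hm i j).eq_or_lt with h | h
    · simp [← h, Real.sq_sqrt (mul_nonneg (rowSum_nonneg hm i) (rowSum_nonneg hm j))]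
    · have hi : 0 < rowSum m i := h.trans_le (le_rowSum hm i j)
      have hj : 0 < rowSum m j := h.trans_le (hm_col i j)
      have := sq_sqrt_sub_sqrt_le h.le (mul_pos hi hj).le fun h0 => absurd h0 (mul_pos hi hj).ne'
      rw [Real.log_mul hi.ne' hj.ne'] at this
      linarith
  have hcol : ∑ i, ∑ j, m i j * Real.log (rowSum m j) =
      ∑ i, rowSum m i * Real.log (rowSum m i) := by
    rw [sum_comm, ← sum_mul_log_rowSum]
    simp only [hsymm]
  have hmass : ∑ i, ∑ j, (rowSum m i * rowSum m j - m i j) = 0 := by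
    simp only [sum_sub_distrib, ← mul_sum, hsum, mul_one]
    exact sub_eq_zero.2 hsum.symm
  refine (sum_le_sum fun i _ => sum_le_sum fun j _ => hentry i j).trans_eq ?_
  simp only [sum_add_distrib, sum_sub_distrib] at hmass ⊢
  rw [sum_mul_log_rowSum, hcol]
  linarith

end MarginalEntropy

section RateFunction

variable {p : ℕ} [NeZero p] {m : ZMod p → ZMod p → ℝ}

/-- The rate function `I(𝔪)` in degree `d`, with values in `EReal` because `rowRate` may be `-∞`. -/
noncomputable def rateFunction (d : ℕ) (m : ZMod p → ZMod p → ℝ) : EReal :=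
  ((((d : ℝ) - 1) * Real.log p + ((d : ℝ) / 2) * ∑ i, ∑ j, m i j * Real.log (m i j) -
      ∑ j, rowSum m j * Real.log (rowSum m j) : ℝ) : EReal) +
    ∑ j, rowRate d (m j)

/-- The amount by which the rate function in degree `n + 2` is shown to be negative: the first term
is lost in the entropy of the marginals, the second when AM-GM is applied in the rows. -/
noncomputable def rateDeficit (n : ℕ) (m : ZMod p → ZMod p → ℝ) : ℝ :=
  n / 2 * marginalHellinger m + (∑ j, rowSum m j * amgmDeficit n (condRow m j)) / (n + 2)

theorem ereal_coe_sum {ι : Type*} (s : Finset ι) (f : ι → ℝ) :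
    ((∑ i ∈ s, f i : ℝ) : EReal) = ∑ i ∈ s, (f i : EReal) :=
  map_sum (⟨⟨Real.toEReal, EReal.coe_zero⟩, EReal.coe_add⟩ : ℝ →+ EReal) f s

theorem rateFunction_le (n : ℕ) (hsymm : ∀ i j, m i j = m j i) (hm : ∀ i j, 0 ≤ m i j)
    (hsum : ∑ i, rowSum m i = 1) :
    rateFunction (n + 2) m ≤ ((-rateDeficit n m : ℝ) : EReal) := by
  have hrow (j : ZMod p) : rowRate (n + 2) (m j) ≤ ((-(n + 1) * (rowSum m j * Real.log p +
      ∑ k, m j k * Real.log (condRow m j k)) -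
        rowSum m j * (amgmDeficit n (condRow m j) / (n + 2)) : ℝ) : EReal) :=
    rowRate_le n (hm j)
  refine (add_le_add_right (sum_le_sum fun j _ => hrow j) _).trans ?_
  rw [← ereal_coe_sum, ← EReal.coe_add, EReal.coe_le_coe_iff, sum_sub_distrib, ← mul_sum,
    sum_add_distrib, ← sum_mul, hsum, sum_mul_log_condRow hm]
  simp only [mul_div_assoc', ← sum_div]
  have hentropy := mul_le_mul_of_nonneg_left (marginalHellinger_le hsymm hm hsum)
    (show 0 ≤ (n / 2 : ℝ) by positivity)
  push_cast
  rw [rateDeficit]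
  linarith

end RateFunction

theorem exists_pos_and_le_of_sum_mul_le {ι : Type*} [Fintype ι] {w f : ι → ℝ} {C : ℝ}
    (hw : ∀ i, 0 ≤ w i) (hsum : ∑ i, w i = 1) (h : ∑ i, w i * f i ≤ C) :
    ∃ i, 0 < w i ∧ f i ≤ C := by
  by_contra! hlt
  have hterm (i : ι) : 0 ≤ w i * (f i - C) := by
    rcases (hw i).eq_or_lt with hi | hi
    · simp [← hi]
    · exact mul_nonneg hi.le (sub_nonneg.2 (hlt i hi).le)
  have htotal : ∑ i, w i * (f i - C) ≤ 0 := by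
    simp only [mul_sub, sum_sub_distrib, ← sum_mul, hsum, one_mul]
    linarith
  have hzero := (sum_eq_zero_iff_of_nonneg fun i _ => hterm i).1
    (htotal.antisymm (sum_nonneg fun i _ => hterm i))
  have hw0 (i : ι) : w i = 0 := by
    by_contra hi
    have hpos := (hw i).lt_of_ne' hi
    exact (mul_pos hpos (sub_pos.2 (hlt i hpos))).ne' (hzero i (mem_univ i))
  simp [hw0] at hsum

theorem one_sub_sum_filter_le {ι : Type*} [Fintype ι] {w D : ι → ℝ} (hw : ∀ x, 0 ≤ w x)
    (hsum : ∑ x, w x = 1) (hD : ∀ x, 0 ≤ D x) {ε : ℝ} (hε : 0 < ε) :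
    1 - ∑ x with D x ≤ ε, w x ≤ (∑ x, w x * D x) / ε := by
  rw [← hsum, ← sum_filter_add_sum_filter_not univ (fun x => D x ≤ ε), add_sub_cancel_left,
    le_div_iff₀ hε, sum_mul]
  calc ∑ x with ¬ D x ≤ ε, w x * ε ≤ ∑ x with ¬ D x ≤ ε, w x * D x := by
        refine sum_le_sum fun x hx => ?_
        exact mul_le_mul_of_nonneg_left (not_le.1 (mem_filter.1 hx).2).le (hw x)
    _ ≤ ∑ x, w x * D x :=
        sum_le_sum_of_subset_of_nonneg (filter_subset _ _) fun x _ _ =>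
          mul_nonneg (hw x) (hD x)

theorem sum_sub_sqrt_card_sq_le {ι : Type*} [Fintype ι] [Nonempty ι] {g : ι → ℝ}
    (hg0 : ∀ u, 0 ≤ g u) (hg : ∑ u, g u ^ 2 = 1) :
    ∑ u, (g u - √(1 / Fintype.card ι)) ^ 2 ≤ 2 * (1 - (∑ u, g u) ^ 2 / Fintype.card ι) := by
  have hcard : (Fintype.card ι : ℝ) ≠ 0 := by simp
  set v := √(1 / (Fintype.card ι : ℝ))
  have hv : v ^ 2 = 1 / Fintype.card ι := Real.sq_sqrt (by positivity)
  set β := v * ∑ u, g u with hβ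
  have hβ0 : 0 ≤ β := mul_nonneg (Real.sqrt_nonneg _) (sum_nonneg fun u _ => hg0 u)
  have hβ_sq : β ^ 2 = (∑ u, g u) ^ 2 / Fintype.card ι := by rw [hβ, mul_pow, hv]; ring
  have hexpand : ∑ u, (g u - v) ^ 2 = 2 * (1 - β) := by
    simp only [sub_sq, sum_add_distrib, sum_sub_distrib, hg, ← sum_mul, ← mul_sum, sum_const,
      card_univ, nsmul_eq_mul, hv, mul_one_div_cancel hcard]
    ring
  have hβ1 : β ≤ 1 := by
    have : 0 ≤ ∑ u, (g u - v) ^ 2 := sum_nonneg fun u _ => sq_nonneg _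
    linarith
  rw [hexpand, ← hβ_sq]
  nlinarith

section Autocorrelation

variable {G : Type*} [AddCommGroup G] [Fintype G] {f g : G → ℝ}

/-- The autocorrelation of `g` at lag `h`, unnormalised; it is near `∑ u, g u ^ 2` when `h` is an
approximate period of `g`. -/
def autocorr (g : G → ℝ) (h : G) : ℝ := ∑ u, g (u + h) * g u

/-- The squared `ℓ²` distance between `g` and its translate by `h`: it is small when `h` is an
approximate period of `g`. -/
def shiftDist (g : G → ℝ) (h : G) : ℝ := ∑ u, (g (u + h) - g u) ^ 2

/-- The squared `ℓ²` distance between `g` and its reflection `u ↦ g (w - u)`: it is small when this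
reflection is an approximate symmetry of `g`. -/
def reflDist (g : G → ℝ) (w : G) : ℝ := ∑ u, (g (w - u) - g u) ^ 2

theorem shiftDist_nonneg (g : G → ℝ) (h : G) : 0 ≤ shiftDist g h :=
  sum_nonneg fun _ _ => sq_nonneg _

theorem shiftDist_zero (g : G → ℝ) : shiftDist g 0 = 0 := by
  simp [shiftDist]

theorem shiftDist_eq (g : G → ℝ) (h : G) :
    shiftDist g h = 2 * ∑ u, g u ^ 2 - 2 * autocorr g h := by
  have hshift : ∑ u, g (u + h) ^ 2 = ∑ u, g u ^ 2 :=
    Equiv.sum_comp (Equiv.addRight h) fun u => g u ^ 2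
  simp only [shiftDist, autocorr, sub_sq, sum_add_distrib, sum_sub_distrib, hshift, mul_assoc,
    ← mul_sum]
  ring

theorem shiftDist_add_le (g : G → ℝ) (h k : G) :
    shiftDist g (h + k) ≤ 2 * shiftDist g h + 2 * shiftDist g k := by
  have hshift : ∑ u, (g (u + h + k) - g (u + h)) ^ 2 = shiftDist g k :=
    Equiv.sum_comp (Equiv.addRight h) fun u => (g (u + k) - g u) ^ 2
  rw [← hshift]
  simp only [shiftDist, mul_sum, ← sum_add_distrib, ← add_assoc]
  refine sum_le_sum fun u _ => ?_
  linarith [sq_nonneg ((g (u + h + k) - g (u + h)) - (g (u + h) - g u))]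

-- Two reflections compose to a translation.
theorem shiftDist_sub_le (g : G → ℝ) (b x y : G) :
    shiftDist g (x - y) ≤ 2 * reflDist g (b - x) + 2 * reflDist g (b - y) := by
  have hshift : ∑ u, (g (b - x - u) - g (u + (x - y))) ^ 2 = reflDist g (b - y) := by
    rw [reflDist, ← Equiv.sum_comp (Equiv.addRight (x - y)) fun u => (g (b - y - u) - g u) ^ 2]
    refine sum_congr rfl fun u _ => ?_
    rw [Equiv.coe_addRight, show b - y - (u + (x - y)) = b - x - u by abel]
  rw [← hshift]
  simp only [shiftDist, reflDist, mul_sum, ← sum_add_distrib]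
  refine sum_le_sum fun u _ => ?_
  linarith [sq_nonneg ((g (b - x - u) - g u) + (g (b - x - u) - g (u + (x - y))))]

theorem shiftDist_le_of_approx (f g : G → ℝ) (h : G) :
    shiftDist f h ≤ 3 * shiftDist g h + 6 * ∑ u, (g u - f u) ^ 2 := by
  have hshift : ∑ u, (g (u + h) - f (u + h)) ^ 2 = ∑ u, (g u - f u) ^ 2 :=
    Equiv.sum_comp (Equiv.addRight h) fun u => (g u - f u) ^ 2
  calc shiftDist f h
      ≤ ∑ u, (3 * (g (u + h) - g u) ^ 2 + 3 * (g (u + h) - f (u + h)) ^ 2 +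
          3 * (g u - f u) ^ 2) := by
        refine sum_le_sum fun u _ => ?_
        linarith [sq_nonneg ((g (u + h) - g u) + (g (u + h) - f (u + h))),
          sq_nonneg ((g (u + h) - g u) - (g u - f u)),
          sq_nonneg ((g (u + h) - f (u + h)) + (g u - f u))]
    _ = 3 * shiftDist g h + 6 * ∑ u, (g u - f u) ^ 2 := by
        rw [sum_add_distrib, sum_add_distrib, ← mul_sum, ← mul_sum, ← mul_sum, hshift, shiftDist]
        ring

theorem sum_autocorr_mul (g D : G → ℝ) :
    ∑ h, autocorr g h * D h = ∑ y, g y * ∑ x, g x * D (x - y) := by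
  simp only [autocorr, sum_mul, mul_sum]
  rw [sum_comm]
  refine sum_congr rfl fun y _ => ?_
  rw [← Equiv.sum_comp (Equiv.addLeft y) fun x => g y * (g x * D (x - y))]
  refine sum_congr rfl fun h _ => ?_
  rw [Equiv.coe_addLeft, add_sub_cancel_left]
  ring

theorem sum_autocorr (g : G → ℝ) : ∑ h, autocorr g h = (∑ u, g u) ^ 2 := by
  simpa [← sum_mul, ← sq] using sum_autocorr_mul g 1

theorem sq_autocorr_le (g : G → ℝ) (h : G) :
    autocorr g h ^ 2 ≤ Fintype.card G * autocorr (fun u => g u ^ 2) h := by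
  simpa only [autocorr, mul_pow, card_univ] using
    sq_sum_le_card_mul_sum_sq (s := univ) (f := fun u => g (u + h) * g u)

theorem sum_sq_mul_shiftDist_le (hg : ∑ u, g u ^ 2 = 1) (b : G) :
    ∑ y, g y ^ 2 * ∑ x, g x ^ 2 * shiftDist g (x - y) ≤
      4 * ∑ x, g x ^ 2 * reflDist g (b - x) := by
  calc ∑ y, g y ^ 2 * ∑ x, g x ^ 2 * shiftDist g (x - y)
      ≤ ∑ y, g y ^ 2 * ∑ x, g x ^ 2 * (2 * reflDist g (b - x) + 2 * reflDist g (b - y)) := by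
        gcongr with y _ x _
        exact shiftDist_sub_le g b x y
    _ = 4 * ∑ x, g x ^ 2 * reflDist g (b - x) := by
        simp only [mul_add, sum_add_distrib, ← sum_mul, hg, one_mul, mul_left_comm _ (2 : ℝ),
          ← mul_sum]
        ring

theorem autocorr_nonneg (hg : ∀ u, 0 ≤ g u) (h : G) : 0 ≤ autocorr g h :=
  sum_nonneg fun _ _ => mul_nonneg (hg _) (hg _)

-- Truncate `g` to `X`: the autocorrelations of the truncation stay close to `1` at these lags,
-- but their sum is at most `#X`.
theorem card_shiftDist_le (hg0 : ∀ u, 0 ≤ g u) (hg : ∑ u, g u ^ 2 = 1) {X : Finset G}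
    (hX : 99 / 100 ≤ ∑ x ∈ X, g x ^ 2) :
    3 * #{h | shiftDist g h ≤ 1 / 250} ≤ 4 * #X := by
  classical
  set f : G → ℝ := fun u => if u ∈ X then g u else 0
  have hf0 (u : G) : 0 ≤ f u := by
    simp only [f]
    split_ifs
    exacts [hg0 u, le_rfl]
  have hf : ∑ u, f u ^ 2 = ∑ x ∈ X, g x ^ 2 := by
    simp [f, ite_pow]
  have hgf : ∑ u, (g u - f u) ^ 2 = 1 - ∑ x ∈ X, g x ^ 2 := by
    rw [← hf, ← hg, ← sum_sub_distrib]
    refine sum_congr rfl fun u _ => ?_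
    simp only [f]
    split_ifs <;> ring
  have hlag : ∀ h ∈ ({h | shiftDist g h ≤ 1 / 250} : Finset G), 3 / 4 ≤ autocorr f h := by
    intro h hh
    linarith [(mem_filter.1 hh).2, shiftDist_eq f h, shiftDist_le_of_approx f g h]
  have hcard : (3 / 4 : ℝ) * #{h | shiftDist g h ≤ 1 / 250} ≤ #X := by
    calc (3 / 4 : ℝ) * #{h | shiftDist g h ≤ 1 / 250}
        ≤ ∑ h ∈ {h | shiftDist g h ≤ 1 / 250}, autocorr f h := by
          simpa [mul_comm] using card_nsmul_le_sum _ _ _ hlag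
      _ ≤ ∑ h, autocorr f h :=
          sum_le_sum_of_subset_of_nonneg (subset_univ _) fun h _ _ => autocorr_nonneg hf0 h
      _ = (∑ x ∈ X, g x) ^ 2 := by simp [sum_autocorr, f]
      _ ≤ #X * ∑ x ∈ X, g x ^ 2 := sq_sum_le_card_mul_sum_sq
      _ ≤ #X * 1 := by
          rw [← hg]
          gcongr
          exact subset_univ X
      _ = #X := mul_one _
  have : (3 : ℝ) * #{h | shiftDist g h ≤ 1 / 250} ≤ 4 * #X := by linarith
  exact_mod_cast this

theorem sum_sub_sqrt_card_sq_le_of_shiftDist_le (hg0 : ∀ u, 0 ≤ g u) (hg : ∑ u, g u ^ 2 = 1)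
    (hshift : ∀ h, shiftDist g h ≤ 1 / 250) :
    ∑ u, (g u - √(1 / Fintype.card G)) ^ 2 ≤
      2 * ∑ y, g y ^ 2 * ∑ x, g x ^ 2 * shiftDist g (x - y) := by
  have hautocorr (h : G) : 1 / (2 * Fintype.card G) ≤ autocorr (fun u => g u ^ 2) h := by
    have : 499 / 500 ≤ autocorr g h := by linarith [hshift h, shiftDist_eq g h]
    rw [div_le_iff₀ (by positivity)]
    nlinarith [sq_autocorr_le g h]
  calc ∑ u, (g u - √(1 / Fintype.card G)) ^ 2
      ≤ 2 * (1 - (∑ u, g u) ^ 2 / Fintype.card G) := sum_sub_sqrt_card_sq_le hg0 hg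
    _ = 2 * ∑ h, 1 / (2 * Fintype.card G) * shiftDist g h := by
        simp only [shiftDist_eq, hg, ← mul_sum, sum_sub_distrib, sum_autocorr, sum_const,
          card_univ, nsmul_eq_mul]
        field_simp
    _ ≤ 2 * ∑ h, autocorr (fun u => g u ^ 2) h * shiftDist g h := by
        gcongr with h _
        exacts [shiftDist_nonneg g h, hautocorr h]
    _ = 2 * ∑ y, g y ^ 2 * ∑ x, g x ^ 2 * shiftDist g (x - y) := by rw [sum_autocorr_mul]

end Autocorrelation

section CauchyDavenport

variable {p : ℕ} [Fact p.Prime] {g : ZMod p → ℝ}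

open scoped Pointwise in
theorem shiftDist_le_or_eq_singleton (hg0 : ∀ u, 0 ≤ g u) (hg : ∑ u, g u ^ 2 = 1) {y : ZMod p}
    (hy : 99 / 100 ≤ ∑ x with shiftDist g (x - y) ≤ 1 / 1000, g x ^ 2) :
    (∀ h, shiftDist g h ≤ 1 / 250) ∨
      ({x | shiftDist g (x - y) ≤ 1 / 1000} : Finset (ZMod p)) = {y} := by
  set X : Finset (ZMod p) := {x | shiftDist g (x - y) ≤ 1 / 1000}
  set H : Finset (ZMod p) := {h | shiftDist g h ≤ 1 / 1000}
  set H' : Finset (ZMod p) := {h | shiftDist g h ≤ 1 / 250}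
  have hH0 : 0 ∈ H := by simp [H, shiftDist_zero]
  have hXH : #X = #H := by
    refine card_nbij' (· - y) (· + y) ?_ ?_ ?_ ?_ <;> simp [X, H, Set.MapsTo, Set.LeftInvOn]
  have hHH : H + H ⊆ H' := by
    intro _ hz
    obtain ⟨h, hh, k, hk, rfl⟩ := mem_add.1 hz
    simp only [H, H', mem_filter_univ] at hh hk ⊢
    linarith [shiftDist_add_le g h k]
  have hupper : 3 * #H' ≤ 4 * #X := card_shiftDist_le hg0 hg hy
  have hlower : min p (#H + #H - 1) ≤ #H' :=
    (ZMod.cauchy_davenport Fact.out ⟨0, hH0⟩ ⟨0, hH0⟩).trans (card_le_card hHH)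
  rcases min_le_iff.1 hlower with hfull | hsmall
  · left
    have huniv : H' = univ := by
      rw [← card_eq_iff_eq_univ, ZMod.card]
      exact ((card_le_univ _).trans_eq (ZMod.card p)).antisymm hfull
    intro h
    exact (mem_filter.1 (huniv.symm ▸ mem_univ h : h ∈ H')).2
  · right
    have hyX : y ∈ X := by simp [X, shiftDist_zero]
    exact (subset_singleton_iff'.2 fun z hz =>
      card_le_one.1 (by omega) z hz y hyX).antisymm (singleton_subset_iff.2 hyX)

theorem near_uniform_or_near_pointMass (hg0 : ∀ u, 0 ≤ g u) (hg : ∑ u, g u ^ 2 = 1)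
    (b : ZMod p) {K : ℝ} (hK : K ≤ 1 / 400000) (hb : ∑ x, g x ^ 2 * reflDist g (b - x) ≤ K) :
    ∑ u, (g u - √(1 / p)) ^ 2 ≤ 8 * K ∨ ∃ y, 1 - g y ^ 2 ≤ 4000 * K := by
  have hshift : ∑ y, g y ^ 2 * ∑ x, g x ^ 2 * shiftDist g (x - y) ≤ 4 * K :=
    (sum_sq_mul_shiftDist_le hg b).trans (by linarith)
  obtain ⟨y, -, hy⟩ := exists_pos_and_le_of_sum_mul_le (fun u => sq_nonneg (g u)) hg hshift
  have hmass := one_sub_sum_filter_le (fun u => sq_nonneg (g u)) hg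
    (fun x => shiftDist_nonneg g (x - y)) (show (0 : ℝ) < 1 / 1000 by norm_num)
  rw [div_div_eq_mul_div, div_one] at hmass
  rcases shiftDist_le_or_eq_singleton hg0 hg (y := y) (by linarith) with hall | hsingle
  · left
    have := sum_sub_sqrt_card_sq_le_of_shiftDist_le hg0 hg hall
    rw [ZMod.card] at this
    linarith
  · right
    rw [hsingle, sum_singleton] at hmass
    exact ⟨y, by linarith⟩

end CauchyDavenport

section DeficitStability

variable {G : Type*} [AddCommGroup G] [Fintype G] [DecidableEq G] {n : ℕ} {q : G → ℝ}

theorem amgmDeficit_succ (hq : ∀ k, 0 ≤ q k) :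
    amgmDeficit (n + 1) q = ∑ c : Fin n → G, (∏ s, q (c s)) *
      ∑ x, q x * reflDist (fun u => √(q u)) (-(∑ i, c i) - x) := by
  have sum_cons {k : ℕ} (F : (Fin (k + 1) → G) → ℝ) :
      ∑ b, F b = ∑ c : Fin k → G, ∑ x, F (Fin.cons x c) := by
    rw [← (Fin.consEquiv fun _ => G).sum_comp, Fintype.sum_prod_type_right]
    rfl
  rw [amgmDeficit_eq_sum_prod_mul hq, sum_zeroSumTuples_succ 0, sum_cons, sum_cons]
  refine sum_congr rfl fun c _ => ?_
  simp only [reflDist, mul_sum]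
  refine sum_congr rfl fun x _ => sum_congr rfl fun u _ => ?_
  rw [Fin.insertNth_zero', Fin.prod_univ_succ, Fin.cons_one]
  simp only [Fin.sum_univ_succ, Fin.cons_succ, Fin.cons_zero]
  rw [show -(u + (x + ∑ i, c i)) = -(∑ i, c i) - x - u by abel]
  ring

theorem exists_sum_mul_reflDist_le (hq : ∀ k, 0 ≤ q k) (hsum : ∑ k, q k = 1) :
    ∃ b, ∑ x, q x * reflDist (fun u => √(q u)) (b - x) ≤ amgmDeficit (n + 1) q := by
  obtain ⟨c, -, hc⟩ := exists_pos_and_le_of_sum_mul_le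
    (w := fun c : Fin n → G => ∏ s, q (c s))
    (fun c => prod_nonneg fun s _ => hq _) (by rw [← Fintype.sum_pow, hsum, one_pow])
    (amgmDeficit_succ hq).ge
  exact ⟨_, hc⟩

theorem pow_mul_sq_le_amgmDeficit (hq : ∀ k, 0 ≤ q k) (y : G) :
    q y ^ n * (√(q (-((n + 1) • y))) - √(q y)) ^ 2 ≤ amgmDeficit n q := by
  have hmem : (Fin.cons (-((n + 1) • y)) fun _ => y) ∈ zeroSumTuples G (n + 2) := by
    simp [zeroSumTuples, Fin.sum_univ_succ, succ_nsmul']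
  rw [amgmDeficit_eq_sum_prod_mul hq]
  refine le_of_eq_of_le ?_ (single_le_sum (fun a _ =>
    mul_nonneg (prod_nonneg fun s _ => hq _) (sq_nonneg _)) hmem)
  simp

theorem half_pow_le_amgmDeficit (hq : ∀ k, 0 ≤ q k) (hsum : ∑ k, q k = 1) {y : G}
    (hy : (n + 2) • y ≠ 0) (hmass : 99 / 100 ≤ q y) : (1 / 2) ^ (n + 2) ≤ amgmDeficit n q := by
  set z := -((n + 1) • y)
  have hzy : z ≠ y := by
    intro h
    rw [neg_eq_iff_add_eq_zero, ← succ_nsmul] at h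
    exact hy h
  have hpair : q z + q y ≤ 1 := by
    rw [← hsum, ← sum_pair hzy]
    exact sum_le_sum_of_subset_of_nonneg (subset_univ _) fun k _ _ => hq k
  have hz_sqrt : √(q z) ≤ 1 / 10 := Real.sqrt_le_iff.2 ⟨by norm_num, by linarith⟩
  have hy_sqrt : 9 / 10 ≤ √(q y) := Real.le_sqrt_of_sq_le (by linarith)
  calc ((1 : ℝ) / 2) ^ (n + 2) = (1 / 2) ^ n * (1 / 2) ^ 2 := pow_add _ _ _
    _ ≤ q y ^ n * (√(q z) - √(q y)) ^ 2 := by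
        rw [sub_sq_comm]
        gcongr <;> linarith
    _ ≤ amgmDeficit n q := pow_mul_sq_le_amgmDeficit hq y

theorem amgmDeficit_stability {p : ℕ} [Fact p.Prime] (hcop : p.Coprime (n + 3))
    {q : ZMod p → ℝ} (hq : ∀ k, 0 ≤ q k) (hsum : ∑ k, q k = 1)
    (hsmall : amgmDeficit (n + 1) q ≤ 1 / 400000)
    (hpow : amgmDeficit (n + 1) q < (1 / 2) ^ (n + 3)) :
    ∑ u, (√(q u) - √(1 / p)) ^ 2 ≤ 8 * amgmDeficit (n + 1) q ∨
      1 - q 0 ≤ 4000 * amgmDeficit (n + 1) q := by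
  obtain ⟨b, hb⟩ := exists_sum_mul_reflDist_le (n := n) hq hsum
  have hsq (u : ZMod p) : √(q u) ^ 2 = q u := Real.sq_sqrt (hq u)
  refine (near_uniform_or_near_pointMass (fun u => Real.sqrt_nonneg (q u)) (by simpa [hsq])
    b hsmall (by simpa [hsq])).imp_right fun ⟨y, hy⟩ => ?_
  rw [hsq] at hy
  suffices y = 0 by rwa [this] at hy
  by_contra hy0
  have hp : ((n + 3 : ℕ) : ZMod p) ≠ 0 := by
    rw [Ne, ZMod.natCast_eq_zero_iff]
    exact (Fact.out : p.Prime).coprime_iff_not_dvd.1 hcop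
  have hy_nsmul : (n + 1 + 2) • y ≠ 0 := by
    rw [nsmul_eq_mul]
    exact mul_ne_zero hp hy0
  exact hpow.not_ge (half_pow_le_amgmDeficit hq hsum hy_nsmul (by linarith))

end DeficitStability

theorem abs_mul_sub_mul_le {x y a b α β : ℝ} (ha : 0 ≤ a) (hb : 0 ≤ b)
    (hx : |x - a| ≤ α * a) (hy : |y - b| ≤ β * b) :
    |x * y - a * b| ≤ (α + β + α * β) * (a * b) := by
  calc |x * y - a * b| = |(x - a) * (y - b) + (x - a) * b + a * (y - b)| := by ring_nf
    _ ≤ |x - a| * |y - b| + |x - a| * b + a * |y - b| := by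
        refine (abs_add_three _ _ _).trans_eq ?_
        rw [abs_mul, abs_mul, abs_mul, abs_of_nonneg ha, abs_of_nonneg hb]
    _ ≤ (α * a) * (β * b) + (α * a) * b + a * (β * b) := by
        have := (abs_nonneg _).trans hx
        gcongr
    _ = (α + β + α * β) * (a * b) := by ring

section Stability

variable {ι : Type*} [Fintype ι] {m : ι → ι → ℝ}

theorem rowSum_mul_condRow (hm : ∀ i j, 0 ≤ m i j) (i j : ι) :
    rowSum m i * condRow m i j = m i j :=
  mul_div_cancel_of_imp' fun h => le_antisymm (h ▸ le_rowSum hm i j) (hm i j)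

theorem marginalHellinger_eq (hm : ∀ i j, 0 ≤ m i j) :
    marginalHellinger m =
      ∑ i, rowSum m i * ∑ j, (√(condRow m i j) - √(rowSum m j)) ^ 2 := by
  simp only [marginalHellinger, mul_sum]
  refine sum_congr rfl fun i _ => sum_congr rfl fun j _ => ?_
  have hi := rowSum_nonneg hm i
  rw [← rowSum_mul_condRow hm i j, Real.sqrt_mul hi, Real.sqrt_mul hi, ← mul_sub, mul_pow,
    Real.sq_sqrt hi]

theorem sq_sqrt_sub_le_marginalHellinger (m : ι → ι → ℝ) (i j : ι) :
    (√(m i j) - √(rowSum m i * rowSum m j)) ^ 2 ≤ marginalHellinger m :=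
  (single_le_sum (f := fun j => (√(m i j) - √(rowSum m i * rowSum m j)) ^ 2)
    (fun _ _ => sq_nonneg _) (mem_univ j)).trans
    (single_le_sum (f := fun i => ∑ j, (√(m i j) - √(rowSum m i * rowSum m j)) ^ 2)
      (fun _ _ => sum_nonneg fun _ _ => sq_nonneg _) (mem_univ i))

theorem sq_sub_le_of_sum_sq_le {a b : ι → ℝ} {v A B : ℝ} (hA : ∑ k, (a k - b k) ^ 2 ≤ A)
    (hB : ∑ k, (a k - v) ^ 2 ≤ B) (k : ι) : (b k - v) ^ 2 ≤ 2 * A + 2 * B := by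
  have hAk := (single_le_sum (f := fun k => (a k - b k) ^ 2) (fun _ _ => sq_nonneg _)
    (mem_univ k)).trans hA
  have hBk := (single_le_sum (f := fun k => (a k - v) ^ 2) (fun _ _ => sq_nonneg _)
    (mem_univ k)).trans hB
  linarith [sq_nonneg ((a k - b k) + (a k - v))]

theorem abs_sub_le_of_rowSum_near {N ω : ℝ} (hN : 0 < N) (hω0 : 0 ≤ ω) (hω : ω ≤ 1 / 4)
    (hm : ∀ i j, 0 ≤ m i j) (hrow : ∀ i, (√(rowSum m i) - √(1 / N)) ^ 2 ≤ ω ^ 2 / N)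
    (hH : marginalHellinger m ≤ ω ^ 2 / N ^ 2) (i j : ι) :
    |m i j - 1 / N ^ 2| ≤ 12 * ω / N ^ 2 := by
  set v := √(1 / N)
  have hv : v ^ 2 = 1 / N := Real.sq_sqrt (by positivity)
  have hv0 : 0 ≤ v := Real.sqrt_nonneg _
  have hrow_abs (i : ι) : |√(rowSum m i) - v| ≤ ω * v := by
    refine abs_le_of_sq_le_sq ((hrow i).trans_eq ?_) (by positivity)
    rw [mul_pow, hv, mul_one_div]
  have hprod := abs_mul_sub_mul_le hv0 hv0 (hrow_abs i) (hrow_abs j)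
  have hentry : |√(m i j) - √(rowSum m i) * √(rowSum m j)| ≤ ω * v ^ 2 := by
    rw [← Real.sqrt_mul (rowSum_nonneg hm i)]
    refine abs_le_of_sq_le_sq (((sq_sqrt_sub_le_marginalHellinger m i j).trans hH).trans_eq ?_)
      (by positivity)
    rw [mul_pow, hv, one_div_pow, mul_one_div]
  have hsqrt : |√(m i j) - v ^ 2| ≤ 4 * ω * v ^ 2 := by
    rw [← sq] at hprod
    refine (abs_sub_le _ _ _).trans ((add_le_add hentry hprod).trans ?_)
    rw [← add_mul]
    gcongr
    nlinarith
  have hsq := abs_mul_sub_mul_le (sq_nonneg v) (sq_nonneg v) hsqrt hsqrt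
  rw [Real.mul_self_sqrt (hm i j), hv, ← sq, one_div_pow] at hsq
  refine hsq.trans ?_
  rw [mul_one_div]
  gcongr
  nlinarith

theorem one_sub_le_of_sum_sq_sqrt {a b : ι → ℝ} (ha : ∀ k, 0 ≤ a k) (hb : ∀ k, 0 ≤ b k)
    (ha1 : ∑ k, a k = 1) (hb1 : ∑ k, b k = 1) (i : ι) :
    1 - b i ≤ 2 * ∑ k, (√(a k) - √(b k)) ^ 2 + 2 * (1 - a i) := by
  classical
  have hterm (k : ι) : b k ≤ 2 * (√(a k) - √(b k)) ^ 2 + 2 * a k := by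
    linarith [Real.sq_sqrt (ha k), Real.sq_sqrt (hb k), sq_nonneg (2 * √(a k) - √(b k))]
  have hoff {c : ι → ℝ} (hc : ∑ k, c k = 1) : 1 - c i = ∑ k ∈ univ.erase i, c k := by
    rw [← hc, ← add_sum_erase _ _ (mem_univ i), add_sub_cancel_left]
  calc 1 - b i = ∑ k ∈ univ.erase i, b k := hoff hb1
    _ ≤ 2 * ∑ k ∈ univ.erase i, (√(a k) - √(b k)) ^ 2 + 2 * ∑ k ∈ univ.erase i, a k := by
        rw [mul_sum, mul_sum, ← sum_add_distrib]
        exact sum_le_sum fun k _ => hterm k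
    _ ≤ 2 * ∑ k, (√(a k) - √(b k)) ^ 2 + 2 * (1 - a i) := by
        rw [hoff ha1]
        gcongr
        exact subset_univ _

theorem one_sub_diag_le (hsymm : ∀ i j, m i j = m j i) (hm : ∀ i j, 0 ≤ m i j)
    (hsum : ∑ i, rowSum m i = 1) {j : ι} (hj : rowSum m j ≠ 0) (i : ι) :
    1 - m i i ≤ 4 * ∑ k, (√(condRow m j k) - √(rowSum m k)) ^ 2 + 4 * (1 - condRow m j i) := by
  classical
  have hmarginal := one_sub_le_of_sum_sq_sqrt (condRow_nonneg hm j) (rowSum_nonneg hm)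
    (sum_condRow hj) hsum i
  have hoff : rowSum m i - m i i ≤ 1 - rowSum m i := by
    rw [← hsum, ← add_sum_erase _ _ (mem_univ i), add_sub_cancel_left]
    nth_rw 1 [rowSum]
    rw [← add_sum_erase _ _ (mem_univ i), add_sub_cancel_left]
    exact sum_le_sum fun k _ => hsymm i k ▸ le_rowSum hm k i
  linarith

end Stability

section RateStability

variable {p n : ℕ} [NeZero p] {m : ZMod p → ZMod p → ℝ}

theorem marginalHellinger_le_of_rateDeficit_le (hm : ∀ i j, 0 ≤ m i j) {ε : ℝ}
    (h : rateDeficit (n + 1) m ≤ ε) : marginalHellinger m ≤ 2 * ε := by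
  have hrows : 0 ≤ (∑ j, rowSum m j * amgmDeficit (n + 1) (condRow m j)) / ((n + 1 : ℕ) + 2) :=
    div_nonneg (sum_nonneg fun j _ => mul_nonneg (rowSum_nonneg hm j) amgmDeficit_nonneg)
      (by positivity)
  rw [rateDeficit] at h
  push_cast at h hrows
  linarith [mul_nonneg n.cast_nonneg (marginalHellinger_nonneg (m := m)),
    marginalHellinger_nonneg (m := m)]

theorem exists_row_of_rateDeficit_le (hm : ∀ i j, 0 ≤ m i j) (hsum : ∑ i, rowSum m i = 1) {ε : ℝ}
    (h : rateDeficit (n + 1) m ≤ ε) :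
    ∃ j, 0 < rowSum m j ∧ amgmDeficit (n + 1) (condRow m j) ≤ (n + 3) * ε ∧
      ∑ k, (√(condRow m j k) - √(rowSum m k)) ^ 2 ≤ 2 * ε := by
  have haverage : ∑ j, rowSum m j * ((n + 1) / 2 * ∑ k, (√(condRow m j k) - √(rowSum m k)) ^ 2 +
      amgmDeficit (n + 1) (condRow m j) / (n + 3)) ≤ ε := by
    refine le_of_eq_of_le ?_ h
    rw [rateDeficit, marginalHellinger_eq hm, mul_sum, sum_div, ← sum_add_distrib]
    refine sum_congr rfl fun j _ => ?_
    push_cast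
    ring
  obtain ⟨j, hj, hbound⟩ := exists_pos_and_le_of_sum_mul_le (rowSum_nonneg hm) hsum haverage
  have hhell : 0 ≤ ∑ k, (√(condRow m j k) - √(rowSum m k)) ^ 2 := sum_nonneg fun _ _ => sq_nonneg _
  have hdef : 0 ≤ amgmDeficit (n + 1) (condRow m j) / (n + 3) :=
    div_nonneg amgmDeficit_nonneg (by positivity)
  have hhell_mul := mul_nonneg (Nat.cast_nonneg (α := ℝ) n) hhell
  refine ⟨j, hj, ?_, by linarith⟩
  rw [← div_le_iff₀' (by positivity)]
  linarith

theorem exists_row_near_uniform_or_pointMass [Fact p.Prime] (hcop : p.Coprime (n + 3))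
    (hm : ∀ i j, 0 ≤ m i j) (hsum : ∑ i, rowSum m i = 1) {κ : ℝ} (hκ : κ ≤ 1 / 400000)
    (hκ_pow : κ < (1 / 2) ^ (n + 3)) (h : rateDeficit (n + 1) m ≤ κ / (n + 3)) :
    ∃ j, 0 < rowSum m j ∧ ∑ k, (√(condRow m j k) - √(rowSum m k)) ^ 2 ≤ 2 * (κ / (n + 3)) ∧
      (∑ k, (√(condRow m j k) - √(1 / p)) ^ 2 ≤ 8 * κ ∨ 1 - condRow m j 0 ≤ 4000 * κ) := by
  obtain ⟨j, hj, hdef, hhell⟩ := exists_row_of_rateDeficit_le hm hsum h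
  rw [mul_div_cancel₀ _ (by positivity)] at hdef
  refine ⟨j, hj, hhell, ?_⟩
  exact (amgmDeficit_stability hcop (condRow_nonneg hm j) (sum_condRow hj.ne')
    (hdef.trans hκ) (hdef.trans_lt hκ_pow)).imp (fun h => by linarith) (fun h => by linarith)

/-- The constant `c(δ)` in degree `d`. The factor `2 ^ (-d)` excludes rows close to a point mass
away from `0`, whose AM-GM deficit is at least `2 ^ (-d)`; the divisor `d` is the loss incurred in
passing from `rateDeficit` to `amgmDeficit`, and `10 ^ 6` absorbs the absolute constants. -/
noncomputable def rateConstant (d : ℕ) (δ : ℝ) : ℝ := δ ^ 2 / 10 ^ 6 * (1 / 2) ^ d / d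

theorem rateConstant_pos {d : ℕ} (hd : 0 < d) {δ : ℝ} (hδ : 0 < δ) : 0 < rateConstant d δ := by
  unfold rateConstant
  positivity

theorem natCast_mul_rateConstant {d : ℕ} (hd : 0 < d) (δ : ℝ) :
    d * rateConstant d δ = δ ^ 2 / 10 ^ 6 * (1 / 2) ^ d :=
  mul_div_cancel₀ _ (Nat.cast_ne_zero.2 hd.ne')

theorem natCast_mul_rateConstant_le {d : ℕ} (hd : 0 < d) (δ : ℝ) :
    d * rateConstant d δ ≤ δ ^ 2 / 10 ^ 6 := by
  rw [natCast_mul_rateConstant hd]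
  exact mul_le_of_le_one_right (by positivity) (pow_le_one₀ (by norm_num) (by norm_num))

theorem natCast_mul_rateConstant_lt {d : ℕ} (hd : 0 < d) {δ : ℝ} (hδ : |δ| < 1) :
    d * rateConstant d δ < (1 / 2) ^ d := by
  rw [natCast_mul_rateConstant hd]
  exact mul_lt_of_lt_one_left (by positivity) (by linarith [(sq_lt_one_iff_abs_lt_one δ).2 hδ])

theorem uniform_or_pointMass_of_rateDeficit_le [Fact p.Prime] (hcop : p.Coprime (n + 3)) {δ : ℝ}
    (hδ0 : 0 < δ) (hδ1 : δ < 1) (hsymm : ∀ i j, m i j = m j i) (hm : ∀ i j, 0 ≤ m i j)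
    (hsum : ∑ i, rowSum m i = 1)
    (h : rateDeficit (n + 1) m ≤ rateConstant (n + 3) δ / (p : ℝ) ^ 2) :
    (∀ i j, |m i j - 1 / (p : ℝ) ^ 2| ≤ δ / (p : ℝ) ^ 2) ∨ 1 - δ / p ≤ m 0 0 := by
  have hp : (1 : ℝ) ≤ p := by exact_mod_cast (Fact.out : p.Prime).one_lt.le
  have hδ_sq : δ ^ 2 ≤ δ := by nlinarith
  set C := (n + 3 : ℕ) * rateConstant (n + 3) δ with hC
  have hC_le : C ≤ δ ^ 2 / 10 ^ 6 := natCast_mul_rateConstant_le (by omega) δ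
  have hC_pow : C < (1 / 2) ^ (n + 3) :=
    natCast_mul_rateConstant_lt (by omega) (abs_lt.2 ⟨by linarith, hδ1⟩)
  have hC0 : 0 ≤ C := mul_nonneg (Nat.cast_nonneg _) (rateConstant_pos (by omega) hδ0).le
  set κ := C / (p : ℝ) ^ 2 with hκ
  have hκ0 : 0 ≤ κ := by positivity
  have hκ_C : κ ≤ C := div_le_self hC0 (one_le_pow₀ hp)
  have hκ_sq : κ ≤ δ ^ 2 / 10 ^ 6 / (p : ℝ) ^ 2 :=
    div_le_div_of_nonneg_right hC_le (by positivity)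
  have hκ_p : κ ≤ δ ^ 2 / 10 ^ 6 / p :=
    hκ_sq.trans (by gcongr; exact le_self_pow₀ hp two_ne_zero)
  have hκ_div : κ / (n + 3) ≤ κ :=
    div_le_self hκ0 (by linarith [n.cast_nonneg (α := ℝ)])
  rw [show rateConstant (n + 3) δ / (p : ℝ) ^ 2 = κ / (n + 3) by
    rw [hκ, hC]; push_cast; field_simp] at h
  obtain ⟨j, hj, hhell, hunif | hpoint⟩ :=
    exists_row_near_uniform_or_pointMass hcop hm hsum (by linarith) (hκ_C.trans_lt hC_pow) h
  · left
    have hmarginal (u : ZMod p) : (√(rowSum m u) - √(1 / p)) ^ 2 ≤ (δ / 12) ^ 2 / p := by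
      have : 0 ≤ δ ^ 2 / p := by positivity
      refine (sq_sub_le_of_sum_sq_le hhell hunif u).trans ?_
      linear_combination 4 * hκ_div + 20 * hκ_p + (1 / 144 - 20 / 10 ^ 6) * this
    have hH : marginalHellinger m ≤ (δ / 12) ^ 2 / p ^ 2 := by
      have : 0 ≤ δ ^ 2 / (p : ℝ) ^ 2 := by positivity
      refine (marginalHellinger_le_of_rateDeficit_le hm h).trans ?_
      linear_combination 2 * hκ_div + 2 * hκ_sq + (1 / 144 - 2 / 10 ^ 6) * this
    simpa [mul_div_cancel₀] using
      abs_sub_le_of_rowSum_near (by positivity) (by positivity) (by linarith) hm hmarginal hH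
  · right
    have : 0 ≤ δ / p := by positivity
    have hδp : δ ^ 2 / p ≤ δ / p := by gcongr
    linear_combination one_sub_diag_le hsymm hm hsum hj.ne' 0 + 4 * hhell + 8 * hκ_div +
      4 * hpoint + 16008 * hκ_p + 16008 / 10 ^ 6 * hδp + (1 - 16008 / 10 ^ 6) * this

end RateStability
/-- Rate function bound (undirected case): for `d ≥ 3` there is `δ₀ > 0` such that for all
`δ ∈ (0, δ₀)` there is `c(δ) > 0` with: for every prime `p` with `gcd(p,d) = 1` and every
symmetric nonnegative `p×p` matrix `𝔪` with total sum `1`, setting `𝔫_i = Σ_j 𝔪_{ij}`,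
if `max_{i,j} |𝔪_{ij} - 1/p²| > δ/p²` and `𝔪_{00} < 1 - δ/p`, then
`I(𝔪) = (d-1) ln p + (d/2) Σ_{ij} 𝔪_{ij} ln 𝔪_{ij} - Σ_j 𝔫_j ln 𝔫_j
  + Σ_j inf_t (𝔫_j ln(p^{-(d-1)} Σ_{a ∈ Z_{d,p}} e^{⟨t,Φ(a)⟩}) - d⟨t,𝔪_j⟩)`
(the infima taken in the extended reals) is at most `-c(δ)/p²`.
(Here `Real.log 0 = 0` yields the convention `0 ln 0 = 0`.) -/
theorem undirected_rate_function_bound (d : ℕ) (hd : 3 ≤ d) :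
    ∃ δ₀ : ℝ, 0 < δ₀ ∧ ∀ δ : ℝ, 0 < δ → δ < δ₀ → ∃ c : ℝ, 0 < c ∧
      ∀ (p : ℕ) [Fact p.Prime], Nat.gcd p d = 1 →
        ∀ 𝔪 : ZMod p → ZMod p → ℝ,
        (∀ i j, 𝔪 i j = 𝔪 j i) → (∀ i j, 0 ≤ 𝔪 i j) →
        (∑ i : ZMod p, ∑ j : ZMod p, 𝔪 i j) = 1 →
        (∃ i j, δ / (p : ℝ) ^ 2 < |𝔪 i j - 1 / (p : ℝ) ^ 2|) →
        𝔪 0 0 < 1 - δ / p →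
        ((((d : ℝ) - 1) * Real.log p
              + ((d : ℝ) / 2) * ∑ i : ZMod p, ∑ j : ZMod p, 𝔪 i j * Real.log (𝔪 i j)
              - ∑ j : ZMod p, (∑ k : ZMod p, 𝔪 j k) * Real.log (∑ k : ZMod p, 𝔪 j k)
            : ℝ) : EReal)
          + ∑ j : ZMod p, ⨅ t : ZMod p → ℝ,
              (((∑ k : ZMod p, 𝔪 j k) *
                  Real.log ((p : ℝ) ^ (-((d : ℤ) - 1)) *
                    ∑ a ∈ Finset.univ.filter (fun a : Fin d → ZMod p => ∑ r, a r = 0),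
                      Real.exp (∑ k : ZMod p, t k * (Phi a k : ℝ)))
                - (d : ℝ) * ∑ k : ZMod p, t k * 𝔪 j k : ℝ) : EReal)
          ≤ ((-c / (p : ℝ) ^ 2 : ℝ) : EReal) := by
  obtain ⟨n, rfl⟩ := Nat.exists_eq_add_of_le' hd
  refine ⟨1, one_pos, fun δ hδ0 hδ1 =>
    ⟨rateConstant (n + 3) δ, rateConstant_pos (by omega) hδ0, ?_⟩⟩
  intro p _ hcop m hsymm hm hsum ⟨i, j, hij⟩ hm00
  refine (rateFunction_le (n + 1) hsymm hm hsum).trans (EReal.coe_le_coe_iff.2 ?_)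
  rw [neg_div, neg_le_neg_iff]
  by_contra! hdeficit
  rcases uniform_or_pointMass_of_rateDeficit_le hcop hδ0 hδ1 hsymm hm hsum hdeficit.le with
    hunif | hpoint
  · exact (hunif i j).not_gt hij
  · exact hpoint.not_gt hm00
end
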